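/- arXiv:1603.08651 — 9 statements merged into one kernel-verified Lean document; each statement's English description precedes it below -/
import Mathlib

section
/- Let n ≥ 3 and let C ⊆ ℝ^n be a nonempty compact convex set that is universally parkable. Then C has a center of symmetry, i.e. there exists a point p ∈ ℝ^n with C = 2p - C. -/
open scoped RealInnerProductSpace

lemma aux_span {n : ℕ} (z p q : EuclideanSpace ℝ (Fin n))
    (h : ∀ x, ⟪p, x⟫ = 0 → ⟪q, x⟫ = 0 → ⟪z, x⟫ = 0) : ∃ α β : ℝ, α • p + β • q = z := by
  rw [← Submodule.mem_span_pair (R := ℝ), ← Submodule.orthogonal_orthogonal (Submodule.span ℝ {p, q}),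
    Submodule.mem_orthogonal]
  intro x hx
  rw [Submodule.mem_orthogonal] at hx
  rw [real_inner_comm]
  exact h x (hx p (Submodule.subset_span (by simp))) (hx q (Submodule.subset_span (by simp)))

lemma aux_perp {n : ℕ} (hn : 3 ≤ n) (p q : EuclideanSpace ℝ (Fin n)) :
    ∃ x : EuclideanSpace ℝ (Fin n), x ≠ 0 ∧ ⟪p, x⟫ = 0 ∧ ⟪q, x⟫ = 0 := by
  have h1 : (Submodule.span ℝ {p, q})ᗮ ≠ ⊥ := by
    intro h
    rw [Submodule.orthogonal_eq_bot_iff] at h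
    have h2 : Module.finrank ℝ (Submodule.span ℝ {p, q}) ≤ 2 := by
      classical
      have := finrank_span_finset_le_card (R := ℝ) ({p, q} : Finset (EuclideanSpace ℝ (Fin n)))
      rw [Set.finrank] at this
      rw [Finset.coe_pair] at this
      exact this.trans Finset.card_le_two
    rw [h, finrank_top, finrank_euclideanSpace_fin] at h2
    omega
  obtain ⟨x, hx, hx0⟩ := Submodule.exists_mem_ne_zero_of_ne_bot h1
  rw [Submodule.mem_orthogonal] at hx
  exact ⟨x, hx0, hx p (Submodule.subset_span (by simp)), hx q (Submodule.subset_span (by simp))⟩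

lemma aux_escape {n : ℕ} {C : Set (EuclideanSpace ℝ (Fin n))} {K : ℝ}
    (hK : ∀ c ∈ C, ‖c‖ ≤ K) (p d : EuclideanSpace ℝ (Fin n)) (hd : d ≠ 0) :
    ∃ t : ℝ, t ≠ 0 ∧ p + t • d ∉ C := by
  have hd' : 0 < ‖d‖ := norm_pos_iff.mpr hd
  have hpos : 0 < |K| + ‖p‖ + 1 := by positivity
  refine ⟨(|K| + ‖p‖ + 1) / ‖d‖, by positivity, fun h => ?_⟩
  have h1 := hK _ h
  have h2 : ‖((|K| + ‖p‖ + 1) / ‖d‖) • d‖ = |K| + ‖p‖ + 1 := by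
    rw [norm_smul, Real.norm_of_nonneg (by positivity)]
    field_simp
  have h3 := norm_le_add_norm_add (((|K| + ‖p‖ + 1) / ‖d‖) • d) p
  rw [add_comm _ p] at h3
  linarith [le_abs_self K]

/-- the lines argument -/
lemma aux_lines {n : ℕ} (hn : 3 ≤ n) {C : Set (EuclideanSpace ℝ (Fin n))} {K : ℝ}
    (hK : ∀ c ∈ C, ‖c‖ ≤ K) (g : EuclideanSpace ℝ (Fin n) → ℝ)
    (hg : ∀ a, a ∉ C → ∃ m, m ≠ 0 ∧ ∀ x, ⟪m, x⟫ = 0 → g x = 2 * ⟪a, x⟫) :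
    ∃ p, ∀ x, g x = 2 * ⟪p, x⟫ := by
  obtain ⟨e, he, -, -⟩ := aux_perp hn 0 0
  obtain ⟨s, -, ha⟩ := aux_escape hK 0 e he
  generalize 0 + s • e = a at ha
  obtain ⟨m, hm, hma⟩ := hg a ha
  obtain ⟨y, hy, hmy, -⟩ := aux_perp hn m 0
  obtain ⟨t, ht, hb⟩ := aux_escape hK a y hy
  obtain ⟨k, hk, hkb⟩ := hg _ hb
  have hyy : ⟪y, y⟫ ≠ 0 := by simpa using hy
  -- independence
  have hky : ⟪k, y⟫ ≠ 0 := by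
    intro h
    have h1 := hma y hmy
    rw [hkb y h, inner_add_left, real_inner_smul_left] at h1
    have : t * ⟪y, y⟫ = 0 := by linarith
    exact (mul_ne_zero ht hyy) this
  generalize hbe : a + t • y = b at hb hkb
  have hind : ∀ α β : ℝ, α • m + β • k = 0 → α = 0 ∧ β = 0 := by
    intro α β h
    have h1 : ⟪α • m + β • k, y⟫ = 0 := by rw [h, inner_zero_left]
    rw [inner_add_left, real_inner_smul_left, real_inner_smul_left, hmy, mul_zero, zero_add] at h1
    have hβ : β = 0 := by simpa [hky] using h1
    subst hβ
    refine ⟨?_, rfl⟩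
    simpa [hm] using h
  have hcop : ∀ {a b m k : EuclideanSpace ℝ (Fin n)},
      (∀ x, ⟪m, x⟫ = 0 → g x = 2 * ⟪a, x⟫) → (∀ x, ⟪k, x⟫ = 0 → g x = 2 * ⟪b, x⟫) →
      ∃ α β : ℝ, α • m + β • k = a - b := by
    intro a b m k h1 h2
    apply aux_span
    intro x hx hx'
    rw [inner_sub_left]
    linarith [h1 x hx, h2 x hx']
  obtain ⟨α, β, hab⟩ := hcop hma hkb
  obtain ⟨p, hp⟩ : ∃ p, p = a - α • m := ⟨_, rfl⟩
  have hpb : p = b + β • k := by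
    have ha' : a = α • m + β • k + b := by rw [hab]; abel
    rw [hp, ha']; abel
  refine ⟨p, fun x => ?_⟩
  by_cases hx : ∃ d, (∀ α β : ℝ, α • m + β • k ≠ d) ∧ ⟪d, x⟫ = 0
  · obtain ⟨d, hdW, hdx⟩ := hx
    have hd0 : d ≠ 0 := by
      rintro rfl
      exact hdW 0 0 (by simp)
    obtain ⟨r, hr, hc⟩ := aux_escape hK p d hd0
    obtain ⟨q, hq, hqc⟩ := hg _ hc
    obtain ⟨α₁, γ₁, h1⟩ := hcop hqc hma
    obtain ⟨α₂, γ₂, h2⟩ := hcop hqc hkb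
    have h1' : r • d = α₁ • q + (γ₁ + α) • m := by
      rw [add_smul, ← add_assoc, h1, hp]; abel
    have h2' : r • d = α₂ • q + (γ₂ - β) • k := by
      rw [sub_smul, ← add_sub_assoc, h2, hpb]; abel
    -- q not in the plane
    have hqW : ∀ α β : ℝ, α • m + β • k ≠ q := by
      rintro α' β' rfl
      apply hdW (r⁻¹ * (α₁ * α' + (γ₁ + α))) (r⁻¹ * (α₁ * β'))
      have : d = r⁻¹ • (r • d) := by rw [smul_smul, inv_mul_cancel₀ hr, one_smul]
      rw [this, h1']
      module
    have h3 : (α₁ - α₂) • q = (-(γ₁ + α)) • m + (γ₂ - β) • k := by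
      have := h1'.symm.trans h2'
      rw [sub_smul, sub_eq_iff_eq_add]
      rw [← sub_eq_zero] at this ⊢
      rw [← this]; module
    have h4 : α₁ - α₂ = 0 := by
      by_contra h
      apply hqW ((α₁ - α₂)⁻¹ * (-(γ₁ + α))) ((α₁ - α₂)⁻¹ * (γ₂ - β))
      have : q = (α₁ - α₂)⁻¹ • ((α₁ - α₂) • q) := by rw [smul_smul, inv_mul_cancel₀ h, one_smul]
      rw [this, h3]; module
    rw [h4, zero_smul] at h3
    have h5 := (hind _ _ h3.symm).1
    have h6 : γ₁ + α = 0 := by linarith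
    rw [h6, zero_smul, add_zero] at h1'
    have hα₁ : α₁ ≠ 0 := by
      rintro rfl
      rw [zero_smul] at h1'
      exact (smul_ne_zero hr hd0) h1'
    have hqx : ⟪q, x⟫ = 0 := by
      have : ⟪r • d, x⟫ = ⟪α₁ • q, x⟫ := by rw [h1']
      rw [real_inner_smul_left, real_inner_smul_left, hdx, mul_zero] at this
      simpa [hα₁] using this.symm
    rw [hqc x hqx, inner_add_left, real_inner_smul_left, hdx]
    ring
  · push Not at hx
    -- x is orthogonal to the plane
    have hmx : ⟪m, x⟫ = 0 := by
      obtain ⟨z, hz, hmz, hkz⟩ := aux_perp hn m k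
      obtain ⟨σ, τ, hστ⟩ := aux_span z x 0 (fun d hd _ => by
        by_contra hzd
        apply hx d ?_ (by rw [real_inner_comm]; exact hd)
        rintro α' β' rfl
        apply hzd
        rw [inner_add_right, real_inner_smul_right, real_inner_smul_right, real_inner_comm,
          hmz, real_inner_comm, hkz]
        ring)
      rw [smul_zero, add_zero] at hστ
      have hσ : σ ≠ 0 := by
        rintro rfl
        rw [zero_smul] at hστ
        exact hz hστ.symm
      rw [← hστ, real_inner_smul_right] at hmz
      simpa [hσ] using hmz
    rw [hma x hmx, hp, inner_sub_left, real_inner_smul_left, hmx]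
    ring

/-- A nonempty compact convex universally parkable set in ℝⁿ (n ≥ 3) has a
center of symmetry. -/
theorem stmt_0 (n : ℕ) (hn : 3 ≤ n) (C : Set (EuclideanSpace ℝ (Fin n)))
    (hCne : C.Nonempty) (hCcomp : IsCompact C) (hCconv : Convex ℝ C)
    (hup : ∀ B : Set (EuclideanSpace ℝ (Fin n)),
      IsCompact B → Convex ℝ B → B = -B →
      ∀ u : EuclideanSpace ℝ (Fin n), (fun x => x + u) '' C ⊆ B →
        ∃ v : EuclideanSpace ℝ (Fin n),
          (0 : EuclideanSpace ℝ (Fin n)) ∈ (fun x => x + u + v) '' C ∧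
          (fun x => x + u + v) '' C ⊆ B) :
    ∃ p : EuclideanSpace ℝ (Fin n), C = (fun x => (2 : ℝ) • p - x) '' C := by
  obtain ⟨K, hK⟩ := hCcomp.isBounded.exists_norm_le
  have hin : ∀ x, ∀ c ∈ C, ⟪x, c⟫ ≤ K * ‖x‖ := fun x c hc => by
    have h1 := real_inner_le_norm x c
    have h2 := mul_le_mul_of_nonneg_left (hK c hc) (norm_nonneg x)
    linarith
  obtain ⟨h, hle, hsup⟩ : ∃ h : EuclideanSpace ℝ (Fin n) → ℝ, (∀ x, ∀ c ∈ C, ⟪x, c⟫ ≤ h x) ∧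
      (∀ x r, (∀ c ∈ C, ⟪x, c⟫ ≤ r) → h x ≤ r) := by
    refine ⟨fun x => sSup ((fun c => ⟪x, c⟫) '' C), fun x c hc => ?_, fun x r hr => ?_⟩
    · apply le_csSup
      · refine ⟨K * ‖x‖, ?_⟩
        rintro _ ⟨c, hc, rfl⟩
        exact hin x c hc
      · exact ⟨c, hc, rfl⟩
    · apply csSup_le (hCne.image _)
      rintro _ ⟨c, hc, rfl⟩
      exact hr c hc
  have hadd : ∀ x y, h (x + y) ≤ h x + h y := fun x y => hsup _ _ fun c hc => by
    rw [inner_add_left]; linarith [hle x c hc, hle y c hc]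
  have hhK : ∀ x, h x ≤ K * ‖x‖ := fun x => hsup _ _ (hin x)
  have key : ∀ a, a ∉ C → ∃ m, m ≠ 0 ∧ ∀ x, ⟪m, x⟫ = 0 → h x - h (-x) = 2 * ⟪a, x⟫ := by
    intro a ha
    obtain ⟨B, hB⟩ : ∃ B : Set (EuclideanSpace ℝ (Fin n)), B = ⋂ x : EuclideanSpace ℝ (Fin n),
      {y | ⟪x, y⟫ ≤ max (h x - ⟪a, x⟫) (h (-x) + ⟪a, x⟫)} := ⟨_, rfl⟩
    have memB : ∀ y, y ∈ B ↔ ∀ x, ⟪x, y⟫ ≤ max (h x - ⟪a, x⟫) (h (-x) + ⟪a, x⟫) := by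
      intro y; rw [hB]; simp only [Set.mem_iInter, Set.mem_ofPred_eq]
    have hBclosed : IsClosed B := by
      rw [hB]
      exact isClosed_iInter fun x => isClosed_le (by fun_prop) (by fun_prop)
    have hBbdd : Bornology.IsBounded B := by
      rw [isBounded_iff_forall_norm_le]
      refine ⟨K + ‖a‖, fun y hy => ?_⟩
      have h1 := (memB y).1 hy y
      have h2 := abs_le.1 (abs_real_inner_le_norm a y)
      have h3 := hhK y
      have h4 := hhK (-y)
      rw [norm_neg] at h4
      rw [real_inner_self_eq_norm_mul_norm] at h1
      have h5 : ‖y‖ * ‖y‖ ≤ (K + ‖a‖) * ‖y‖ :=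
        h1.trans (max_le (by linarith) (by linarith))
      by_cases hy0 : ‖y‖ = 0
      · obtain ⟨c, hc⟩ := hCne
        have := hK c hc
        rw [hy0]
        linarith [norm_nonneg c, norm_nonneg a]
      · exact le_of_mul_le_mul_right h5 (lt_of_le_of_ne (norm_nonneg y) (Ne.symm hy0))
    have hBconv : Convex ℝ B := by
      intro y hy z hz s t hs ht hst
      rw [memB] at *
      intro x
      rw [inner_add_right, real_inner_smul_right, real_inner_smul_right]
      have h1 := mul_le_mul_of_nonneg_left (hy x) hs
      have h2 := mul_le_mul_of_nonneg_left (hz x) ht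
      have h3 : s * max (h x - ⟪a, x⟫) (h (-x) + ⟪a, x⟫) + t * max (h x - ⟪a, x⟫) (h (-x) + ⟪a, x⟫)
        = max (h x - ⟪a, x⟫) (h (-x) + ⟪a, x⟫) := by rw [← add_mul, hst, one_mul]
      linarith
    have hBneg : ∀ y, y ∈ B → -y ∈ B := by
      intro y hy
      rw [memB] at *
      intro x
      have := hy (-x)
      rw [neg_neg, inner_neg_right, sub_neg_eq_add, ← sub_eq_add_neg, inner_neg_left,
        max_comm] at this
      rwa [inner_neg_right]
    have hBsymm : B = -B := by
      ext y
      rw [Set.mem_neg]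
      exact ⟨hBneg y, fun hy => by simpa using hBneg _ hy⟩
    obtain ⟨v, ⟨c₀, hc₀, hv0⟩, hvB⟩ := hup B (Metric.isCompact_of_isClosed_isBounded hBclosed hBbdd)
      hBconv hBsymm (-a) (by
        rintro _ ⟨c, hc, rfl⟩
        rw [memB]
        intro x
        apply le_max_of_le_left
        simp only [inner_add_right, inner_neg_right]
        rw [real_inner_comm a x]
        linarith [hle x c hc])
    have hv : v = a - c₀ := by
      have hv0' : c₀ + -a + v = 0 := hv0
      rw [← sub_eq_zero, ← hv0']; abel
    have hvne : v ≠ 0 := by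
      rintro rfl
      rw [eq_comm, sub_eq_zero] at hv
      exact ha (hv ▸ hc₀)
    have hB2 : ∀ x, h x - ⟪c₀, x⟫ ≤ max (h x - ⟪a, x⟫) (h (-x) + ⟪a, x⟫) := by
      intro x
      rw [sub_le_iff_le_add]
      apply hsup
      intro c hc
      have := (memB _).1 (hvB ⟨c, hc, rfl⟩) x
      have e : c + -a + v = c - c₀ := by rw [hv]; abel
      simp only [e, inner_sub_right] at this
      rw [real_inner_comm c₀ x] at this
      linarith
    have hpos : ∀ x, 0 < ⟪v, x⟫ → h x - h (-x) ≤ ⟪a, x⟫ + ⟪c₀, x⟫ := by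
      intro x hx
      rw [hv, inner_sub_left] at hx
      rcases le_max_iff.1 (hB2 x) with h1 | h1 <;> linarith
    have hzero : ∀ x, ⟪v, x⟫ = 0 → h x - h (-x) ≤ 2 * ⟪a, x⟫ := by
      intro x hx
      have hx' := hx
      rw [hv, inner_sub_left] at hx'
      have hvv : 0 < ⟪v, v⟫ := by
        rw [real_inner_self_eq_norm_mul_norm]
        have := norm_pos_iff.2 hvne
        positivity
      have hlim : ∀ ε : ℝ, 0 < ε → h x - h (-x) ≤ 2 * ⟪a, x⟫ +
          ε * (⟪a, v⟫ + ⟪c₀, v⟫ + 2 * (K * ‖v‖)) := by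
        intro ε hε
        have h1 := hpos (x + ε • v) (by
          rw [inner_add_right, hx, real_inner_smul_right, zero_add]; positivity)
        have h2 := hadd (x + ε • v) (-(ε • v))
        have h3 := hadd (-x) (-(ε • v))
        have h4 := hhK (-(ε • v))
        rw [add_neg_cancel_right] at h2
        rw [← neg_add] at h3
        rw [norm_neg, norm_smul, Real.norm_of_nonneg hε.le] at h4
        simp only [inner_add_right, real_inner_smul_right] at h1
        nlinarith
      have ht : Filter.Tendsto (fun ε : ℝ => 2 * ⟪a, x⟫ +
          ε * (⟪a, v⟫ + ⟪c₀, v⟫ + 2 * (K * ‖v‖))) (nhdsWithin 0 (Set.Ioi 0))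
          (nhds (2 * ⟪a, x⟫)) := by
        apply Filter.Tendsto.mono_left _ nhdsWithin_le_nhds
        apply Continuous.tendsto' (by fun_prop)
        simp
      exact ge_of_tendsto ht (Filter.eventually_of_mem self_mem_nhdsWithin hlim)
    refine ⟨v, hvne, fun x hx => le_antisymm (hzero x hx) ?_⟩
    have := hzero (-x) (by rw [inner_neg_right, hx, neg_zero])
    rw [neg_neg, inner_neg_right] at this
    linarith
  obtain ⟨p, hp⟩ := aux_lines hn hK _ key
  have hmem : ∀ c ∈ C, (2 : ℝ) • p - c ∈ C := by
    intro c hc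
    by_contra hcon
    obtain ⟨f, r, hf1, hf2⟩ := geometric_hahn_banach_closed_point hCconv hCcomp.isClosed hcon
    obtain ⟨x, rfl⟩ := (InnerProductSpace.toDual ℝ (EuclideanSpace ℝ (Fin n))).surjective f
    simp only [InnerProductSpace.toDual_apply_apply] at hf1 hf2
    have h1 := hsup x r (fun c hc => (hf1 c hc).le)
    have h2 := hle (-x) c hc
    have h3 := hp x
    rw [inner_sub_right, real_inner_smul_right, real_inner_comm] at hf2
    rw [inner_neg_left] at h2
    linarith
  refine ⟨p, Set.Subset.antisymm (fun c hc => ⟨_, hmem c hc, by simp⟩) ?_⟩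
  rintro _ ⟨c, hc, rfl⟩
  exact hmem c hc
end

section
/- Let C ⊆ ℝ³ be a nonempty compact convex universally parkable set and let u ∈ ℝ³ be a vector with 0 ∉ C + u. If v and v' are nonzero vectors such that 0 ∈ C + u + v ⊆ conv((-(C + u)) ∪ (C + u)) and 0 ∈ C + u + v' ⊆ conv((-(C + u)) ∪ (C + u)), then v and v' have the same direction, i.e. ‖v'‖ • v = ‖v‖ • v'. -/
/-- The basic support-function inequality for a parked translate. -/
lemma park_support (K : Set (EuclideanSpace ℝ (Fin 3))) (hne : K.Nonempty) (hK : IsCompact K)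
    (v : EuclideanSpace ℝ (Fin 3))
    (h : ∀ k ∈ K, k + v ∈ convexHull ℝ ((-K) ∪ K)) (x : EuclideanSpace ℝ (Fin 3)) :
    sSup ((fun k => inner ℝ x k) '' K) + inner ℝ x v ≤
      max (sSup ((fun k => inner ℝ x k) '' K)) (sSup ((fun k => inner ℝ (-x) k) '' K)) := by
  have bdd : ∀ y : EuclideanSpace ℝ (Fin 3), BddAbove ((fun k => inner ℝ y k) '' K) := fun y =>
    (hK.image (by fun_prop)).bddAbove
  have hsub : convexHull ℝ ((-K) ∪ K) ⊆ {y | inner ℝ x y ≤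
      max (sSup ((fun k => inner ℝ x k) '' K)) (sSup ((fun k => inner ℝ (-x) k) '' K))} := by
    apply convexHull_min
    · rintro y (hy | hy) <;> show inner ℝ x y ≤ max _ _
      · refine le_max_of_le_right ?_
        have := le_csSup (bdd (-x)) (Set.mem_image_of_mem _ (Set.mem_neg.1 hy))
        simpa using this
      · exact le_max_of_le_left (le_csSup (bdd x) (Set.mem_image_of_mem _ hy))
    · exact convex_halfSpace_le (innerₛₗ ℝ x).isLinear _
  rw [← le_sub_iff_add_le]
  apply csSup_le (hne.image _)
  rintro _ ⟨k, hk, rfl⟩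
  have := hsub (h k hk)
  simp only [Set.mem_ofPred_eq, inner_add_right] at this
  simp only
  linarith


/-- Uniqueness of the parking direction: if `C ⊆ ℝ³` is nonempty, compact,
convex and universally parkable, `0 ∉ C + u`, and nonzero vectors `v, v'` both
park `C + u` inside `conv((-(C+u)) ∪ (C+u))`, then `v` and `v'` have the same
direction. -/
theorem stmt_4 (C : Set (EuclideanSpace ℝ (Fin 3)))
    (hCne : C.Nonempty) (hCcomp : IsCompact C) (hCconv : Convex ℝ C)
    (hup : ∀ B : Set (EuclideanSpace ℝ (Fin 3)),
      IsCompact B → Convex ℝ B → B = -B →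
      ∀ u : EuclideanSpace ℝ (Fin 3), (fun x => x + u) '' C ⊆ B →
        ∃ v : EuclideanSpace ℝ (Fin 3),
          (0 : EuclideanSpace ℝ (Fin 3)) ∈ (fun x => x + u + v) '' C ∧
          (fun x => x + u + v) '' C ⊆ B)
    (u : EuclideanSpace ℝ (Fin 3))
    (h0 : (0 : EuclideanSpace ℝ (Fin 3)) ∉ (fun x => x + u) '' C)
    (v v' : EuclideanSpace ℝ (Fin 3)) (hv : v ≠ 0) (hv' : v' ≠ 0)
    (hpark : (0 : EuclideanSpace ℝ (Fin 3)) ∈ (fun x => x + u + v) '' C ∧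
      (fun x => x + u + v) '' C ⊆
        convexHull ℝ ((-((fun x => x + u) '' C)) ∪ ((fun x => x + u) '' C)))
    (hpark' : (0 : EuclideanSpace ℝ (Fin 3)) ∈ (fun x => x + u + v') '' C ∧
      (fun x => x + u + v') '' C ⊆
        convexHull ℝ ((-((fun x => x + u) '' C)) ∪ ((fun x => x + u) '' C))) :
    ‖v'‖ • v = ‖v‖ • v' := by
  have _ := hup
  set K := (fun x => x + u) '' C with hKdef
  have hK : IsCompact K := hCcomp.image (by fun_prop)
  have hne : K.Nonempty := hCne.image _
  have A : ∀ k ∈ K, k + v ∈ convexHull ℝ ((-K) ∪ K) := by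
    rintro _ ⟨c, hc, rfl⟩
    exact hpark.2 ⟨c, hc, rfl⟩
  have A' : ∀ k ∈ K, k + v' ∈ convexHull ℝ ((-K) ∪ K) := by
    rintro _ ⟨c, hc, rfl⟩
    exact hpark'.2 ⟨c, hc, rfl⟩
  obtain ⟨H, hH⟩ : ∃ H : EuclideanSpace ℝ (Fin 3) → ℝ,
      H = fun x => sSup ((fun k => inner ℝ x k) '' K) := ⟨_, rfl⟩
  have Hc : Continuous H := by
    rw [hH]
    exact hK.continuous_sSup (f := fun x k => inner ℝ x k) (by
      simp only [Function.HasUncurry.uncurry]; fun_prop)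
  have P : ∀ x, H x + inner ℝ x v ≤ max (H x) (H (-x)) := by
    intro x; rw [hH]; exact park_support K hne hK v A x
  have P' : ∀ x, H x + inner ℝ x v' ≤ max (H x) (H (-x)) := by
    intro x; rw [hH]; exact park_support K hne hK v' A' x
  have Q : ∀ x, H (-x) - inner ℝ x v ≤ max (H x) (H (-x)) := by
    intro x
    have := P (-x)
    rw [neg_neg, inner_neg_left, max_comm] at this
    linarith
  have Q' : ∀ x, H (-x) - inner ℝ x v' ≤ max (H x) (H (-x)) := by
    intro x
    have := P' (-x)
    rw [neg_neg, inner_neg_left, max_comm] at this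
    linarith
  -- a zero of the odd function on a half circle in the span of the two vectors
  have hz : ∃ t ∈ Set.Icc (0 : ℝ) Real.pi,
      H (Real.cos t • v + Real.sin t • v') - H (-(Real.cos t • v + Real.sin t • v')) = 0 := by
    have hc : Continuous (fun t : ℝ => H (Real.cos t • v + Real.sin t • v')
        - H (-(Real.cos t • v + Real.sin t • v'))) := by fun_prop
    rcases le_total (H v) (H (-v)) with h | h
    · have := intermediate_value_Icc Real.pi_pos.le hc.continuousOn
      obtain ⟨t, ht, e⟩ := this (show (0 : ℝ) ∈ _ by simp [h])
      exact ⟨t, ht, e⟩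
    · have := intermediate_value_Icc' Real.pi_pos.le hc.continuousOn
      obtain ⟨t, ht, e⟩ := this (show (0 : ℝ) ∈ _ by simp [h])
      exact ⟨t, ht, e⟩
  obtain ⟨t, ht, e⟩ := hz
  have hs : 0 ≤ Real.sin t := Real.sin_nonneg_of_mem_Icc ht
  have hsc := Real.sin_sq_add_cos_sq t
  set a := Real.cos t
  set b := Real.sin t
  have hx : a • v + b • v' = 0 := by
    set x := a • v + b • v' with hxd
    have e' : H (-x) = H x := by linarith
    have p := P x
    have q := Q x
    have p' := P' x
    have q' := Q' x
    rw [e', max_self] at p q p' q'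
    have i1 : inner ℝ x v = 0 := by linarith
    have i2 : inner ℝ x v' = 0 := by linarith
    have : inner ℝ x x = 0 := by
      conv_lhs => rw [hxd, inner_add_right, inner_smul_right, inner_smul_right, ← hxd, i1, i2]
      simp
    exact inner_self_eq_zero.1 this
  have hb : b ≠ 0 := by
    intro hb
    have ha : a ≠ 0 := by rintro ha; rw [ha, hb] at hsc; norm_num at hsc
    rw [hb, zero_smul, add_zero] at hx
    exact (smul_ne_zero ha hv) hx
  have hb0 : 0 < b := lt_of_le_of_ne hs (Ne.symm hb)
  have hv'e : v' = (-a / b) • v := by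
    have h1 : b • v' = (-a) • v := by
      rw [neg_smul]; exact eq_neg_of_add_eq_zero_right hx
    rw [div_eq_inv_mul, mul_smul, ← h1, smul_smul, inv_mul_cancel₀ hb, one_smul]
  have hpos : 0 ≤ -a / b := by
    by_contra! hneg
    have h1 : 0 < inner ℝ v v := real_inner_self_pos.2 hv
    have p := P v
    have q' := Q' v
    have h2 : inner ℝ v v' < 0 := by
      rw [hv'e, inner_smul_right]; exact mul_neg_of_neg_of_pos hneg h1
    rcases max_cases (H v) (H (-v)) with ⟨h, _⟩ | ⟨h, _⟩ <;> rw [h] at p q' <;> linarith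
  rw [hv'e, norm_smul, Real.norm_of_nonneg hpos, smul_smul, mul_comm]
end

section
/- Let B ⊆ ℝ² be a convex body such that every nonempty intersection of B with an affine line is parkable in B (that is, for every affine line ℓ with ℓ ∩ B nonempty there is a vector w with 0 ∈ (ℓ ∩ B) + w ⊆ B). Then B is centrally symmetric: B = -B. -/
open Set Filter Topology

/-- Telescoping. -/
theorem tele_const (r ψ : ℝ → ℝ) (R : ℝ)
    (h : ∀ s t : ℝ, 0 ≤ s → s ≤ t → t ≤ 1 → |r t - r s| ≤ R * ((ψ t - ψ s) * (t - s))) :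
    r 1 = r 0 := by
  have key : ∀ N : ℕ, 0 < N → |r 1 - r 0| ≤ R * (ψ 1 - ψ 0) / N := by
    intro N hN
    have hN' : (0 : ℝ) < N := by exact_mod_cast hN
    have ind : ∀ k : ℕ, k ≤ N → |r (k / N) - r 0| ≤ R * (ψ (k / N) - ψ 0) / N := by
      intro k
      induction k with
      | zero => intro _; simp
      | succ k ih =>
        intro hk
        have h1 := ih (by omega)
        have hk' : ((k + 1 : ℕ) : ℝ) ≤ N := by exact_mod_cast hk
        have h2 := h (k / N) ((k + 1 : ℕ) / N) (by positivity)
          (by gcongr; simp) (by rw [div_le_one hN']; exact hk')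
        have h3 : (((k + 1 : ℕ) : ℝ) / N - k / N) = 1 / N := by push_cast; ring
        rw [h3] at h2
        have h4 := abs_sub_le (r ((k + 1 : ℕ) / N)) (r (k / N)) (r 0)
        calc _ ≤ _ := h4
          _ ≤ _ := add_le_add h2 h1
          _ = _ := by ring
    have := ind N le_rfl
    rwa [div_self hN'.ne'] at this
  have hlim : Tendsto (fun N : ℕ => R * (ψ 1 - ψ 0) / (N : ℝ)) atTop (𝓝 0) :=
    tendsto_const_div_atTop_nhds_zero_nat _
  have : |r 1 - r 0| ≤ 0 := by
    refine ge_of_tendsto hlim ?_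
    filter_upwards [eventually_gt_atTop 0] with N hN using key N hN
  have := abs_nonpos_iff.1 this
  linarith

theorem ratio_const (P Q m : ℝ → ℝ) (M R : ℝ)
    (hP : ∀ t, 0 ≤ t → t ≤ 1 → 0 < P t) (hQ : ∀ t, 0 ≤ t → t ≤ 1 → 0 < Q t)
    (hm : ∀ t, 0 ≤ t → t ≤ 1 → |m t| ≤ M)
    (hR : ∀ t, 0 ≤ t → t ≤ 1 → P t ≤ R * Q t)
    (h1 : ∀ s t, 0 ≤ s → s ≤ 1 → 0 ≤ t → t ≤ 1 → P s * (1 + m s * (t - s)) ≤ P t)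
    (h2 : ∀ s t, 0 ≤ s → s ≤ 1 → 0 ≤ t → t ≤ 1 → Q s * (1 + m s * (t - s)) ≤ Q t) :
    P 1 / Q 1 = P 0 / Q 0 := by
  apply tele_const (fun t => P t / Q t) (fun t => m t + M ^ 2 * t) R
  intro s t hs hst ht
  have hs1 : s ≤ 1 := hst.trans ht
  have ht0 : 0 ≤ t := hs.trans hst
  set h := t - s with hh
  have hh0 : 0 ≤ h := by linarith
  set A := 1 + m s * h with hA
  set C := 1 - m t * h with hC
  have hPs := hP s hs hs1
  have hPt := hP t ht0 ht
  have hQs := hQ s hs hs1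
  have hQt := hQ t ht0 ht
  have a1 : P s * A ≤ P t := h1 s t hs hs1 ht0 ht
  have a2 : Q s * A ≤ Q t := h2 s t hs hs1 ht0 ht
  have a3 : P t * C ≤ P s := by
    have := h1 t s ht0 ht hs hs1
    have e : P t * C = P t * (1 + m t * (s - t)) := by rw [hC, hh]; ring
    rw [e]; exact this
  have a4 : Q t * C ≤ Q s := by
    have := h2 t s ht0 ht hs hs1
    have e : Q t * C = Q t * (1 + m t * (s - t)) := by rw [hC, hh]; ring
    rw [e]; exact this
  set δ := ((m t + M ^ 2 * t) - (m s + M ^ 2 * s)) * h with hδ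
  have hMs := abs_le.1 (hm s hs hs1)
  have hMt := abs_le.1 (hm t ht0 ht)
  have hmm : m s * m t ≤ M ^ 2 := by nlinarith
  have hd1 : 1 - δ ≤ A * C := by
    have e : A * C - (1 - δ) = (M ^ 2 - m s * m t) * h ^ 2 := by
      rw [hA, hC, hδ, hh]; ring
    have := mul_nonneg (sub_nonneg.2 hmm) (sq_nonneg h)
    linarith
  have hneg : A < 0 → C < 0 → 1 - δ ≤ 0 := by
    intro hA0 hC0
    have e : 1 - δ = A + C - 1 - M ^ 2 * h ^ 2 := by rw [hA, hC, hδ, hh]; ring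
    have := mul_nonneg (sq_nonneg M) (sq_nonneg h)
    linarith
  -- cross inequalities
  have cross : ∀ a b c d : ℝ, 0 < a → 0 < b → 0 < c → 0 < d → a * A ≤ b → c * C ≤ d →
      a * c * (1 - δ) ≤ b * d := by
    intro a b c d ha hb hc hd e1 e2
    have hac := mul_pos ha hc
    have hbd := mul_pos hb hd
    rcases lt_or_ge A 0 with hA0 | hA0
    · rcases lt_or_ge C 0 with hC0 | hC0
      · have := hneg hA0 hC0
        nlinarith
      · have : A * C ≤ 0 := mul_nonpos_of_nonpos_of_nonneg hA0.le hC0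
        nlinarith
    · rcases lt_or_ge C 0 with hC0 | hC0
      · have : A * C ≤ 0 := mul_nonpos_of_nonneg_of_nonpos hA0 hC0.le
        nlinarith
      · calc a * c * (1 - δ) ≤ a * c * (A * C) := by gcongr
          _ = (a * A) * (c * C) := by ring
          _ ≤ b * d := by gcongr
  have c1 : P s * Q t * (1 - δ) ≤ P t * Q s := cross _ _ _ _ hPs hPt hQt hQs a1 a4
  have c2 : Q s * P t * (1 - δ) ≤ Q t * P s := cross _ _ _ _ hQs hQt hPt hPs a2 a3
  have d1 : P s / Q s * (1 - δ) ≤ P t / Q t := by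
    rw [div_mul_eq_mul_div, div_le_div_iff₀ hQs hQt]; linarith
  have d2 : P t / Q t * (1 - δ) ≤ P s / Q s := by
    rw [div_mul_eq_mul_div, div_le_div_iff₀ hQt hQs]; linarith
  have p1 : 0 < P s / Q s := by positivity
  have p2 : 0 < P t / Q t := by positivity
  have q1 : P s / Q s ≤ R := by rw [div_le_iff₀ hQs]; exact hR s hs hs1
  have q2 : P t / Q t ≤ R := by rw [div_le_iff₀ hQt]; exact hR t ht0 ht
  clear_value δ
  generalize P s / Q s = rs at *
  generalize P t / Q t = rt at *
  clear hneg cross c1 c2 a1 a2 a3 a4 hd1 hmm hMs hMt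
  have hδ0 : 0 ≤ δ := by
    by_contra hc
    push Not at hc
    have i1 := mul_neg_of_pos_of_neg p1 hc
    have i2 := mul_neg_of_pos_of_neg p2 hc
    linarith
  have j1 : rs * δ ≤ R * δ := mul_le_mul_of_nonneg_right q1 hδ0
  have j2 : rt * δ ≤ R * δ := mul_le_mul_of_nonneg_right q2 hδ0
  rw [abs_le]
  constructor
  · linarith
  · linarith

abbrev E2 := EuclideanSpace ℝ (Fin 2)

/-- the consequence of parkability we use -/
theorem park_key (B : Set E2) (hB0 : (0 : E2) ∈ B)
    (hpark : ∀ p d : E2, d ≠ 0 →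
      ({x | ∃ t : ℝ, x = p + t • d} ∩ B).Nonempty →
      ∃ w : E2,
        (0 : E2) ∈ (fun x => x + w) '' ({x | ∃ t : ℝ, x = p + t • d} ∩ B) ∧
        (fun x => x + w) '' ({x | ∃ t : ℝ, x = p + t • d} ∩ B) ⊆ B)
    (z w : E2) (hz : z ∈ B) (hw : w ∈ B) :
    ∃ t : ℝ, (-t) • (z - w) ∈ B ∧ (1 - t) • (z - w) ∈ B := by
  by_cases hd : z - w = 0
  · exact ⟨0, by simpa [hd] using hB0, by simpa [hd] using hB0⟩
  obtain ⟨u, ⟨y, ⟨⟨t, ht⟩, -⟩, hy⟩, hsub⟩ := hpark w (z - w) hd ⟨w, ⟨0, by simp⟩, hw⟩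
  have hu : u = -y := by
    have : y + u = 0 := hy
    exact (neg_eq_of_add_eq_zero_right this).symm
  refine ⟨t, ?_, ?_⟩
  · have := hsub ⟨w, ⟨⟨0, by simp⟩, hw⟩, rfl⟩
    convert this using 1
    simp only [hu, ht]; module
  · have := hsub ⟨z, ⟨⟨1, by simp⟩, hz⟩, rfl⟩
    convert this using 1
    simp only [hu, ht]; module

theorem zero_int (B : Set E2)
    (hBcomp : IsCompact B) (hBconv : Convex ℝ B)
    (hBint : (interior B).Nonempty) (hB0 : (0 : E2) ∈ B)
    (key : ∀ z w : E2, z ∈ B → w ∈ B → ∃ t : ℝ, (-t) • (z - w) ∈ B ∧ (1 - t) • (z - w) ∈ B) :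
    (0 : E2) ∈ interior B := by
  by_contra h0
  obtain ⟨f, hf⟩ := geometric_hahn_banach_point_open hBconv.interior isOpen_interior h0
  simp only [map_zero] at hf
  obtain ⟨c, hc⟩ := hBint
  have hcl : closure (interior B) = B := by
    rw [hBconv.closure_interior_eq_closure_of_nonempty_interior ⟨c, hc⟩,
      hBcomp.isClosed.closure_eq]
  have hfB : ∀ z ∈ B, 0 ≤ f z := by
    intro z hz
    rw [← hcl] at hz
    have : closure (interior B) ⊆ {z | 0 ≤ f z} :=
      closure_minimal (fun z hz => (hf z hz).le) (isClosed_le continuous_const f.continuous)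
    exact this hz
  have hfc := hf c hc
  have hscale : ∀ v : E2, v ∈ B → ∀ a : ℝ, 0 ≤ a → a ≤ 1 → a • v ∈ B := by
    intro v hv a ha ha1
    exact hBconv.smul_mem_of_zero_mem hB0 hv ⟨ha, ha1⟩
  have step1 : ∀ z ∈ B, ∀ w ∈ B, f w < f z → z - w ∈ B := by
    intro z hz w hw hlt
    obtain ⟨t, h1, h2⟩ := key z w hz hw
    have h3 := hfB _ h1
    rw [map_smul, map_sub, smul_eq_mul] at h3
    have ht : t ≤ 0 := by
      by_contra hc; push Not at hc; nlinarith
    have := hscale _ h2 (1 - t)⁻¹ (by apply inv_nonneg.2; linarith)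
      (inv_le_one_of_one_le₀ (by linarith))
    rwa [smul_smul, inv_mul_cancel₀ (by linarith), one_smul] at this
  obtain ⟨ε, hε, hball⟩ := Metric.isOpen_iff.1 isOpen_interior c hc
  have small : ∀ v : E2, ∃ η : ℝ, 0 < η ∧ c + η • v ∈ B ∧ c - η • v ∈ B := by
    intro v
    refine ⟨ε / (‖v‖ + 1), by positivity, ?_, ?_⟩
    all_goals
      apply interior_subset
      apply hball
      rw [Metric.mem_ball, dist_eq_norm]
      have hv : ‖(ε / (‖v‖ + 1)) • v‖ < ε := by
        rw [norm_smul, Real.norm_of_nonneg (by positivity), div_mul_eq_mul_div,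
          div_lt_iff₀ (by positivity)]
        nlinarith
      simpa using hv
  obtain ⟨η, hη, hc', -⟩ := small c
  set c' := c + η • c with hc'def
  have hfc' : f c < f c' := by
    simp only [hc'def, map_add, map_smul, smul_eq_mul]; nlinarith
  have step2 : ∀ z ∈ B, ∀ w ∈ B, f w ≤ f z → f z < f c' → z - w ∈ B := by
    intro z hz w hw hle hlt
    have hlim : Tendsto (fun s : ℝ => ((1 - s) • z + s • c') - w) (𝓝[>] 0) (𝓝 (z - w)) := by
      have : Continuous (fun s : ℝ => ((1 - s) • z + s • c') - w) := by fun_prop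
      have h := this.tendsto 0
      simp only [sub_zero, one_smul, zero_smul, add_zero] at h
      exact h.mono_left nhdsWithin_le_nhds
    refine hBcomp.isClosed.mem_of_tendsto hlim ?_
    filter_upwards [Ioc_mem_nhdsGT (zero_lt_one (α := ℝ))] with s hs
    refine step1 _ (hBconv hz hc' (by linarith [hs.2]) hs.1.le (by ring)) _ hw ?_
    simp only [map_add, map_smul, smul_eq_mul]
    nlinarith [hs.1, hs.2]
  obtain ⟨e, hek, he0⟩ : ∃ e : E2, f e = 0 ∧ e ≠ 0 := by
    have : LinearMap.ker (f : E2 →ₗ[ℝ] ℝ) ≠ ⊥ := by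
      apply LinearMap.ker_ne_bot_of_finrank_lt
      simp
    obtain ⟨e, he, he'⟩ := Submodule.exists_mem_ne_zero_of_ne_bot this
    exact ⟨e, by simpa using he, he'⟩
  obtain ⟨τ, hτ, hp, hm⟩ := small e
  have hfc'0 : 0 < f c' := hfc.trans hfc'
  have h2e : (2 * τ) • e ∈ B := by
    have := step2 _ hp _ hm (by simp [hek]) (by simpa [hek] using hfc')
    convert this using 1
    module
  have hall : ∀ n : ℕ, (2 ^ n * (2 * τ)) • e ∈ B := by
    intro n
    induction n with
    | zero => simpa using h2e
    | succ n ih =>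
      have h1 := step2 _ hB0 _ ih (by simp [hek]) (by simpa using hfc'0)
      have h2 := step2 _ ih _ h1 (by simp [hek]) (by simpa [hek] using hfc'0)
      convert h2 using 1
      rw [pow_succ]; module
  obtain ⟨K, hK⟩ := hBcomp.isBounded.exists_norm_le
  have hpos : 0 < 2 * τ * ‖e‖ := by have := norm_pos_iff.2 he0; positivity
  obtain ⟨n, hn⟩ := pow_unbounded_of_one_lt (K / (2 * τ * ‖e‖)) (one_lt_two (α := ℝ))
  have := hK _ (hall n)
  rw [norm_smul, Real.norm_of_nonneg (by positivity)] at this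
  rw [div_lt_iff₀ hpos] at hn
  nlinarith

open scoped Pointwise in
theorem support_fun (B : Set E2)
    (hBcomp : IsCompact B) (hBconv : Convex ℝ B) (h0 : (0 : E2) ∈ interior B)
    (key : ∀ z w : E2, z ∈ B → w ∈ B → ∃ t : ℝ, (-t) • (z - w) ∈ B ∧ (1 - t) • (z - w) ∈ B)
    (x : E2) (hx : x ≠ 0) :
    ∃ l : E2 →L[ℝ] ℝ, l x = 1 ∧ (∀ z, gauge B x * l z ≤ gauge B z) ∧
      (∀ z, gauge B (-x) * l z ≤ gauge B (-z)) := by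
  have hnhds : B ∈ 𝓝 (0 : E2) := mem_interior_iff_mem_nhds.1 h0
  have habs : Absorbent ℝ B := absorbent_nhds_zero hnhds
  have hbdd : Bornology.IsVonNBounded ℝ B := NormedSpace.isVonNBounded_of_isBounded ℝ hBcomp.isBounded
  have hgpos : ∀ v : E2, v ≠ 0 → 0 < gauge B v := fun v hv => (gauge_pos habs hbdd).2 hv
  have hmem : ∀ v : E2, gauge B v ≤ 1 ↔ v ∈ B := by
    intro v
    rw [gauge_le_one_iff_mem_closure hBconv hnhds, hBcomp.isClosed.closure_eq]
  have hnorm : ∀ v : E2, v ≠ 0 → (gauge B v)⁻¹ • v ∈ B := by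
    intro v hv
    rw [← hmem, gauge_smul_of_nonneg (inv_nonneg.2 (hgpos v hv).le), smul_eq_mul,
      inv_mul_cancel₀ (hgpos v hv).ne']
  have hp := hgpos x hx
  have hq := hgpos (-x) (neg_ne_zero.2 hx)
  set a := (gauge B x)⁻¹ with ha
  set b := (gauge B (-x))⁻¹ with hb
  have ha0 : 0 < a := inv_pos.2 hp
  have hb0 : 0 < b := inv_pos.2 hq
  have up : ∀ s : ℝ, s • x ∈ B → s ≤ a := by
    intro s hs
    rcases le_or_gt s 0 with h | h
    · linarith
    · rw [← hmem, gauge_smul_of_nonneg h.le, smul_eq_mul] at hs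
      rw [ha, ← one_div, le_div_iff₀ hp]; exact hs
  have dn : ∀ s : ℝ, s • x ∈ B → -s ≤ b := by
    intro s hs
    rcases le_or_gt 0 s with h | h
    · linarith
    · have e : s • x = (-s) • (-x) := by module
      rw [e, ← hmem, gauge_smul_of_nonneg (by linarith), smul_eq_mul] at hs
      rw [hb, ← one_div, le_div_iff₀ hq]; exact hs
  have diff : ∀ z ∈ B, ∀ w ∈ B, ∀ s : ℝ, z - w = s • x → s ≤ a + b := by
    intro z hz w hw s hs
    obtain ⟨t, h1, h2⟩ := key z w hz hw
    rw [hs, smul_smul] at h1 h2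
    have := dn _ h1
    have := up _ h2
    linarith
  have hax : a • x ∈ B := hnorm x hx
  have hbx : (-b) • x ∈ B := by
    have := hnorm (-x) (neg_ne_zero.2 hx)
    rw [smul_neg, ← neg_smul] at this
    exact this
  -- the difference body
  have hDconv : Convex ℝ (B - B) := hBconv.sub hBconv
  have hD0 : (0 : E2) ∈ interior (B - B) := by
    have : B ⊆ B - B := fun z hz => ⟨z, hz, 0, interior_subset h0, by simp⟩
    exact interior_mono this h0
  set d := (a + b) • x with hd
  have hdni : d ∉ interior (B - B) := by
    intro hdi
    have hlim : Tendsto (fun s : ℝ => s • x) (𝓝[>] (a + b)) (𝓝 d) := by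
      have : Continuous (fun s : ℝ => s • x) := by fun_prop
      exact (this.tendsto (a + b)).mono_left nhdsWithin_le_nhds
    have hev := hlim.eventually (isOpen_interior.mem_nhds hdi)
    obtain ⟨s, hs1, hs2⟩ := (hev.and self_mem_nhdsWithin).exists
    obtain ⟨z, hz, w, hw, hzw⟩ := interior_subset hs1
    have := diff z hz w hw s hzw
    have h3 : a + b < s := hs2
    linarith
  obtain ⟨f, hf⟩ := geometric_hahn_banach_open_point hDconv.interior isOpen_interior hdni
  have hfd : 0 < f d := by simpa using hf 0 hD0
  have hcl : closure (interior (B - B)) ⊆ {z | f z ≤ f d} :=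
    closure_minimal (fun z hz => (hf z hz).le) (isClosed_le f.continuous continuous_const)
  rw [hDconv.closure_interior_eq_closure_of_nonempty_interior ⟨0, hD0⟩] at hcl
  have hfD : ∀ z ∈ B, ∀ w ∈ B, f z - f w ≤ f d := by
    intro z hz w hw
    have : f (z - w) ≤ f d := hcl (subset_closure ⟨z, hz, w, hw, rfl⟩)
    rwa [map_sub] at this
  have hfdx : f d = (a + b) * f x := by simp [hd]
  have hfx : 0 < f x := by
    rw [hfdx] at hfd
    exact pos_of_mul_pos_right hfd (by linarith)
  have hup : ∀ z ∈ B, f z ≤ a * f x := by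
    intro z hz
    have := hfD z hz _ hbx
    rw [hfdx, map_smul, smul_eq_mul] at this
    linarith
  have hdn : ∀ z ∈ B, -(b * f x) ≤ f z := by
    intro z hz
    have := hfD _ hax z hz
    rw [hfdx, map_smul, smul_eq_mul] at this
    linarith
  refine ⟨(f x)⁻¹ • f, by simp [hfx.ne'], ?_, ?_⟩
  · intro z
    by_cases hz : z = 0
    · simp [hz]
    have h1 := hup _ (hnorm z hz)
    have hgz := hgpos z hz
    rw [map_smul, smul_eq_mul, ha, inv_mul_eq_div, inv_mul_eq_div, div_le_div_iff₀ hgz hp] at h1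
    simp only [ContinuousLinearMap.smul_apply, smul_eq_mul]
    rw [inv_mul_eq_div, mul_div_assoc', div_le_iff₀ hfx]
    linarith
  · intro z
    by_cases hz : z = 0
    · simp [hz]
    have h1 := hdn _ (hnorm (-z) (neg_ne_zero.2 hz))
    have hgz := hgpos (-z) (neg_ne_zero.2 hz)
    rw [map_smul, smul_eq_mul, map_neg, mul_neg, neg_le_neg_iff, hb, inv_mul_eq_div, inv_mul_eq_div,
      div_le_div_iff₀ hgz hq] at h1
    simp only [ContinuousLinearMap.smul_apply, smul_eq_mul]
    rw [inv_mul_eq_div, mul_div_assoc', div_le_iff₀ hfx]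
    linarith

theorem seg_const (B : Set E2)
    (hBcomp : IsCompact B) (hBconv : Convex ℝ B) (h0 : (0 : E2) ∈ interior B)
    (key : ∀ z w : E2, z ∈ B → w ∈ B → ∃ t : ℝ, (-t) • (z - w) ∈ B ∧ (1 - t) • (z - w) ∈ B)
    (x v : E2) (hxv : ∀ t : ℝ, 0 ≤ t → t ≤ 1 → x + t • v ≠ 0) :
    gauge B (x + v) / gauge B (-(x + v)) = gauge B x / gauge B (-x) := by
  have hnhds : B ∈ 𝓝 (0 : E2) := mem_interior_iff_mem_nhds.1 h0
  have habs : Absorbent ℝ B := absorbent_nhds_zero hnhds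
  have hbdd : Bornology.IsVonNBounded ℝ B := NormedSpace.isVonNBounded_of_isBounded ℝ hBcomp.isBounded
  have hgpos : ∀ v : E2, v ≠ 0 → 0 < gauge B v := fun v hv => (gauge_pos habs hbdd).2 hv
  have hgcont : Continuous (gauge B) := continuous_gauge hBconv hnhds
  have hex : ∀ t : ℝ, ∃ l : E2 →L[ℝ] ℝ, 0 ≤ t → t ≤ 1 → l (x + t • v) = 1 ∧
      (∀ z, gauge B (x + t • v) * l z ≤ gauge B z) ∧
      (∀ z, gauge B (-(x + t • v)) * l z ≤ gauge B (-z)) := by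
    intro t
    by_cases h : 0 ≤ t ∧ t ≤ 1
    · obtain ⟨l, hl⟩ := support_fun B hBcomp hBconv h0 key (x + t • v) (hxv t h.1 h.2)
      exact ⟨l, fun _ _ => hl⟩
    · exact ⟨0, fun h1 h2 => absurd ⟨h1, h2⟩ h⟩
  choose l hl using hex
  have hPpos : ∀ t : ℝ, 0 ≤ t → t ≤ 1 → 0 < gauge B (x + t • v) :=
    fun t h1 h2 => hgpos _ (hxv t h1 h2)
  have hQpos : ∀ t : ℝ, 0 ≤ t → t ≤ 1 → 0 < gauge B (-(x + t • v)) :=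
    fun t h1 h2 => hgpos _ (neg_ne_zero.2 (hxv t h1 h2))
  have hPc : Continuous (fun t : ℝ => gauge B (x + t • v)) := hgcont.comp (by fun_prop)
  have hQc : Continuous (fun t : ℝ => gauge B (-(x + t • v))) := hgcont.comp (by fun_prop)
  obtain ⟨R, hR⟩ : ∃ R : ℝ, ∀ t ∈ Icc (0 : ℝ) 1,
      gauge B (x + t • v) / gauge B (-(x + t • v)) ≤ R := by
    have hcon : ContinuousOn (fun t : ℝ => gauge B (x + t • v) / gauge B (-(x + t • v)))
        (Icc 0 1) :=
      hPc.continuousOn.div hQc.continuousOn (fun t ht => (hQpos t ht.1 ht.2).ne')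
    obtain ⟨R, hR⟩ := (isCompact_Icc.image_of_continuousOn hcon).bddAbove
    exact ⟨R, fun t ht => hR ⟨t, ht, rfl⟩⟩
  obtain ⟨M, hM⟩ : ∃ M : ℝ, ∀ t ∈ Icc (0 : ℝ) 1,
      (gauge B v + gauge B (-v)) / gauge B (x + t • v) ≤ M := by
    have hcon : ContinuousOn (fun t : ℝ => (gauge B v + gauge B (-v)) / gauge B (x + t • v))
        (Icc 0 1) :=
      continuousOn_const.div hPc.continuousOn (fun t ht => (hPpos t ht.1 ht.2).ne')
    obtain ⟨R, hR⟩ := (isCompact_Icc.image_of_continuousOn hcon).bddAbove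
    exact ⟨R, fun t ht => hR ⟨t, ht, rfl⟩⟩
  have hlin : ∀ s t : ℝ, 0 ≤ s → s ≤ 1 → l s (x + t • v) = 1 + l s v * (t - s) := by
    intro s t h1 h2
    have e : x + t • v = (x + s • v) + (t - s) • v := by module
    rw [e, map_add, (hl s h1 h2).1, map_smul, smul_eq_mul]; ring
  have main := ratio_const (fun t => gauge B (x + t • v)) (fun t => gauge B (-(x + t • v)))
    (fun t => l t v) M R hPpos hQpos ?_ ?_ ?_ ?_
  · simpa using main
  · intro t h1 h2
    refine le_trans ?_ (hM t ⟨h1, h2⟩)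
    have hp := hPpos t h1 h2
    rw [le_div_iff₀ hp]
    have e1 := (hl t h1 h2).2.1 v
    have e2 := (hl t h1 h2).2.1 (-v)
    rw [map_neg] at e2
    have g1 := gauge_nonneg (s := B) v
    have g2 := gauge_nonneg (s := B) (-v)
    rcases abs_cases (l t v) with h | h <;> rw [h.1] <;> linarith
  · intro t h1 h2
    have := hR t ⟨h1, h2⟩
    rwa [div_le_iff₀ (hQpos t h1 h2)] at this
  · intro s t h1 h2 _ _
    have := (hl s h1 h2).2.1 (x + t • v)
    rwa [hlin s t h1 h2] at this
  · intro s t h1 h2 _ _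
    have := (hl s h1 h2).2.2 (x + t • v)
    rwa [hlin s t h1 h2] at this


/-- A convex body in ℝ² all of whose nonempty line sections are parkable in it
is centrally symmetric. -/
theorem stmt_7 (B : Set (EuclideanSpace ℝ (Fin 2)))
    (hBcomp : IsCompact B) (hBconv : Convex ℝ B)
    (hBint : (interior B).Nonempty) (hB0 : (0 : EuclideanSpace ℝ (Fin 2)) ∈ B)
    (hpark : ∀ p d : EuclideanSpace ℝ (Fin 2), d ≠ 0 →
      ({x | ∃ t : ℝ, x = p + t • d} ∩ B).Nonempty →
      ∃ w : EuclideanSpace ℝ (Fin 2),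
        (0 : EuclideanSpace ℝ (Fin 2)) ∈ (fun x => x + w) '' ({x | ∃ t : ℝ, x = p + t • d} ∩ B) ∧
        (fun x => x + w) '' ({x | ∃ t : ℝ, x = p + t • d} ∩ B) ⊆ B) :
    B = -B := by
  have key := park_key B hB0 hpark
  have h0 := zero_int B hBcomp hBconv hBint hB0 key
  have hnhds : B ∈ 𝓝 (0 : E2) := mem_interior_iff_mem_nhds.1 h0
  have habs : Absorbent ℝ B := absorbent_nhds_zero hnhds
  have hbdd : Bornology.IsVonNBounded ℝ B := NormedSpace.isVonNBounded_of_isBounded ℝ hBcomp.isBounded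
  have hgpos : ∀ v : E2, v ≠ 0 → 0 < gauge B v := fun v hv => (gauge_pos habs hbdd).2 hv
  have hmem : ∀ v : E2, gauge B v ≤ 1 ↔ v ∈ B := by
    intro v
    rw [gauge_le_one_iff_mem_closure hBconv hnhds, hBcomp.isClosed.closure_eq]
  have hseg : ∀ x y : E2, x ≠ 0 → y ≠ 0 → inner ℝ x y = 0 →
      gauge B y / gauge B (-y) = gauge B x / gauge B (-x) := by
    intro x y hx hy hxy
    have := seg_const B hBcomp hBconv h0 key x (y - x) ?_
    · simpa using this
    intro t _ _ ht
    have e : x + t • (y - x) = (1 - t) • x + t • y := by module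
    rw [e] at ht
    have h1 : inner ℝ x ((1 - t) • x + t • y) = 0 := by rw [ht, inner_zero_right]
    have h2 : inner ℝ ((1 - t) • x + t • y) y = 0 := by rw [ht, inner_zero_left]
    rw [inner_add_right, inner_smul_right, inner_smul_right, hxy, mul_zero, add_zero] at h1
    rw [inner_add_left, real_inner_smul_left, real_inner_smul_left, hxy, mul_zero, zero_add] at h2
    have h3 : inner ℝ x x ≠ 0 := inner_self_ne_zero.2 hx
    have h4 : inner ℝ y y ≠ 0 := inner_self_ne_zero.2 hy
    have h5 := (mul_eq_zero.1 h1).resolve_right h3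
    have h6 := (mul_eq_zero.1 h2).resolve_right h4
    linarith
  have hsym : ∀ x : E2, gauge B (-x) = gauge B x := by
    intro x
    by_cases hx : x = 0
    · simp [hx]
    obtain ⟨y, hxy, hy⟩ : ∃ e : E2, inner ℝ x e = 0 ∧ e ≠ 0 := by
      have : LinearMap.ker (innerSL ℝ x : E2 →ₗ[ℝ] ℝ) ≠ ⊥ := by
        apply LinearMap.ker_ne_bot_of_finrank_lt
        simp
      obtain ⟨e, he, he'⟩ := Submodule.exists_mem_ne_zero_of_ne_bot this
      exact ⟨e, by simpa using he, he'⟩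
    have h1 := hseg x y hx hy hxy
    have h2 := hseg (-x) y (neg_ne_zero.2 hx) hy (by rw [inner_neg_left, hxy, neg_zero])
    rw [h1, neg_neg] at h2
    have hp := hgpos x hx
    have hq := hgpos (-x) (neg_ne_zero.2 hx)
    rw [div_eq_div_iff hq.ne' hp.ne'] at h2
    nlinarith
  ext x
  rw [Set.mem_neg, ← hmem, ← hmem, hsym]
end

section
/- Let n ≥ 3 and let B ⊆ ℝ^n be a convex body such that every closed convex subset of B is parkable in B. Then B is centrally symmetric: B = -B. -/
open Set Filter Topology

/-- One-dimensional comparison lemma. -/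
lemma ratio_le (g h m : ℝ → ℝ) (K : ℝ) (hK : 0 < K)
    (hh : ∀ t ∈ Icc (0:ℝ) 1, K ≤ h t)
    (hg : ∀ s ∈ Icc (0:ℝ) 1, ∀ t ∈ Icc (0:ℝ) 1, g t * (1 + (s - t) * m t) ≤ g s)
    (hgpos : ∀ t ∈ Icc (0:ℝ) 1, 0 < g t)
    (hhs : ∀ s ∈ Icc (0:ℝ) 1, ∀ t ∈ Icc (0:ℝ) 1, h t * (1 + (s - t) * m t) ≤ h s) :
    g 1 / h 1 ≤ g 0 / h 0 := by
  have step : ∀ s ∈ Icc (0:ℝ) 1, ∀ t ∈ Icc (0:ℝ) 1, s < t →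
      g t / h t - g s / h s ≤ (t - s) * ((g t * m t - g s * m s) / K) := by
    intro s hs t ht hst
    have h1 := hg s hs t ht
    have h2 := hg t ht s hs
    have h3 := hhs t ht s hs
    have hs0 : 0 < h s := lt_of_lt_of_le hK (hh s hs)
    have ht0 : 0 < h t := lt_of_lt_of_le hK (hh t ht)
    have gs := hgpos s hs
    have hd : 0 < t - s := by linarith
    have hp : 0 ≤ g t * m t - g s * m s := by
      by_contra hc
      push Not at hc
      nlinarith
    have e1 : g t / h t - g s / h s = (g t * h s - g s * h t) / (h t * h s) := by
      field_simp
    have e2 : g t * h s - g s * h t ≤ (t - s) * (g t * m t - g s * m s) * h s := by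
      have a1 : (g t - g s) * h s ≤ ((t - s) * (g t * m t)) * h s := by
        apply mul_le_mul_of_nonneg_right _ hs0.le
        linarith
      have a2 : g s * ((t - s) * (h s * m s)) ≤ g s * (h t - h s) := by
        apply mul_le_mul_of_nonneg_left _ gs.le
        linarith
      linarith
    rw [e1, ← mul_div_assoc, div_le_div_iff₀ (by positivity) hK]
    have hX : 0 ≤ (t - s) * (g t * m t - g s * m s) := mul_nonneg hd.le hp
    calc (g t * h s - g s * h t) * K
        ≤ ((t - s) * (g t * m t - g s * m s) * h s) * K :=
          mul_le_mul_of_nonneg_right e2 hK.le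
      _ ≤ ((t - s) * (g t * m t - g s * m s) * h s) * h t :=
          mul_le_mul_of_nonneg_left (hh t ht) (mul_nonneg hX hs0.le)
      _ = _ := by ring
  have main : ∀ N : ℕ, 0 < N →
      g 1 / h 1 - g 0 / h 0 ≤ ((g 1 * m 1 - g 0 * m 0) / K) * (1 / (N:ℝ)) := by
    intro N hN
    have hN' : (0:ℝ) < N := by exact_mod_cast hN
    have ind : ∀ k : ℕ, k ≤ N → g (k / N) / h (k / N) - g 0 / h 0 ≤
        ((g (k / N) * m (k / N) - g 0 * m 0) / K) * (1 / (N:ℝ)) := by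
      intro k
      induction k with
      | zero => intro _; simp
      | succ k ih =>
        intro hk
        have ih' := ih (by omega)
        have hkr : ((k + 1 : ℕ) : ℝ) ≤ N := by exact_mod_cast hk
        push_cast at hkr
        have hk0 : (0:ℝ) ≤ k := by positivity
        have m1 : (k / N : ℝ) ∈ Icc (0:ℝ) 1 :=
          ⟨by positivity, by rw [div_le_one hN']; linarith⟩
        have m2 : (((k + 1 : ℕ) : ℝ) / N : ℝ) ∈ Icc (0:ℝ) 1 :=
          ⟨by positivity, by rw [div_le_one hN']; push_cast; linarith⟩
        have hsub : (((k + 1 : ℕ) : ℝ) / N : ℝ) - k / N = 1 / N := by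
          push_cast; ring
        have hpos : (0:ℝ) < 1 / N := by positivity
        have st := step _ m1 _ m2 (by linarith)
        rw [hsub] at st
        generalize (((k + 1 : ℕ) : ℝ) / N : ℝ) = b at *
        generalize (k / N : ℝ) = a at *
        have : (g b * m b - g 0 * m 0) / K * (1 / (N:ℝ)) =
          1 / (N:ℝ) * ((g b * m b - g a * m a) / K) +
          (g a * m a - g 0 * m 0) / K * (1 / (N:ℝ)) := by ring
        rw [this]
        linarith
    have := ind N le_rfl
    rwa [div_self hN'.ne'] at this
  have lim : Tendsto (fun N : ℕ => ((g 1 * m 1 - g 0 * m 0) / K) * (1 / (N:ℝ))) atTop (𝓝 0) := by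
    have := (tendsto_one_div_atTop_nhds_zero_nat (𝕜 := ℝ)).const_mul
      ((g 1 * m 1 - g 0 * m 0) / K)
    simpa using this
  have := ge_of_tendsto lim (eventually_atTop.2 ⟨1, fun N hN => main N hN⟩)
  linarith

section
variable {E : Type*} [NormedAddCommGroup E] [NormedSpace ℝ E]

/-- The origin is an interior point. -/
lemma zero_mem_int (B : Set E) (hcomp : IsCompact B) (hconv : Convex ℝ B)
    (hint : (interior B).Nonempty) (h0 : (0:E) ∈ B)
    (hker : ∀ f : E →L[ℝ] ℝ, ∃ w, w ≠ 0 ∧ f w = 0)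
    (H : ∀ a ∈ B, ∀ b ∈ B, ∃ l : ℝ, 0 ≤ l ∧ l ≤ 1 ∧ l • (a - b) ∈ B ∧ (-(1 - l)) • (a - b) ∈ B) :
    (0:E) ∈ interior B := by
  by_contra hn
  obtain ⟨f, hf⟩ := geometric_hahn_banach_point_open hconv.interior isOpen_interior hn
  rw [map_zero] at hf
  have hcl : closure (interior B) = B := by
    rw [hconv.closure_interior_eq_closure_of_nonempty_interior hint, hcomp.isClosed.closure_eq]
  have hfB : ∀ x ∈ B, 0 ≤ f x := by
    have hc : IsClosed {x : E | 0 ≤ f x} := isClosed_le continuous_const f.continuous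
    have : closure (interior B) ⊆ {x : E | 0 ≤ f x} :=
      closure_minimal (fun x hx => (hf x hx).le) hc
    rw [hcl] at this
    exact this
  obtain ⟨z, hz⟩ := hint
  have hzB := interior_subset hz
  have hfz := hf z hz
  let D : Set E := {w | ∃ a ∈ B, ∃ b ∈ B, w = a - b}
  have P1 : ∀ w ∈ D, 0 < f w → w ∈ B := by
    rintro w ⟨a, ha, b, hb, rfl⟩ hw
    obtain ⟨l, l0, l1, hl1, hl2⟩ := H a ha b hb
    have := hfB _ hl2
    rw [map_smul, smul_eq_mul] at this
    have : l = 1 := by nlinarith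
    simpa [this] using hl1
  have P2 : ∀ w ∈ D, f w = 0 → w ∈ B := by
    rintro w ⟨a, ha, b, hb, rfl⟩ hw
    have hten : Tendsto (fun e : ℝ => (1 - e) • (a - b) + e • z) (𝓝[>] 0) (𝓝 (a - b)) := by
      have : Continuous (fun e : ℝ => (1 - e) • (a - b) + e • z) := by fun_prop
      have h := (this.tendsto 0).mono_left (nhdsWithin_le_nhds (s := Ioi 0))
      simpa using h
    refine hcomp.isClosed.mem_of_tendsto hten ?_
    filter_upwards [Ioo_mem_nhdsGT (show (0:ℝ) < 1 by norm_num)] with e he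
    apply P1
    · refine ⟨(1 - e) • a + e • z, hconv ha hzB (by linarith [he.2]) he.1.le (by ring),
        (1 - e) • b + e • 0, hconv hb h0 (by linarith [he.2]) he.1.le (by ring), ?_⟩
      simp only [smul_sub, smul_zero]; abel
    · rw [map_add, map_smul, map_smul, hw]
      simpa using mul_pos he.1 hfz
  have P3 : ∀ w ∈ D, f w = 0 → w + w ∈ D := by
    intro w hw hf0
    refine ⟨w, P2 w hw hf0, -w, P2 (-w) ?_ (by simp [hf0]), by abel⟩
    obtain ⟨a, ha, b, hb, rfl⟩ := hw
    exact ⟨b, hb, a, ha, by abel⟩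
  obtain ⟨w, hw0, hfw⟩ := hker f
  obtain ⟨e, he, hwe⟩ : ∃ e : ℝ, 0 < e ∧ e • w ∈ D := by
    have hten : Tendsto (fun e : ℝ => z + e • w) (𝓝[>] 0) (𝓝 z) := by
      have : Continuous (fun e : ℝ => z + e • w) := by fun_prop
      have h := (this.tendsto 0).mono_left (nhdsWithin_le_nhds (s := Ioi 0))
      simpa using h
    have h1 := hten.eventually (isOpen_interior.mem_nhds hz)
    obtain ⟨e, h2, h3⟩ := (h1.and self_mem_nhdsWithin).exists
    exact ⟨e, h3, z + e • w, interior_subset h2, z, hzB, by abel⟩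
  have P4 : ∀ k : ℕ, ((2:ℝ) ^ k) • (e • w) ∈ D := by
    intro k
    induction k with
    | zero => simpa using hwe
    | succ k ih =>
      have := P3 _ ih (by simp [hfw])
      rwa [← add_smul, show (2:ℝ) ^ k + 2 ^ k = 2 ^ (k+1) by ring] at this
  obtain ⟨R, hR⟩ := hcomp.isBounded.exists_norm_le
  have hpos : 0 < ‖e • w‖ := norm_pos_iff.2 (smul_ne_zero he.ne' hw0)
  obtain ⟨k, hk⟩ := pow_unbounded_of_one_lt (R / ‖e • w‖) (show (1:ℝ) < 2 by norm_num)
  have h1 := hR _ (P2 _ (P4 k) (by simp [hfw]))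
  rw [norm_smul, Real.norm_of_nonneg (by positivity)] at h1
  rw [div_lt_iff₀ hpos] at hk
  linarith

lemma gauge_inv_smul_mem (B : Set E) (hcl : IsClosed B) (hconv : Convex ℝ B)
    (hi : B ∈ 𝓝 (0:E)) (y : E) (hy : 0 < gauge B y) : (gauge B y)⁻¹ • y ∈ B := by
  have h : gauge B ((gauge B y)⁻¹ • y) ≤ 1 := by
    rw [gauge_smul_of_nonneg (by positivity), smul_eq_mul, inv_mul_cancel₀ hy.ne']
  rw [gauge_le_one_iff_mem_closure hconv hi, hcl.closure_eq] at h
  exact h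

open Pointwise in
/-- Common support functional. -/
lemma exists_support (B : Set E) (hcomp : IsCompact B) (hconv : Convex ℝ B)
    (h0 : (0:E) ∈ interior B)
    (H : ∀ a ∈ B, ∀ b ∈ B, ∃ l : ℝ, 0 ≤ l ∧ l ≤ 1 ∧ l • (a - b) ∈ B ∧ (-(1 - l)) • (a - b) ∈ B)
    (x : E) (hx : x ≠ 0) :
    ∃ f : E →L[ℝ] ℝ, f x = 1 ∧ ∀ y, gauge B x * f y ≤ gauge B y ∧
      gauge B (-x) * f y ≤ gauge B (-y) := by
  have hB0 : B ∈ 𝓝 (0:E) := mem_interior_iff_mem_nhds.1 h0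
  have habs : Absorbent ℝ B := absorbent_nhds_zero hB0
  have hbd : Bornology.IsVonNBounded ℝ B := NormedSpace.isVonNBounded_of_isBounded ℝ hcomp.isBounded
  have gp : ∀ y : E, y ≠ 0 → 0 < gauge B y := fun y hy => (gauge_pos habs hbd).2 hy
  have gm := gauge_inv_smul_mem B hcomp.isClosed hconv hB0
  have g1 := gp x hx
  have g2 := gp (-x) (neg_ne_zero.2 hx)
  have ha := gm x g1
  have hb := gm (-x) g2
  set p := gauge B x with hp
  set q := gauge B (-x) with hq
  set w := (p⁻¹ + q⁻¹) • x with hw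
  let U : Set E := interior B - B
  have hU : IsOpen U := isOpen_interior.sub_right
  have hUc : Convex ℝ U := hconv.interior.sub hconv
  have hwU : w ∉ U := by
    intro hwU
    have hten : Tendsto (fun e : ℝ => (1 + e) • w) (𝓝[>] 0) (𝓝 w) := by
      have : Continuous (fun e : ℝ => (1 + e) • w) := by fun_prop
      have h := (this.tendsto 0).mono_left (nhdsWithin_le_nhds (s := Ioi 0))
      simpa using h
    obtain ⟨e, h2, h3⟩ := ((hten.eventually (hU.mem_nhds hwU)).and self_mem_nhdsWithin).exists
    obtain ⟨a, haB, b, hbB, hab⟩ := h2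
    have he : 0 < e := h3
    obtain ⟨l, l0, l1, hl1, hl2⟩ := H a (interior_subset haB) b hbB
    have hab' : a - b = (1 + e) • w := hab
    rw [hab'] at hl1 hl2
    have e1 := gauge_le_one_of_mem hl1
    have e2 := gauge_le_one_of_mem hl2
    have r1 : l • (1 + e) • w = (l * (1 + e) * (p⁻¹ + q⁻¹)) • x := by
      rw [hw, smul_smul, smul_smul]
    have r2 : (-(1 - l)) • (1 + e) • w = ((1 - l) * (1 + e) * (p⁻¹ + q⁻¹)) • (-x) := by
      rw [hw, smul_smul, smul_smul, smul_neg, ← neg_smul]; ring_nf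
    have hS : 0 < p⁻¹ + q⁻¹ := by positivity
    have hl' : 0 ≤ 1 - l := by linarith
    rw [r1, gauge_smul_of_nonneg (by positivity), smul_eq_mul, ← hp, ← le_div_iff₀ g1, one_div] at e1
    rw [r2, gauge_smul_of_nonneg (by positivity), smul_eq_mul, ← hq, ← le_div_iff₀ g2, one_div] at e2
    nlinarith
  obtain ⟨f, hf⟩ := geometric_hahn_banach_open_point hUc hU hwU
  have h0B : (0:E) ∈ B := interior_subset h0
  have hf0 : 0 < f w := by
    have := hf 0 ⟨0, h0, 0, h0B, by simp⟩
    simpa using this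
  have hcl : closure (interior B) = B := by
    rw [hconv.closure_interior_eq_closure_of_nonempty_interior ⟨0, h0⟩, hcomp.isClosed.closure_eq]
  have hfB : ∀ a ∈ B, ∀ b ∈ B, f a - f b ≤ f w := by
    intro a ha b hb
    have hc : IsClosed {a : E | f a - f b ≤ f w} :=
      isClosed_le (by fun_prop) continuous_const
    have : closure (interior B) ⊆ {a : E | f a - f b ≤ f w} :=
      closure_minimal (fun x hx => by
        have := hf (x - b) ⟨x, hx, b, hb, rfl⟩
        rw [map_sub] at this
        exact this.le) hc
    rw [hcl] at this
    exact this ha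
  have hfw : f w = (p⁻¹ + q⁻¹) * f x := by rw [hw, map_smul, smul_eq_mul]
  have hS : 0 < p⁻¹ + q⁻¹ := by positivity
  have hfx : 0 < f x := by
    rw [hfw] at hf0
    exact pos_of_mul_pos_right hf0 hS.le
  have k1 : ∀ a ∈ B, f a ≤ p⁻¹ * f x := by
    intro a ha
    have := hfB a ha _ hb
    rw [hfw, map_smul, map_neg, smul_eq_mul] at this
    linarith
  have k2 : ∀ b ∈ B, -f b ≤ q⁻¹ * f x := by
    intro b hb
    have := hfB _ ha b hb
    rw [hfw, map_smul, smul_eq_mul] at this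
    linarith
  refine ⟨(f x)⁻¹ • f, by simp [hfx.ne'], fun y => ?_⟩
  simp only [smul_apply, smul_eq_mul]
  by_cases hy : y = 0
  · subst hy; simp
  have gy := gp y hy
  have gy' := gp (-y) (neg_ne_zero.2 hy)
  have i1 := k1 _ (gm y gy)
  have i2 := k2 _ (gm (-y) gy')
  rw [map_smul, smul_eq_mul] at i1
  rw [map_smul, map_neg, smul_eq_mul] at i2
  generalize gauge B y = r at *
  generalize gauge B (-y) = s at *
  generalize f x = c at *
  generalize f y = d at *
  clear_value p q
  constructor
  · rw [inv_mul_eq_div, inv_mul_eq_div, div_le_div_iff₀ gy g1] at i1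
    rw [inv_mul_eq_div, ← mul_div_assoc, div_le_iff₀ hfx]; linarith
  · rw [mul_neg, neg_neg, inv_mul_eq_div, inv_mul_eq_div, div_le_div_iff₀ gy' g2] at i2
    rw [inv_mul_eq_div, ← mul_div_assoc, div_le_iff₀ hfx]; linarith

lemma ratio_eq (B : Set E) (hcomp : IsCompact B) (hconv : Convex ℝ B)
    (h0 : (0:E) ∈ interior B)
    (H : ∀ a ∈ B, ∀ b ∈ B, ∃ l : ℝ, 0 ≤ l ∧ l ≤ 1 ∧ l • (a - b) ∈ B ∧ (-(1 - l)) • (a - b) ∈ B)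
    (u v : E) (huv : ∀ t : ℝ, u + t • (v - u) ≠ 0) :
    gauge B v / gauge B (-v) = gauge B u / gauge B (-u) := by
  have hB0 : B ∈ 𝓝 (0:E) := mem_interior_iff_mem_nhds.1 h0
  have habs : Absorbent ℝ B := absorbent_nhds_zero hB0
  have hbd : Bornology.IsVonNBounded ℝ B := NormedSpace.isVonNBounded_of_isBounded ℝ hcomp.isBounded
  have gp : ∀ y : E, y ≠ 0 → 0 < gauge B y := fun y hy => (gauge_pos habs hbd).2 hy
  have hcont : Continuous (gauge B) := continuous_gauge hconv hB0
  choose f hf1 hf2 using fun t : ℝ => exists_support B hcomp hconv h0 H _ (huv t)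
  let g : ℝ → ℝ := fun t => gauge B (u + t • (v - u))
  let h : ℝ → ℝ := fun t => gauge B (-(u + t • (v - u)))
  let m : ℝ → ℝ := fun t => f t (v - u)
  have hgpos : ∀ t, 0 < g t := fun t => gp _ (huv t)
  have hhpos : ∀ t, 0 < h t := fun t => gp _ (neg_ne_zero.2 (huv t))
  have hfe : ∀ s t, f t (u + s • (v - u)) = 1 + (s - t) * m t := by
    intro s t
    have : u + s • (v - u) = (u + t • (v - u)) + (s - t) • (v - u) := by
      rw [sub_smul s t]; abel
    rw [this, map_add, hf1, map_smul, smul_eq_mul]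
  have hg : ∀ s t, g t * (1 + (s - t) * m t) ≤ g s := by
    intro s t; rw [← hfe]; exact (hf2 t _).1
  have hh : ∀ s t, h t * (1 + (s - t) * m t) ≤ h s := by
    intro s t; rw [← hfe]; exact (hf2 t _).2
  have low : ∀ k : ℝ → ℝ, Continuous k → (∀ t, 0 < k t) →
      ∃ K, 0 < K ∧ ∀ t ∈ Icc (0:ℝ) 1, K ≤ k t := by
    intro k hk hkp
    obtain ⟨t, _, ht⟩ := isCompact_Icc.exists_isMinOn (nonempty_Icc.2 zero_le_one) hk.continuousOn
      (s := Icc (0:ℝ) 1)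
    exact ⟨k t, hkp t, fun s hs => ht hs⟩
  obtain ⟨K1, hK1, hK1'⟩ := low g (hcont.comp (by fun_prop)) hgpos
  obtain ⟨K2, hK2, hK2'⟩ := low h (hcont.comp (by fun_prop)) hhpos
  have r1 := ratio_le g h m K2 hK2 hK2' (fun s _ t _ => hg s t) (fun t _ => hgpos t)
    (fun s _ t _ => hh s t)
  have r2 := ratio_le h g m K1 hK1 hK1' (fun s _ t _ => hh s t) (fun t _ => hhpos t)
    (fun s _ t _ => hg s t)
  have p0 := hgpos 0
  have p1 := hgpos 1
  have q0 := hhpos 0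
  have q1 := hhpos 1
  have e : g 1 / h 1 = g 0 / h 0 := by
    apply le_antisymm r1
    rw [div_le_div_iff₀ p1 p0] at r2
    rw [div_le_div_iff₀ q0 q1]
    linarith
  have x1 : u + (1:ℝ) • (v - u) = v := by module
  have x0 : u + (0:ℝ) • (v - u) = u := by module
  simp only [g, h, x1, x0] at e
  exact e

end

/-- A convex body `B ⊆ ℝⁿ` (n ≥ 3) all of whose nonempty closed convex subsets
are parkable in `B` is centrally symmetric. -/
theorem stmt_9 (n : ℕ) (hn : 3 ≤ n) (B : Set (EuclideanSpace ℝ (Fin n)))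
    (hBcomp : IsCompact B) (hBconv : Convex ℝ B)
    (hBint : (interior B).Nonempty) (hB0 : (0 : EuclideanSpace ℝ (Fin n)) ∈ B)
    (hpark : ∀ C : Set (EuclideanSpace ℝ (Fin n)),
      C ⊆ B → C.Nonempty → IsClosed C → Convex ℝ C →
      ∃ v : EuclideanSpace ℝ (Fin n),
        (0 : EuclideanSpace ℝ (Fin n)) ∈ (fun x => x + v) '' C ∧
        (fun x => x + v) '' C ⊆ B) :
    B = -B := by
  have H : ∀ a ∈ B, ∀ b ∈ B, ∃ l : ℝ, 0 ≤ l ∧ l ≤ 1 ∧ l • (a - b) ∈ B ∧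
      (-(1 - l)) • (a - b) ∈ B := by
    intro a ha b hb
    obtain ⟨v, ⟨c, hc, hcv⟩, hsub⟩ := hpark (segment ℝ a b) (hBconv.segment_subset ha hb)
      ⟨a, left_mem_segment ℝ a b⟩
      (by
        rw [← convexHull_pair]
        exact ((Set.toFinite {a, b}).isCompact_convexHull ℝ).isClosed) (convex_segment a b)
    obtain ⟨s, t, hs, ht, hst, rfl⟩ := hc
    have hv : v = -(s • a + t • b) := by
      rw [eq_neg_iff_add_eq_zero, add_comm]; exact hcv
    have h1 : a + v ∈ B := hsub ⟨a, left_mem_segment ℝ a b, rfl⟩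
    have h2 : b + v ∈ B := hsub ⟨b, right_mem_segment ℝ a b, rfl⟩
    have hs' : s = 1 - t := by linarith
    refine ⟨t, ht, by linarith, ?_, ?_⟩
    · convert h1 using 1
      rw [hv, hs']; module
    · convert h2 using 1
      rw [hv, hs']; module
  have hdim : Module.finrank ℝ (EuclideanSpace ℝ (Fin n)) = n := by simp
  have hker : ∀ f : EuclideanSpace ℝ (Fin n) →L[ℝ] ℝ, ∃ w, w ≠ 0 ∧ f w = 0 := by
    intro f
    have hlt : Module.finrank ℝ ℝ < Module.finrank ℝ (EuclideanSpace ℝ (Fin n)) := by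
      rw [hdim, Module.finrank_self]; omega
    have := LinearMap.ker_ne_bot_of_finrank_lt (f := f.toLinearMap) hlt
    obtain ⟨w, hw, hw0⟩ := (Submodule.ne_bot_iff _).1 this
    exact ⟨w, hw0, hw⟩
  have h0 := zero_mem_int B hBcomp hBconv hBint hB0 hker H
  have hBn : B ∈ 𝓝 (0 : EuclideanSpace ℝ (Fin n)) := mem_interior_iff_mem_nhds.1 h0
  have habs : Absorbent ℝ B := absorbent_nhds_zero hBn
  have hbd : Bornology.IsVonNBounded ℝ B :=
    NormedSpace.isVonNBounded_of_isBounded ℝ hBcomp.isBounded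
  have gp : ∀ y, y ≠ 0 → 0 < gauge B y := fun y hy => (gauge_pos habs hbd).2 hy
  have hmem : ∀ y, y ∈ B ↔ gauge B y ≤ 1 := by
    intro y
    rw [gauge_le_one_iff_mem_closure hBconv hBn, hBcomp.isClosed.closure_eq]
  have key : ∀ u, gauge B u = gauge B (-u) := by
    intro u
    by_cases hu : u = 0
    · simp [hu]
    obtain ⟨v, hv⟩ : ∃ v, v ∉ Submodule.span ℝ {u} := by
      by_contra hc
      push Not at hc
      have htop : Submodule.span ℝ {u} = ⊤ := (Submodule.eq_top_iff').2 hc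
      have h1 := finrank_span_singleton (K := ℝ) hu
      rw [htop, finrank_top, hdim] at h1
      omega
    have path : ∀ c : ℝ, c ≠ 0 → ∀ t : ℝ, c • u + t • (v - c • u) ≠ 0 := by
      intro c hc t h
      by_cases ht : t = 0
      · subst ht
        simp [hc, hu] at h
      · apply hv
        rw [Submodule.mem_span_singleton]
        refine ⟨t⁻¹ * ((t - 1) * c), ?_⟩
        have : t • v = ((t - 1) * c) • u := by
          rw [← sub_eq_zero, ← h]; module
        rw [mul_smul, ← this, smul_smul, inv_mul_cancel₀ ht, one_smul]
    have e1 := ratio_eq B hBcomp hBconv h0 H u v (by simpa using path 1 one_ne_zero)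
    have e2 := ratio_eq B hBcomp hBconv h0 H (-u) v
      (by simpa using path (-1) (by norm_num))
    have e := e1.symm.trans e2
    rw [neg_neg] at e
    have g1 := gp u hu
    have g2 := gp (-u) (neg_ne_zero.2 hu)
    rw [div_eq_div_iff g2.ne' g1.ne'] at e
    nlinarith
  ext y
  rw [Set.mem_neg, hmem, hmem, key]
end

section
/- Let n ≥ 3 and let B ⊆ ℝ^n be a centrally symmetric convex body such that every closed convex subset of B is parkable in B. Then for every linear hyperplane H ⊆ ℝ^n there exists a one-dimensional linear subspace L ⊆ ℝ^n such that for every x ∈ ℝ^n with (H + x) ∩ B nonempty, the section (H + x) ∩ B has a center of symmetry lying on L. -/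
open Set Filter Topology MeasureTheory

set_option linter.unusedSectionVars false

section Aux

lemma aux_hasDeriv (y m : ℝ → ℝ)
    (h : ∀ a s, (1 + s * m a) * y a ≤ y (a + s)) :
    Monotone (fun x => m x * y x) ∧
    ∀ x, ContinuousAt (fun x => m x * y x) x → HasDerivAt y (m x * y x) x := by
  constructor
  · intro a b hab
    rcases hab.eq_or_lt with rfl | hlt
    · exact le_rfl
    have h1 := h a (b - a)
    have h2 := h b (a - b)
    simp only [add_sub_cancel] at h1 h2
    have h3 : 0 < b - a := sub_pos.2 hlt
    have : (b - a) * (m a * y a) ≤ (b - a) * (m b * y b) := by nlinarith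
    exact le_of_mul_le_mul_left this h3
  · intro x hx
    rw [hasDerivAt_iff_isLittleO, Asymptotics.isLittleO_iff]
    intro c hc
    have h4 := (Metric.continuousAt_iff'.1 hx) c hc
    filter_upwards [h4] with b hb
    rw [Real.dist_eq] at hb
    have h1 := h x (b - x)
    have h2 := h b (x - b)
    simp only [add_sub_cancel] at h1 h2
    simp only [smul_eq_mul, Real.norm_eq_abs]
    have h5 : |y b - y x - (b - x) * (m x * y x)| ≤ |(b - x) * (m b * y b - m x * y x)| := by
      refine abs_le_abs_of_nonneg ?_ ?_
      · nlinarith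
      · nlinarith
    rw [abs_mul] at h5
    nlinarith [abs_nonneg (b - x)]

lemma aux_ratio (y z m : ℝ → ℝ) (hyc : Continuous y) (hzc : Continuous z)
    (hz : ∀ a, 0 < z a)
    (h : ∀ a s, (1 + s * m a) * y a ≤ y (a + s))
    (h' : ∀ a s, (1 + s * m a) * z a ≤ z (a + s)) (a b : ℝ) :
    y a / z a = y b / z b := by
  obtain ⟨hm1, hd1⟩ := aux_hasDeriv y m h
  obtain ⟨hm2, hd2⟩ := aux_hasDeriv z m h'
  have key := MeasureTheory.integral_eq_of_hasDerivAt_off_countable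
    (fun x => y x / z x) (fun _ => (0:ℝ)) (a := a) (b := b)
    (hm1.countable_not_continuousAt.union hm2.countable_not_continuousAt)
    (hyc.div hzc (fun x => (hz x).ne')).continuousOn
    (by
      rintro x ⟨-, hx⟩
      simp only [mem_union, mem_ofPred_eq, not_or, not_not] at hx
      have := (hd1 x hx.1).div (hd2 x hx.2) (hz x).ne'
      have h0 : (m x * y x * z x - y x * (m x * z x)) / z x ^ 2 = 0 := by
        rw [div_eq_zero_iff]
        left
        ring
      rw [h0] at this
      exact this)
    (by simp)
  simp at key
  linarith

variable {E : Type*} [NormedAddCommGroup E] [NormedSpace ℝ E] [FiniteDimensional ℝ E]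

lemma aux_gauge (D : Set E) (hD : Absorbent ℝ D) (g l : E)
    (h : ∀ r s : ℝ, 0 < r → r • g + s • l ∈ D → r • g ∈ D) (s : ℝ) :
    gauge D g ≤ gauge D (g + s • l) := by
  refine le_of_forall_gt_imp_ge_of_dense fun a ha => ?_
  obtain ⟨b, hb, hba, x, hx, hxe⟩ := exists_lt_of_gauge_lt hD ha
  have hxe' : x = b⁻¹ • g + (b⁻¹ * s) • l := by
    simp only at hxe
    rw [mul_smul, ← smul_add, ← hxe, inv_smul_smul₀ hb.ne']
  rw [hxe'] at hx
  have := h _ _ (inv_pos.2 hb) hx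
  refine (gauge_le_of_mem hb.le ⟨_, this, ?_⟩).trans hba.le
  simp [smul_inv_smul₀ hb.ne']

lemma aux_cancel (B : Set E) (hBc : IsClosed B) (hB0 : (0:E) ∈ B) (y : E) (G : Submodule ℝ E)
    (hy : y ∈ G)
    (lam : ℝ) (h0 : 0 < lam) (h1 : lam ≤ 1)
    (h : ∀ k ∈ G, k ∈ B → lam • y + (1 - lam) • k ∈ B) : y ∈ B := by
  have hk : ∀ n : ℕ, (1 - (1 - lam) ^ n) • y ∈ B := by
    intro n
    induction n with
    | zero => simpa using hB0
    | succ n ih =>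
      have := h _ (G.smul_mem _ hy) ih
      convert this using 1
      rw [smul_smul, ← add_smul]
      congr 1
      ring
  have hl : Tendsto (fun n : ℕ => (1 - (1 - lam) ^ n) • y) atTop (𝓝 ((1 - 0 : ℝ) • y)) :=
    ((tendsto_pow_atTop_nhds_zero_of_lt_one (by linarith) (by linarith)).const_sub 1).smul_const y
  rw [sub_zero, one_smul] at hl
  exact hBc.mem_of_tendsto hl (Eventually.of_forall hk)

lemma aux_proj (B : Set E)
    (hBcomp : IsCompact B) (hBconv : Convex ℝ B) (hB0 : B ∈ 𝓝 (0:E))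
    (hBsym : ∀ x ∈ B, -x ∈ B)
    (hpark : ∀ C : Set E, C ⊆ B → C.Nonempty → IsClosed C → Convex ℝ C →
      ∃ v : E, (0 : E) ∈ (fun x => x + v) '' C ∧ (fun x => x + v) '' C ⊆ B)
    (G : Submodule ℝ E) (q : E) :
    ∃ l : E, l - q ∈ G ∧ ∀ g ∈ G, ∀ s : ℝ, g + s • l ∈ B → g ∈ B := by
  have hB0' := mem_of_mem_nhds hB0
  have hGc : IsClosed (G : Set E) := G.closed_of_finiteDimensional
  obtain ⟨s0, hs0, hs0q⟩ : ∃ s0 : ℝ, 0 < s0 ∧ s0 • q ∈ B := by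
    have : Tendsto (fun s : ℝ => s • q) (𝓝[>] 0) (𝓝 0) :=
      (Continuous.tendsto' (by fun_prop) 0 (0:E) (by simp)).mono_left inf_le_left
    have h2 := (this.eventually hB0).and (self_mem_nhdsWithin (s := Ioi (0:ℝ)))
    obtain ⟨s, hs, hs'⟩ := h2.exists
    exact ⟨s, hs', hs⟩
  have hsq : ∀ s : ℝ, 0 < s → s ≤ s0 → s • q ∈ B := by
    intro s hs hss
    have := hBconv.smul_mem_of_zero_mem hB0' hs0q (t := s / s0)
      ⟨by positivity, (div_le_one hs0).2 hss⟩
    rwa [smul_smul, div_mul_cancel₀ _ hs0.ne'] at this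
  let A : ℝ → Set E := fun s => {l | l - q ∈ G ∧ ∀ g ∈ G, g + s • l ∈ B → g ∈ B}
  -- equivalent description
  have hA : ∀ s, A s = {l | l - q ∈ G} ∩
      ⋂ x ∈ {x | x ∈ B ∧ x - s • q ∈ G}, {l | x - s • l ∈ B} := by
    intro s
    ext l
    simp only [A, mem_ofPred_eq, mem_inter_iff, mem_iInter]
    refine and_congr_right fun hl => ⟨fun h x hx => ?_, fun h g hg hgB => ?_⟩
    · refine h _ ?_ (by simpa using hx.1)
      have : x - s • l = (x - s • q) - s • (l - q) := by module
      rw [this]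
      exact G.sub_mem hx.2 (G.smul_mem _ hl)
    · have := h (g + s • l) ⟨hgB, ?_⟩
      · simpa using this
      · have : g + s • l - s • q = g + s • (l - q) := by module
        rw [this]
        exact G.add_mem hg (G.smul_mem _ hl)
  have hAcl : ∀ s, IsClosed (A s) := by
    intro s
    rw [hA]
    refine (hGc.preimage (by fun_prop : Continuous fun l : E => l - q)).inter ?_
    refine isClosed_biInter fun x _ => ?_
    exact hBcomp.isClosed.preimage (by fun_prop : Continuous fun l : E => x - s • l)
  have hAcomp : ∀ s, 0 < s → s ≤ s0 → IsCompact (A s) := by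
    intro s hs hss
    have hc : IsCompact ((fun x => s⁻¹ • (s • q - x)) '' B) :=
      hBcomp.image (by fun_prop)
    refine hc.of_isClosed_subset (hAcl s) ?_
    intro l hl
    rw [hA] at hl
    have := mem_iInter₂.1 hl.2 (s • q) ⟨hsq s hs hss, by simp⟩
    refine ⟨_, this, ?_⟩
    simp [smul_smul, inv_mul_cancel₀ hs.ne']
  have hAne : ∀ s, 0 < s → s ≤ s0 → (A s).Nonempty := by
    intro s hs hss
    obtain ⟨v, ⟨u, ⟨huB, huG⟩, huv⟩, hv⟩ := hpark ({x | x ∈ B ∧ x - s • q ∈ G}) (fun x hx => hx.1)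
      ⟨s • q, hsq s hs hss, by simp⟩
      (hBcomp.isClosed.inter (hGc.preimage (by fun_prop : Continuous fun l : E => l - s • q)))
      (by
        refine hBconv.inter ?_
        intro x hx y hy a b ha hb hab
        have : a • x + b • y - s • q = a • (x - s • q) + b • (y - s • q) := by
          obtain rfl : b = 1 - a := by linarith
          module
        change a • x + b • y - s • q ∈ G
        rw [this]
        exact G.add_mem (G.smul_mem _ hx) (G.smul_mem _ hy))
    refine ⟨s⁻¹ • u, ?_⟩
    rw [hA]
    refine ⟨?_, ?_⟩
    · have : s⁻¹ • u - q = s⁻¹ • (u - s • q) := by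
        rw [smul_sub, inv_smul_smul₀ hs.ne']
      change s⁻¹ • u - q ∈ G
      rw [this]
      exact G.smul_mem _ huG
    · refine mem_iInter₂.2 fun x hx => ?_
      have h1 := hv ⟨x, hx, rfl⟩
      have h2 : v = -u := by
        simp only at huv
        exact (neg_eq_of_add_eq_zero_right huv).symm
      simp only [h2] at h1
      simpa [smul_inv_smul₀ hs.ne', sub_eq_add_neg] using h1
  have hAmono : ∀ t s, 0 < t → t ≤ s → A t ⊆ A s := by
    intro t s ht hts l hl
    have hs : 0 < s := ht.trans_le hts
    refine ⟨hl.1, fun g hg hgB => ?_⟩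
    have hlam : t / s ≤ 1 := (div_le_one hs).2 hts
    refine aux_cancel B hBcomp.isClosed hB0' g G hg (t / s) (by positivity) hlam ?_
    intro k hk hkB
    refine hl.2 _ (G.add_mem (G.smul_mem _ hg) (G.smul_mem _ hk)) ?_
    have := hBconv hgB hkB (by positivity : 0 ≤ t / s) (sub_nonneg.2 hlam) (by ring)
    convert this using 1
    rw [smul_add, smul_smul, div_mul_cancel₀ _ hs.ne']
    abel
  have : (⋂ i : Ioc 0 s0, A i).Nonempty := by
    have : Nonempty (Ioc 0 s0) := ⟨⟨s0, hs0, le_rfl⟩⟩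
    apply IsCompact.nonempty_iInter_of_directed_nonempty_isCompact_isClosed
    · intro i j
      rcases le_total i j with hij | hij
      · exact ⟨i, Subset.rfl, hAmono _ _ i.2.1 hij⟩
      · exact ⟨j, hAmono _ _ j.2.1 hij, Subset.rfl⟩
    · exact fun i => hAne i i.2.1 i.2.2
    · exact fun i => hAcomp i i.2.1 i.2.2
    · exact fun i => hAcl i
  obtain ⟨l, hl⟩ := this
  rw [mem_iInter] at hl
  have hpos : ∀ s : ℝ, 0 < s → l ∈ A s := by
    intro s hs
    rcases le_total s s0 with h | h
    · exact hl ⟨s, hs, h⟩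
    · exact hAmono _ _ hs0 h (hl ⟨s0, hs0, le_rfl⟩)
  refine ⟨l, (hpos s0 hs0).1, fun g hg s hgs => ?_⟩
  rcases lt_trichotomy s 0 with h | h | h
  · have h1 := (hpos (-s) (by linarith)).2 (-g) (G.neg_mem hg) (by
      have := hBsym _ hgs
      convert this using 1
      module)
    simpa using hBsym _ h1
  · simpa [h] using hgs
  · exact (hpos s h).2 g hg hgs

lemma aux_deriv (B : Set E) (hBconv : Convex ℝ B) (hB0 : B ∈ 𝓝 (0:E)) (p : E)
    (hd : DifferentiableAt ℝ (gauge B) p) :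
    fderiv ℝ (gauge B) p p = gauge B p ∧ (∀ x, fderiv ℝ (gauge B) p x ≤ gauge B x) ∧
    ∀ l, (∀ s : ℝ, gauge B p ≤ gauge B (p + s • l)) → fderiv ℝ (gauge B) p l = 0 := by
  have hline : ∀ v : E, HasDerivAt (fun s : ℝ => gauge B (p + s • v))
      (fderiv ℝ (gauge B) p v) 0 := by
    intro v
    have h1 : HasDerivAt (fun s : ℝ => p + s • v) v 0 := by
      simpa using ((hasDerivAt_id (0:ℝ)).smul_const v).const_add p
    have h2 : HasFDerivAt (gauge B) (fderiv ℝ (gauge B) p) (p + (0:ℝ) • v) := by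
      simpa using hd.hasFDerivAt
    exact h2.comp_hasDerivAt (0:ℝ) h1
  refine ⟨?_, ?_, ?_⟩
  · have h1 := hline p
    have h2 : HasDerivAt (fun s : ℝ => (1 + s) * gauge B p) (gauge B p) 0 := by
      simpa using ((hasDerivAt_id (0:ℝ)).const_add 1).mul_const (gauge B p)
    refine h1.unique (h2.congr_of_eventuallyEq ?_)
    filter_upwards [lt_mem_nhds (show (-1:ℝ) < 0 by norm_num)] with s hs
    have : p + s • p = (1 + s) • p := by module
    rw [this, gauge_smul_of_nonneg (by linarith), smul_eq_mul]
  · intro x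
    have h1 := (hasDerivAt_iff_tendsto_slope.1 (hline x)).mono_left
      (nhdsWithin_mono (0:ℝ) (fun y (hy : y ∈ Ioi (0:ℝ)) => ne_of_gt hy))
    refine le_of_tendsto h1 ?_
    filter_upwards [self_mem_nhdsWithin] with s hs
    have hs' : 0 < s := hs
    rw [slope_def_field]
    simp only [zero_smul, add_zero, sub_zero]
    rw [div_le_iff₀ hs']
    have := gauge_add_le hBconv (absorbent_nhds_zero hB0) p (s • x)
    rw [gauge_smul_of_nonneg hs'.le, smul_eq_mul] at this
    linarith
  · intro l hl
    refine IsLocalMin.hasDerivAt_eq_zero ?_ (hline l)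
    refine Eventually.of_forall fun s => ?_
    simpa using hl s

lemma aux_lim (D : Set E) (hc : Convex ℝ D) (h0 : D ∈ 𝓝 (0:E)) (a c : E) :
    Tendsto (fun n : ℕ => gauge D (a + (n:ℝ) • c) / n) atTop (𝓝 (gauge D c)) := by
  have h1 : Tendsto (fun n : ℕ => gauge D (((n:ℝ)⁻¹) • a + c)) atTop (𝓝 (gauge D c)) := by
    refine ((continuous_gauge hc h0).tendsto _).comp ?_
    have : Tendsto (fun n : ℕ => ((n:ℝ)⁻¹) • a + c) atTop (𝓝 ((0:ℝ) • a + c)) :=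
      (tendsto_inv_atTop_nhds_zero_nat.smul_const a).add_const c
    simpa using this
  refine h1.congr' ?_
  filter_upwards [eventually_gt_atTop 0] with n hn
  have hn' : (0:ℝ) < n := by exact_mod_cast hn
  have : ((n:ℝ)⁻¹) • a + c = (n:ℝ)⁻¹ • (a + (n:ℝ) • c) := by
    rw [smul_add, inv_smul_smul₀ hn'.ne']
  rw [this, gauge_smul_of_nonneg (by positivity), smul_eq_mul]
  field_simp

lemma aux_sym (B : Set E)
    (hBcomp : IsCompact B) (hBconv : Convex ℝ B) (hB0 : B ∈ 𝓝 (0:E))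
    (hBsym : ∀ x ∈ B, -x ∈ B)
    (hpark : ∀ C : Set E, C ⊆ B → C.Nonempty → IsClosed C → Convex ℝ C →
      ∃ v : E, (0 : E) ∈ (fun x => x + v) '' C ∧ (fun x => x + v) '' C ⊆ B)
    (p : E) (hp : gauge B p = 1) (f : E →L[ℝ] ℝ) (hfp : f p = 1)
    (hf : ∀ l, (∀ s : ℝ, gauge B p ≤ gauge B (p + s • l)) → f l = 0)
    (a c : E) (hac : LinearIndependent ℝ ![a, c]) (ha : f a = 0) (hc : f c = 0)
    (t : ℝ) (ht : |t| < 1) (hx : t • p + c ∈ B) : t • p - c ∈ B := by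
  have hpair := LinearIndependent.pair_iff.1 hac
  let D : ℝ → Set E := fun t => {w | t • p + w ∈ B}
  have hDconv : ∀ t, Convex ℝ (D t) := fun t => by
    intro x hx y hy α β hα hβ hab
    have := hBconv hx hy hα hβ hab
    obtain rfl : β = 1 - α := by linarith
    change t • p + (α • x + (1 - α) • y) ∈ B
    convert this using 1
    module
  have hDcont : ∀ t : ℝ, Continuous (fun w : E => t • p + w) := fun t => by fun_prop
  have hDcl : ∀ t, IsClosed (D t) := fun t => hBcomp.isClosed.preimage (hDcont t)
  have hD0 : ∀ t : ℝ, |t| < 1 → D t ∈ 𝓝 (0:E) := by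
    intro t ht
    have h1 : gauge B (t • p) < 1 := by
      rcases abs_cases t with ⟨h, h'⟩ | ⟨h, h'⟩
      · rw [gauge_smul_of_nonneg h', hp, smul_eq_mul]; linarith
      · have : t • p = -((-t) • p) := by module
        rw [this, gauge_neg hBsym, gauge_smul_of_nonneg (by linarith), hp, smul_eq_mul]; linarith
    have h2 := mem_interior_iff_mem_nhds.1 ((gauge_lt_one_iff_mem_interior hBconv hB0).1 h1)
    have h3 := (hDcont t).tendsto 0
    simp only [add_zero] at h3
    exact h3 h2
  have hDb : ∀ t, Bornology.IsVonNBounded ℝ (D t) := by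
    intro t
    rw [NormedSpace.isVonNBounded_iff]
    have : IsCompact ((fun x => x - t • p) '' B) := hBcomp.image (by fun_prop)
    refine this.isBounded.subset ?_
    intro w hw
    exact ⟨_, hw, by simp⟩
  -- the projection directions
  have hm : ∀ τ : ℝ, ∃ m : ℝ, ∀ r α s : ℝ,
      α • p + r • (a + τ • c) + s • (c - m • (a + τ • c)) ∈ B → α • p + r • (a + τ • c) ∈ B := by
    intro τ
    obtain ⟨l, hl, hlB⟩ := aux_proj B hBcomp hBconv hB0 hBsym hpark
      (Submodule.span ℝ {p, a + τ • c}) c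
    obtain ⟨x, y, hxy⟩ := Submodule.mem_span_pair.1 hl
    have hl' : l = c + (x • p + y • (a + τ • c)) := by rw [hxy]; abel
    have hfl : f l = 0 := by
      refine hf l fun s => ?_
      refine aux_gauge B (absorbent_nhds_zero hB0) p l (fun r s _ hrs => ?_) s
      exact hlB _ (Submodule.smul_mem _ _ (Submodule.subset_span (by simp))) s hrs
    have hx0 : x = 0 := by
      rw [hl'] at hfl
      simpa [ha, hc, hfp] using hfl
    refine ⟨-y, fun r α s h => hlB _ ?_ s ?_⟩
    · exact Submodule.mem_span_pair.2 ⟨α, r, rfl⟩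
    · convert h using 2
      rw [hl', hx0]
      module
  choose m hm using hm
  have hineq : ∀ t : ℝ, |t| < 1 → ∀ τ s : ℝ,
      (1 + s * m τ) * gauge (D t) (a + τ • c) ≤ gauge (D t) (a + (τ + s) • c) := by
    intro t ht τ s
    rcases le_or_gt (1 + s * m τ) 0 with h | h
    · exact (mul_nonpos_of_nonpos_of_nonneg h (gauge_nonneg _)).trans (gauge_nonneg _)
    · have h1 := aux_gauge (D t) (absorbent_nhds_zero (hD0 t ht)) (a + τ • c)
        (c - m τ • (a + τ • c)) (by
          intro r s _ hrs
          refine hm τ r t s ?_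
          have : t • p + (r • (a + τ • c) + s • (c - m τ • (a + τ • c))) ∈ B := hrs
          rwa [← add_assoc] at this) (s / (1 + s * m τ))
      have h2 : a + (τ + s) • c = (1 + s * m τ) •
          (a + τ • c + (s / (1 + s * m τ)) • (c - m τ • (a + τ • c))) := by
        rw [smul_add, smul_smul, mul_div_cancel₀ _ h.ne']
        module
      rw [h2, gauge_smul_of_nonneg h.le, smul_eq_mul]
      exact mul_le_mul_of_nonneg_left h1 h.le
  have hne : ∀ τ : ℝ, a + τ • c ≠ 0 := by
    intro τ h
    have := hpair 1 τ (by simpa using h)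
    exact one_ne_zero this.1
  have hcne : c ≠ 0 := by
    intro h
    have := hpair 0 1 (by simp [h])
    exact one_ne_zero this.2
  have hpos : ∀ t : ℝ, |t| < 1 → ∀ w, w ≠ 0 → 0 < gauge (D t) w := fun t ht w hw =>
    (gauge_pos (absorbent_nhds_zero (hD0 t ht)) (hDb t)).2 hw
  have hcont : ∀ t : ℝ, |t| < 1 → Continuous (fun τ : ℝ => gauge (D t) (a + τ • c)) := fun t ht =>
    (continuous_gauge (hDconv t) (hD0 t ht)).comp (by fun_prop)
  have h00 : |(0:ℝ)| < 1 := by simp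
  have hratio : ∀ τ : ℝ, gauge (D t) (a + τ • c) =
      (gauge (D t) (a + (0:ℝ) • c) / gauge (D 0) (a + (0:ℝ) • c)) * gauge (D 0) (a + τ • c) := by
    intro τ
    have := aux_ratio (fun τ => gauge (D t) (a + τ • c)) (fun τ => gauge (D 0) (a + τ • c)) m
      (hcont t ht) (hcont 0 h00) (fun τ => hpos 0 h00 _ (hne τ)) (hineq t ht) (hineq 0 h00) τ 0
    rw [← this, div_mul_cancel₀]
    exact (hpos 0 h00 _ (hne τ)).ne'
  set K := gauge (D t) (a + (0:ℝ) • c) / gauge (D 0) (a + (0:ℝ) • c) with hK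
  have e1 : gauge (D t) c = K * gauge (D 0) c := by
    refine tendsto_nhds_unique (aux_lim (D t) (hDconv t) (hD0 t ht) a c) ?_
    refine ((aux_lim (D 0) (hDconv 0) (hD0 0 h00) a c).const_mul K).congr fun n => ?_
    rw [hratio n, mul_div_assoc]
  have e2 : gauge (D t) (-c) = K * gauge (D 0) (-c) := by
    refine tendsto_nhds_unique (aux_lim (D t) (hDconv t) (hD0 t ht) a (-c)) ?_
    refine ((aux_lim (D 0) (hDconv 0) (hD0 0 h00) a (-c)).const_mul K).congr fun n => ?_
    have := hratio (-n)
    rw [neg_smul, ← smul_neg] at this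
    rw [this, mul_div_assoc]
  have e3 : gauge (D 0) (-c) = gauge (D 0) c := by
    refine gauge_neg ?_ c
    intro x hx
    have hx' : (0:ℝ) • p + x ∈ B := hx
    change (0:ℝ) • p + -x ∈ B
    simpa using hBsym _ hx'
  have e4 : gauge (D t) (-c) ≤ 1 := by
    rw [e2, e3, ← e1]
    exact gauge_le_one_of_mem hx
  rw [gauge_le_one_iff_mem_closure (hDconv t) (hD0 t ht), (hDcl t).closure_eq] at e4
  have e5 : t • p + -c ∈ B := e4
  rwa [← sub_eq_add_neg] at e5

lemma aux_smooth (B : Set E)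
    (hBcomp : IsCompact B) (hBconv : Convex ℝ B) (hB0 : B ∈ 𝓝 (0:E))
    (hBsym : ∀ x ∈ B, -x ∈ B)
    (hpark : ∀ C : Set E, C ⊆ B → C.Nonempty → IsClosed C → Convex ℝ C →
      ∃ v : E, (0 : E) ∈ (fun x => x + v) '' C ∧ (fun x => x + v) '' C ⊆ B)
    (hdim : 3 ≤ Module.finrank ℝ E)
    (p : E) (hp : p ≠ 0) (hd : DifferentiableAt ℝ (gauge B) p) :
    ∀ x ∈ B, -x + (2 * fderiv ℝ (gauge B) p x / gauge B p) • p ∈ B := by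
  obtain ⟨h1, h2, h3⟩ := aux_deriv B hBconv hB0 p hd
  set f := fderiv ℝ (gauge B) p with hf
  have hN : 0 < gauge B p := (gauge_pos (absorbent_nhds_zero hB0)
    ((NormedSpace.isVonNBounded_iff ℝ).2 hBcomp.isBounded)).2 hp
  set N := gauge B p with hNdef
  have hp1 : gauge B (N⁻¹ • p) = 1 := by
    rw [gauge_smul_of_nonneg (by positivity), smul_eq_mul, inv_mul_cancel₀ hN.ne']
  have hfp1 : f (N⁻¹ • p) = 1 := by
    rw [map_smul, h1, smul_eq_mul, inv_mul_cancel₀ hN.ne']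
  have hf1 : ∀ l, (∀ s : ℝ, gauge B (N⁻¹ • p) ≤ gauge B (N⁻¹ • p + s • l)) → f l = 0 := by
    intro l hl
    refine h3 l fun s => ?_
    have h4 := hl (N⁻¹ * s)
    rw [mul_smul, ← smul_add, gauge_smul_of_nonneg (by positivity),
      gauge_smul_of_nonneg (by positivity), smul_eq_mul, smul_eq_mul] at h4
    exact le_of_mul_le_mul_left h4 (by positivity)
  have hfB : ∀ x ∈ B, |f x| ≤ 1 := by
    intro x hx
    rw [abs_le]
    constructor
    · have := (h2 (-x)).trans (gauge_le_one_of_mem (hBsym x hx))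
      rw [map_neg] at this
      linarith
    · exact (h2 x).trans (gauge_le_one_of_mem hx)
  -- the open case
  have hopen : ∀ x ∈ B, |f x| < 1 → -x + (2 * f x / N) • p ∈ B := by
    intro x hx hfx
    by_cases hc : x - f x • (N⁻¹ • p) = 0
    · have : -x + (2 * f x / N) • p = x := by
        have h5 : x = f x • (N⁻¹ • p) := sub_eq_zero.1 hc
        have h6 : (2 * f x / N) • p = (2:ℝ) • (f x • (N⁻¹ • p)) := by
          match_scalars; ring
        rw [h6, ← h5]; module
      rw [this]; exact hx
    · have hker : f (x - f x • (N⁻¹ • p)) = 0 := by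
        rw [map_sub, map_smul, hfp1, smul_eq_mul]; ring
      obtain ⟨a, ha, hac⟩ : ∃ a : E, f a = 0 ∧
          LinearIndependent ℝ ![a, x - f x • (N⁻¹ • p)] := by
        by_contra hcon
        push Not at hcon
        have hle : LinearMap.ker (f : E →ₗ[ℝ] ℝ) ≤ Submodule.span ℝ {x - f x • (N⁻¹ • p)} := by
          intro a ha
          have h7 := hcon a ha
          rw [LinearIndependent.pair_symm_iff, LinearIndependent.pair_iff' hc] at h7
          push Not at h7
          obtain ⟨r, hr⟩ := h7
          exact Submodule.mem_span_singleton.2 ⟨r, hr⟩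
        have h8 := Submodule.finrank_mono hle
        have h9 := finrank_span_singleton (K := ℝ) hc
        have h10 := LinearMap.finrank_range_add_finrank_ker (f : E →ₗ[ℝ] ℝ)
        have h11 := Submodule.finrank_le (LinearMap.range (f : E →ₗ[ℝ] ℝ))
        simp only [Module.finrank_self] at h11
        omega
      have := aux_sym B hBcomp hBconv hB0 hBsym hpark (N⁻¹ • p) hp1 f hfp1 hf1 a _ hac ha hker
        (f x) hfx (by simpa using hx)
      convert this using 1
      have h6 : (2 * f x / N) • p = (2:ℝ) • (f x • (N⁻¹ • p)) := by
        match_scalars; ring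
      rw [h6]; module
  intro x hx
  have hl : Tendsto (fun r : ℝ => r • (-x + (2 * f x / N) • p)) (𝓝[<] 1)
      (𝓝 (-x + (2 * f x / N) • p)) :=
    (Continuous.tendsto' (by fun_prop) 1 _ (by simp)).mono_left inf_le_left
  refine hBcomp.isClosed.mem_of_tendsto hl ?_
  filter_upwards [Ioo_mem_nhdsLT one_pos] with r hr
  have hrx : r • x ∈ B := hBconv.smul_mem_of_zero_mem (mem_of_mem_nhds hB0) hx ⟨hr.1.le, hr.2.le⟩
  have := hopen (r • x) hrx (by
    rw [map_smul, smul_eq_mul, abs_mul, abs_of_pos hr.1]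
    have := hfB x hx
    nlinarith [hr.1, hr.2, abs_nonneg (f x)])
  convert this using 1
  rw [map_smul, smul_eq_mul]
  module

lemma aux_refl [MeasurableSpace E] [BorelSpace E] (B : Set E)
    (hBcomp : IsCompact B) (hBconv : Convex ℝ B) (hB0 : B ∈ 𝓝 (0:E))
    (hBsym : ∀ x ∈ B, -x ∈ B)
    (hpark : ∀ C : Set E, C ⊆ B → C.Nonempty → IsClosed C → Convex ℝ C →
      ∃ v : E, (0 : E) ∈ (fun x => x + v) '' C ∧ (fun x => x + v) '' C ⊆ B)
    (hdim : 3 ≤ Module.finrank ℝ E) (p : E) (hp : p ≠ 0) :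
    ∃ φ : E →L[ℝ] ℝ, φ p = 1 ∧ ∀ x ∈ B, -x + (2 * φ x) • p ∈ B := by
  have hNpos : ∀ q : E, q ≠ 0 → 0 < gauge B q := fun q hq =>
    (gauge_pos (absorbent_nhds_zero hB0)
      ((NormedSpace.isVonNBounded_iff ℝ).2 hBcomp.isBounded)).2 hq
  have hNc := continuous_gauge hBconv hB0
  obtain ⟨K, hK⟩ := hBconv.lipschitz_gauge hB0
  have hae := hK.ae_differentiableAt (μ := (Measure.addHaar : Measure E))
  have hdense := Measure.dense_of_ae hae
  obtain ⟨q, hq, hqp⟩ := mem_closure_iff_seq_limit.1 (hdense p)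
  have hbd : ∀ n, fderiv ℝ (gauge B) (q n) ∈ Metric.closedBall (0 : E →L[ℝ] ℝ) K := by
    intro n
    rw [mem_closedBall_zero_iff]
    exact norm_fderiv_le_of_lipschitz ℝ hK
  obtain ⟨f, -, σ, hσ, hf⟩ := (isCompact_closedBall (0 : E →L[ℝ] ℝ) K).tendsto_subseq hbd
  have hqσ : Tendsto (fun n => q (σ n)) atTop (𝓝 p) := hqp.comp hσ.tendsto_atTop
  have hNσ : Tendsto (fun n => gauge B (q (σ n))) atTop (𝓝 (gauge B p)) :=
    (hNc.tendsto p).comp hqσ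
  have hfσ : ∀ x, Tendsto (fun n => fderiv ℝ (gauge B) (q (σ n)) x) atTop (𝓝 (f x)) := fun x =>
    ((ContinuousLinearMap.apply ℝ ℝ x).continuous.tendsto f).comp hf
  have hNp := hNpos p hp
  have hqne : ∀ᶠ n in atTop, q (σ n) ≠ 0 := hqσ.eventually_ne hp
  have hfp : f p = gauge B p := by
    have h1 : Tendsto (fun n => fderiv ℝ (gauge B) (q (σ n)) (q (σ n))) atTop (𝓝 (f p)) :=
      (isBoundedBilinearMap_apply.continuous.tendsto (f, p)).comp (hf.prodMk_nhds hqσ)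
    refine tendsto_nhds_unique h1 (hNσ.congr fun n => ?_)
    exact (aux_deriv B hBconv hB0 _ (hq (σ n))).1.symm
  refine ⟨(gauge B p)⁻¹ • f, ?_, fun x hx => ?_⟩
  · simp [hfp, inv_mul_cancel₀ hNp.ne']
  · have hl : Tendsto (fun n => -x + (2 * fderiv ℝ (gauge B) (q (σ n)) x / gauge B (q (σ n))) •
        q (σ n)) atTop (𝓝 (-x + (2 * f x / gauge B p) • p)) :=
      ((((hfσ x).const_mul 2).div hNσ hNp.ne').smul hqσ).const_add _
    have h2 : -x + (2 * f x / gauge B p) • p ∈ B := by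
      refine hBcomp.isClosed.mem_of_tendsto hl ?_
      filter_upwards [hqne] with n hn
      exact aux_smooth B hBcomp hBconv hB0 hBsym hpark hdim _ hn (hq (σ n)) x hx
    convert h2 using 3
    simp only [smul_apply, smul_eq_mul]
    ring

lemma aux_final [MeasurableSpace E] [BorelSpace E] (B : Set E)
    (hBcomp : IsCompact B) (hBconv : Convex ℝ B) (hB0 : B ∈ 𝓝 (0:E))
    (hBsym : ∀ x ∈ B, -x ∈ B)
    (hpark : ∀ C : Set E, C ⊆ B → C.Nonempty → IsClosed C → Convex ℝ C →
      ∃ v : E, (0 : E) ∈ (fun x => x + v) '' C ∧ (fun x => x + v) '' C ⊆ B)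
    (hdim : 3 ≤ Module.finrank ℝ E) (f : E →L[ℝ] ℝ) (hf : f ≠ 0) :
    ∃ p : E, p ≠ 0 ∧ f p ≠ 0 ∧ ∀ x ∈ B, -x + (2 * (f x / f p)) • p ∈ B := by
  let μ : Measure E := Measure.addHaar
  have hint : ∀ F : E → E, Continuous F → IntegrableOn F B μ := fun F hF =>
    hF.continuousOn.integrableOn_compact hBcomp
  have hint' : ∀ F : E → ℝ, Continuous F → IntegrableOn F B μ := fun F hF =>
    hF.continuousOn.integrableOn_compact hBcomp
  have happly : ∀ (g h : E →L[ℝ] ℝ), h (∫ x in B, g x • x ∂μ) = ∫ x in B, g x * h x ∂μ := by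
    intro g h
    rw [← ContinuousLinearMap.integral_comp_comm h (hint _ (by fun_prop))]
    simp
  -- positive definiteness
  have hposdef : ∀ g : E →L[ℝ] ℝ, ∫ x in B, g x * g x ∂μ = 0 → g = 0 := by
    intro g hg
    by_contra hne
    obtain ⟨v, hv⟩ : ∃ v, g v ≠ 0 := by
      by_contra h
      push Not at h
      exact hne (ContinuousLinearMap.ext h)
    have h1 := (setIntegral_eq_zero_iff_of_nonneg_ae
      (Eventually.of_forall fun x => mul_self_nonneg (g x)) (hint' _ (by fun_prop))).1 hg
    have h2 : ∀ᵐ x ∂(μ.restrict (interior B)), g x * g x = 0 :=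
      ae_mono (Measure.restrict_mono interior_subset le_rfl) h1
    have h3 : EqOn (fun x => g x * g x) 0 (interior B) :=
      Measure.eqOn_open_of_ae_eq h2 isOpen_interior (by fun_prop) (by fun_prop)
    have h4 : Tendsto (fun s : ℝ => s • v) (𝓝[>] 0) (𝓝 0) :=
      (Continuous.tendsto' (by fun_prop) 0 (0:E) (by simp)).mono_left inf_le_left
    have h5 := (h4.eventually (interior_mem_nhds.2 hB0)).and (self_mem_nhdsWithin (s := Ioi (0:ℝ)))
    obtain ⟨s, hs, hs'⟩ := h5.exists
    have h6 := h3 hs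
    have hs'' : s ≠ 0 := ne_of_gt hs'
    simp [hs'', hv] at h6
  let p : E := ∫ x in B, f x • x ∂μ
  have hfp : f p ≠ 0 := by
    intro h
    exact hf (hposdef f (by rw [← happly f f]; exact h))
  have hp : p ≠ 0 := by
    intro h
    rw [h, map_zero] at hfp
    exact hfp rfl
  refine ⟨p, hp, hfp, ?_⟩
  obtain ⟨φ, hφp, hφ⟩ := aux_refl B hBcomp hBconv hB0 hBsym hpark hdim p hp
  let R : E →L[ℝ] E := -ContinuousLinearMap.id ℝ E + (2:ℝ) • φ.smulRight p
  have hR : ∀ x, R x = -x + (2 * φ x) • p := by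
    intro x
    simp [R, mul_smul]
  have hRR : ∀ x, R (R x) = x := by
    intro x
    rw [hR (R x), hR x]
    simp only [map_add, map_neg, map_smul, hφp, smul_eq_mul]
    module
  have hRp : R p = p := by
    rw [hR, hφp]; module
  have hRB : R ⁻¹' B = B := by
    ext x
    constructor
    · intro hx
      have := hφ _ hx
      rwa [← hR, hRR] at this
    · intro hx
      have := hφ x hx
      rwa [← hR] at this
  have hdet : LinearMap.det (R : E →ₗ[ℝ] E) * LinearMap.det (R : E →ₗ[ℝ] E) = 1 := by
    rw [← LinearMap.det_comp]
    have : (R : E →ₗ[ℝ] E) ∘ₗ (R : E →ₗ[ℝ] E) = LinearMap.id := by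
      ext x
      exact hRR x
    rw [this, LinearMap.det_id]
  have hmp : MeasurePreserving R μ μ := by
    refine ⟨R.continuous.measurable, ?_⟩
    have h1 := Measure.map_linearMap_addHaar_eq_smul_addHaar μ
      (f := (R : E →ₗ[ℝ] E)) (by intro h; rw [h] at hdet; simp at hdet)
    have h2 : |(LinearMap.det (R : E →ₗ[ℝ] E))⁻¹| = 1 := by
      rcases mul_self_eq_one_iff.1 hdet with h | h <;> rw [h] <;> simp
    rw [h2] at h1
    simpa using h1
  have hemb : MeasurableEmbedding R := by
    let e : E ≃ₜ E := ⟨⟨R, R, hRR, hRR⟩, R.continuous, R.continuous⟩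
    exact e.measurableEmbedding
  have h1 : ∫ x in B, f (R x) • x ∂μ = p := by
    have h2 := hmp.setIntegral_preimage_emb hemb (fun y => f y • R y) B
    rw [hRB] at h2
    simp only [hRR] at h2
    rw [h2]
    have h3 := ContinuousLinearMap.integral_comp_comm R (hint (fun x => f x • x) (by fun_prop))
    simp only [map_smul] at h3
    rw [h3]
    exact hRp
  let ψ : E →L[ℝ] ℝ := f.comp R - f
  have hψ : ψ = 0 := by
    apply hposdef
    rw [← happly ψ ψ]
    have : ∫ x in B, ψ x • x ∂μ = 0 := by
      simp only [ψ, sub_apply, ContinuousLinearMap.comp_apply, sub_smul]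
      rw [integral_sub (hint _ (by fun_prop)) (hint _ (by fun_prop)), h1]
      exact sub_self p
    rw [this, map_zero]
  have hφf : ∀ x, f x / f p = φ x := by
    intro x
    have h2 : f (R x) - f x = 0 := by
      have := congrArg (fun g : E →L[ℝ] ℝ => g x) hψ
      simpa [ψ] using this
    rw [hR, map_add, map_neg, map_smul, smul_eq_mul] at h2
    rw [div_eq_iff hfp]
    linarith
  intro x hx
  rw [hφf]
  exact hφ x hx

end Aux

/-- For a centrally symmetric convex body `B ⊆ ℝⁿ` (n ≥ 3) all of whose closed
convex subsets are parkable, every family of parallel hyperplane sections of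
`B` has centers of symmetry, and these centers lie on a single line through the
origin. -/
theorem stmt_10 (n : ℕ) (hn : 3 ≤ n) (B : Set (EuclideanSpace ℝ (Fin n)))
    (hBcomp : IsCompact B) (hBconv : Convex ℝ B)
    (hBint : (interior B).Nonempty) (hB0 : (0 : EuclideanSpace ℝ (Fin n)) ∈ B)
    (hBsym : B = -B)
    (hpark : ∀ C : Set (EuclideanSpace ℝ (Fin n)),
      C ⊆ B → C.Nonempty → IsClosed C → Convex ℝ C →
      ∃ v : EuclideanSpace ℝ (Fin n),
        (0 : EuclideanSpace ℝ (Fin n)) ∈ (fun x => x + v) '' C ∧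
        (fun x => x + v) '' C ⊆ B) :
    ∀ H : Submodule ℝ (EuclideanSpace ℝ (Fin n)), Module.finrank ℝ H = n - 1 →
      ∃ L : Submodule ℝ (EuclideanSpace ℝ (Fin n)), Module.finrank ℝ L = 1 ∧
        ∀ x : EuclideanSpace ℝ (Fin n),
          (((fun h => h + x) '' (H : Set (EuclideanSpace ℝ (Fin n)))) ∩ B).Nonempty →
          ∃ p ∈ L,
            ((fun h => h + x) '' (H : Set (EuclideanSpace ℝ (Fin n)))) ∩ B
              = (fun y => (2 : ℝ) • p - y) ''
                  (((fun h => h + x) '' (H : Set (EuclideanSpace ℝ (Fin n)))) ∩ B) := by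
  intro H hH
  have hsym : ∀ x ∈ B, -x ∈ B := fun x hx => by
    rw [hBsym] at hx
    exact hx
  have hB0n : B ∈ 𝓝 (0 : EuclideanSpace ℝ (Fin n)) := by
    rw [← mem_interior_iff_mem_nhds]
    obtain ⟨x, hx⟩ := hBint
    have hx' : -x ∈ interior B := by
      rw [mem_interior_iff_mem_nhds] at hx ⊢
      have h1 := (continuous_neg.tendsto (-x)) (by rwa [neg_neg])
      filter_upwards [h1] with y hy
      simpa using hsym _ hy
    have := hBconv.interior hx hx' (by norm_num : (0:ℝ) ≤ 1/2) (by norm_num : (0:ℝ) ≤ 1/2)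
      (by norm_num)
    simpa using this
  have hfin : Module.finrank ℝ (EuclideanSpace ℝ (Fin n)) = n := by simp
  have hlt : H < ⊤ := by
    rw [lt_top_iff_ne_top]
    rintro rfl
    rw [finrank_top, hfin] at hH
    omega
  obtain ⟨f0, hf0, hHf⟩ := Submodule.exists_le_ker_of_lt_top H hlt
  have hker : H = LinearMap.ker f0 := by
    refine Submodule.eq_of_le_of_finrank_le hHf ?_
    have h1 : Module.finrank ℝ (LinearMap.ker f0) < n := by
      refine lt_of_lt_of_eq (Submodule.finrank_lt ?_) hfin
      rw [Ne, LinearMap.ker_eq_top]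
      exact hf0
    omega
  let f := LinearMap.toContinuousLinearMap f0
  have hff : ∀ x, f x = f0 x := fun x => rfl
  have hf : f ≠ 0 := by
    intro h
    apply hf0
    ext x
    rw [← hff, h]; simp
  obtain ⟨p, hp, hfp, hB⟩ := aux_final B hBcomp hBconv hB0n hsym hpark (by rw [hfin]; exact hn) f hf
  refine ⟨Submodule.span ℝ {p}, finrank_span_singleton hp, fun x _ => ?_⟩
  refine ⟨(f x / f p) • p, Submodule.smul_mem _ _ (Submodule.mem_span_singleton_self p), ?_⟩
  have hmem : ∀ y, y ∈ (fun h => h + x) '' (H : Set (EuclideanSpace ℝ (Fin n))) ↔ f y = f x := by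
    intro y
    constructor
    · rintro ⟨h, hh, rfl⟩
      have : f0 h = 0 := hHf hh
      simp [hff, this]
    · intro h
      refine ⟨y - x, ?_, by simp⟩
      rw [SetLike.mem_coe, hker, LinearMap.mem_ker, map_sub, ← hff, ← hff, h, sub_self]
  have hstep : ∀ y ∈ (fun h => h + x) '' (H : Set (EuclideanSpace ℝ (Fin n))) ∩ B,
      (2:ℝ) • ((f x / f p) • p) - y ∈
        (fun h => h + x) '' (H : Set (EuclideanSpace ℝ (Fin n))) ∩ B := by
    rintro y ⟨hy, hyB⟩
    rw [hmem] at hy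
    refine ⟨(hmem _).2 ?_, ?_⟩
    · rw [map_sub, map_smul, map_smul, smul_eq_mul, smul_eq_mul, div_mul_cancel₀ _ hfp, hy]
      ring
    · have := hB y hyB
      rw [hy] at this
      convert this using 1
      module
  ext y
  constructor
  · intro hy
    exact ⟨_, hstep y hy, by simp⟩
  · rintro ⟨z, hz, rfl⟩
    exact hstep z hz
end

section
/- Let B ⊆ ℝ³ be a centrally symmetric convex body such that every closed convex subset of B is parkable in B. Then B has the dual Blaschke property: for every two-dimensional linear subspace H ⊆ ℝ³ there exists a nonzero vector u ∈ ℝ³ such that every point p ∈ H ∩ ∂B lies on a B-supporting line with direction u, i.e. p + t•u ∉ int B for all t ∈ ℝ. -/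
/-- Parking a section at level `ε` gives a projection-type inclusion at every higher level. -/
theorem park_aux {E : Type*} [NormedAddCommGroup E] [NormedSpace ℝ E] (B : Set E)
    (hcl : IsClosed B) (hc : Convex ℝ B) (h0 : (0 : E) ∈ B) (f : E →ₗ[ℝ] ℝ) (u : E)
    (hu : f u = 1) (ε : ℝ) (hε : 0 < ε)
    (h : ∀ x ∈ B, f x = ε → x - ε • u ∈ B) (x : E) (hx : x ∈ B) (hm : ε ≤ f x) :
    x - f x • u ∈ B := by
  have hmp : 0 < f x := lt_of_lt_of_le hε hm
  set δ : ℝ := ε / f x with hδ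
  have hδ0 : 0 < δ := by positivity
  have hδ1 : δ ≤ 1 := (div_le_one hmp).2 hm
  have hδm : δ * f x = ε := by rw [hδ]; field_simp
  set w : E := x - f x • u with hw
  have hfw : f w = 0 := by simp [hw, hu]
  have key : ∀ n : ℕ, (1 - (1 - δ) ^ n) • w ∈ B := by
    intro n
    induction n with
    | zero => simpa using h0
    | succ k ih =>
      have h1 : (1 - δ) • ((1 - (1 - δ) ^ k) • w) + δ • x ∈ B :=
        hc ih hx (by linarith) hδ0.le (by ring)
      have h2 := h _ h1 (by simp [hfw, hδm])
      convert h2 using 1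
      have hx' : x = w + f x • u := by simp [hw]
      have : δ • x = δ • w + ε • u := by
        rw [← hδm, mul_smul, ← smul_add, ← hx']
      rw [this, pow_succ]
      module
  have hlim : Filter.Tendsto (fun n : ℕ => (1 - (1 - δ) ^ n) • w) Filter.atTop (nhds w) := by
    have h1 : Filter.Tendsto (fun n : ℕ => (1 - δ) ^ n) Filter.atTop (nhds 0) :=
      tendsto_pow_atTop_nhds_zero_of_lt_one (by linarith) (by linarith)
    simpa using (h1.const_sub 1).smul_const w
  exact hcl.mem_of_tendsto hlim (Filter.Eventually.of_forall key)

/-- A centrally symmetric convex body `B ⊆ ℝ³` all of whose closed convex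
subsets are parkable in `B` has the dual Blaschke property. -/
theorem stmt_11 (B : Set (EuclideanSpace ℝ (Fin 3)))
    (hBcomp : IsCompact B) (hBconv : Convex ℝ B)
    (hBint : (interior B).Nonempty) (hB0 : (0 : EuclideanSpace ℝ (Fin 3)) ∈ B)
    (hBsym : B = -B)
    (hpark : ∀ C : Set (EuclideanSpace ℝ (Fin 3)),
      C ⊆ B → C.Nonempty → IsClosed C → Convex ℝ C →
      ∃ v : EuclideanSpace ℝ (Fin 3),
        (0 : EuclideanSpace ℝ (Fin 3)) ∈ (fun x => x + v) '' C ∧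
        (fun x => x + v) '' C ⊆ B) :
    ∀ H : Submodule ℝ (EuclideanSpace ℝ (Fin 3)), Module.finrank ℝ H = 2 →
      ∃ u : EuclideanSpace ℝ (Fin 3), u ≠ 0 ∧
        ∀ p ∈ (H : Set (EuclideanSpace ℝ (Fin 3))) ∩ frontier B,
          ∀ t : ℝ, p + t • u ∉ interior B := by
  intro H hH
  have hneg : ∀ x ∈ B, -x ∈ B := by
    intro x hx
    rw [hBsym] at hx
    simpa using hx
  have hcl : IsClosed B := hBcomp.isClosed
  have hint0 : (0 : EuclideanSpace ℝ (Fin 3)) ∈ interior B := by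
    obtain ⟨x, hx⟩ := hBint
    have := hBconv.combo_interior_self_mem_interior hx (hneg x (interior_subset hx))
      (a := 1 / 2) (b := 1 / 2) (by norm_num) (by norm_num) (by norm_num)
    simpa using this
  have hHlt : H < ⊤ := by
    rw [lt_top_iff_ne_top]
    rintro rfl
    rw [finrank_top] at hH
    simp at hH
  obtain ⟨f, hf, hfH⟩ := Submodule.exists_le_ker_of_lt_top H hHlt
  have hfc : Continuous f := f.continuous_of_finiteDimensional
  -- a point of `B` at a positive level
  obtain ⟨e, heB, hea⟩ : ∃ e ∈ B, 0 < f e := by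
    obtain ⟨g, hg⟩ : ∃ g, 0 < f g := by
      by_contra! hcon
      apply hf
      ext1 g
      have h1 := hcon g
      have h2 := hcon (-g)
      simp only [map_neg] at h2
      simp only [LinearMap.zero_apply]
      linarith
    have hT : Filter.Tendsto (fun s : ℝ => s • g) (nhdsWithin 0 (Set.Ioi 0)) (nhds 0) := by
      have : Continuous fun s : ℝ => s • g := by fun_prop
      have h := this.tendsto 0
      simp only [zero_smul] at h
      exact h.mono_left nhdsWithin_le_nhds
    have h1 := hT.eventually (mem_interior_iff_mem_nhds.1 hint0)
    obtain ⟨s, hs, hs0⟩ := (h1.and self_mem_nhdsWithin).exists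
    refine ⟨s • g, hs, ?_⟩
    have hs0' : 0 < s := hs0
    simp only [map_smul, smul_eq_mul]
    positivity
  set a := f e with ha
  let ε : ℕ → ℝ := fun n => a / (n + 1)
  have hε : ∀ n, 0 < ε n := fun n => by positivity
  have hεa : ∀ n, ε n ≤ a := fun n => by
    apply div_le_self hea.le
    linarith [(Nat.cast_nonneg n : (0 : ℝ) ≤ n)]
  let V : ℕ → Set (EuclideanSpace ℝ (Fin 3)) := fun n =>
    {u | f u = 1 ∧ ∀ x ∈ B, ε n ≤ f x → x - f x • u ∈ B}
  have hVcl : ∀ n, IsClosed (V n) := by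
    intro n
    have : V n = {u | f u = 1} ∩ ⋂ x ∈ B, ⋂ (_ : ε n ≤ f x), {u | x - f x • u ∈ B} := by
      ext u
      simp [V]
    rw [this]
    refine (isClosed_eq hfc continuous_const).inter ?_
    refine isClosed_biInter fun x _ => isClosed_iInter fun _ => ?_
    exact hcl.preimage (f := fun u => x - f x • u) (by fun_prop)
  have hVc : IsCompact (V 0) := by
    have hK : IsCompact ((fun y => a⁻¹ • (e - y)) '' B) := hBcomp.image (by fun_prop)
    refine hK.of_isClosed_subset (hVcl 0) ?_
    intro u hu
    refine ⟨e - a • u, hu.2 e heB (hεa 0), ?_⟩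
    simp [smul_smul, inv_mul_cancel₀ hea.ne']
  have hVne : ∀ n, (V n).Nonempty := by
    intro n
    have hεn := hε n
    obtain ⟨v, ⟨c, ⟨hcB, hcf⟩, hcv⟩, hsub⟩ := hpark (B ∩ {x | f x = ε n}) Set.inter_subset_left
      ⟨(ε n / a) • e, hBconv.smul_mem_of_zero_mem hB0 heB
        ⟨by positivity, (div_le_one hea).2 (hεa n)⟩, by
          simp only [Set.mem_setOf_eq, map_smul, smul_eq_mul]
          rw [← ha, div_mul_cancel₀ _ hea.ne']⟩
      (hcl.inter (isClosed_eq hfc continuous_const))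
      (hBconv.inter (by
        intro x hx y hy s t _ _ hst
        simp only [Set.mem_setOf_eq] at hx hy ⊢
        simp only [map_add, map_smul, smul_eq_mul, hx, hy]
        rw [← add_mul, hst, one_mul]))
    have hcf' : f c = ε n := hcf
    have hv : v = -c := by
      have : c + v = 0 := hcv
      exact (neg_eq_of_add_eq_zero_right this).symm
    have hu1 : f ((ε n)⁻¹ • c) = 1 := by
      simp [hcf', hεn.ne']
    refine ⟨(ε n)⁻¹ • c, hu1, ?_⟩
    refine park_aux B hcl hBconv hB0 f _ hu1 (ε n) hεn ?_
    intro x hx hxf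
    have := hsub ⟨x, ⟨hx, hxf⟩, rfl⟩
    rw [smul_smul, mul_inv_cancel₀ hεn.ne', one_smul, sub_eq_add_neg, ← hv]
    exact this
  have hVmono : ∀ n, V (n + 1) ⊆ V n := by
    intro n u hu
    refine ⟨hu.1, fun x hx hxf => hu.2 x hx (le_trans ?_ hxf)⟩
    simp only [ε]
    push_cast
    gcongr
    linarith
  obtain ⟨u, hu⟩ := IsCompact.nonempty_iInter_of_sequence_nonempty_isCompact_isClosed V hVmono
    hVne hVc hVcl
  rw [Set.mem_iInter] at hu
  have hu1 : f u = 1 := (hu 0).1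
  have hpos : ∀ x ∈ B, 0 < f x → x - f x • u ∈ B := by
    intro x hx hxf
    obtain ⟨n, hn⟩ := exists_nat_gt (a / f x)
    refine (hu n).2 x hx ?_
    rw [div_lt_iff₀ hxf] at hn
    have hn1 : (0 : ℝ) < (n : ℝ) + 1 := by positivity
    simp only [ε]
    rw [div_le_iff₀ hn1]
    nlinarith
  have hall : ∀ x ∈ B, x - f x • u ∈ B := by
    intro x hx
    rcases lt_trichotomy (f x) 0 with h | h | h
    · have h1 := hpos (-x) (hneg x hx) (by simpa using h)
      have h2 := hneg _ h1
      convert h2 using 1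
      simp only [map_neg]
      module
    · simpa [h] using hx
    · exact hpos x hx h
  refine ⟨u, ?_, ?_⟩
  · rintro rfl
    simp at hu1
  rintro p ⟨hpH, hpB⟩ t hpt
  have hfp : f p = 0 := hfH hpH
  have hT : Filter.Tendsto (fun s : ℝ => s • (p + t • u)) (nhdsWithin 1 (Set.Ioi 1))
      (nhds (p + t • u)) := by
    have : Continuous fun s : ℝ => s • (p + t • u) := by fun_prop
    have h := this.tendsto 1
    simp only [one_smul] at h
    exact h.mono_left nhdsWithin_le_nhds
  have h1 := hT.eventually (mem_interior_iff_mem_nhds.1 hpt)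
  obtain ⟨s, hs, hs1⟩ := (h1.and self_mem_nhdsWithin).exists
  have hs1' : 1 < s := hs1
  have h2 := hall _ hs
  have h3 : s • p ∈ B := by
    convert h2 using 1
    simp only [map_smul, map_add, hfp, hu1, smul_eq_mul]
    module
  have hs0 : 0 < s := by linarith
  have h4 := hBconv.combo_interior_self_mem_interior hint0 h3
      (a := 1 - s⁻¹) (b := s⁻¹) (by
        have := inv_lt_one_of_one_lt₀ hs1'
        linarith) (by positivity) (by ring)
  rw [smul_zero, zero_add, smul_smul, inv_mul_cancel₀ hs0.ne', one_smul] at h4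
  exact hpB.2 h4
end

section
/- Let B ⊆ ℝ³ be a centrally symmetric convex body such that every closed convex subset of B is parkable in B. Then B has the Blaschke property: for every nonzero vector u ∈ ℝ³ there exists a two-dimensional linear subspace H ⊆ ℝ³ such that every point p ∈ H ∩ ∂B lies on a B-supporting line with direction u, i.e. p + t•u ∉ int B for all t ∈ ℝ. -/
theorem aux_sep {E : Type*} [NormedAddCommGroup E] [NormedSpace ℝ E] [FiniteDimensional ℝ E]
    (A : Set E) (hA : Convex ℝ A) (hne : A.Nonempty) (h0 : (0 : E) ∉ interior A) :
    ∃ g : E →L[ℝ] ℝ, g ≠ 0 ∧ ∀ a ∈ A, 0 ≤ g a := by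
  by_cases hi : (interior A).Nonempty
  · obtain ⟨f, hf⟩ := geometric_hahn_banach_point_open hA.interior isOpen_interior h0
    refine ⟨f, ?_, ?_⟩
    · rintro rfl
      obtain ⟨x, hx⟩ := hi
      simpa using hf x hx
    · intro a ha
      have h1 : a ∈ closure (interior A) := by
        rw [hA.closure_interior_eq_closure_of_nonempty_interior hi]
        exact subset_closure ha
      have h2 : closure (interior A) ⊆ {x | 0 ≤ f x} := by
        apply closure_minimal
        · intro x hx
          have := hf x hx
          simp at this
          exact this.le
        · exact isClosed_le continuous_const f.continuous
      exact h2 h1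
  · rw [hA.interior_nonempty_iff_affineSpan_eq_top] at hi
    have hd : (affineSpan ℝ A).direction < ⊤ := by
      rw [lt_top_iff_ne_top]
      intro h
      apply hi
      rwa [AffineSubspace.direction_eq_top_iff_of_nonempty ((affineSpan_nonempty ℝ).2 hne)] at h
    obtain ⟨f, hf0, hf⟩ := Submodule.exists_le_ker_of_lt_top _ hd
    obtain ⟨a0, ha0⟩ := hne
    have hc : ∀ a ∈ A, f a = f a0 := by
      intro a ha
      have := hf (AffineSubspace.vsub_mem_direction (subset_affineSpan ℝ A ha)
        (subset_affineSpan ℝ A ha0))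
      simp at this
      linarith
    have hfc : LinearMap.toContinuousLinearMap f ≠ 0 := by
      intro h
      apply hf0
      ext x
      have := congrArg (fun k : E →L[ℝ] ℝ => k x) h
      simpa using this
    rcases le_total 0 (f a0) with h | h
    · exact ⟨LinearMap.toContinuousLinearMap f, hfc, fun a ha => by simpa [hc a ha] using h⟩
    · exact ⟨-LinearMap.toContinuousLinearMap f, by simpa using hfc,
        fun a ha => by simpa [hc a ha] using h⟩

theorem aux_min {E : Type*} [NormedAddCommGroup E] [NormedSpace ℝ E]
    (u : E) (hu : u ≠ 0) (T : Set E) (s : ℝ) (hs : 0 < s) (h : (-s) • u ∈ convexHull ℝ T) :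
    ∃ S : Finset E, (S : Set E) ⊆ T ∧ (∃ s : ℝ, 0 < s ∧ (-s) • u ∈ convexHull ℝ (S : Set E)) ∧
      ∀ r : ℝ, 0 ≤ r → r • u ∉ convexHull ℝ (S : Set E) := by
  classical
  have hex : ∃ n : ℕ, ∃ S : Finset E, S.card = n ∧ (S : Set E) ⊆ T ∧
      (∃ s : ℝ, 0 < s ∧ (-s) • u ∈ convexHull ℝ (S : Set E)) := by
    rw [convexHull_eq_union_convexHull_finite_subsets] at h
    simp only [Set.mem_iUnion] at h
    obtain ⟨S, hS, h⟩ := h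
    exact ⟨_, S, rfl, hS, s, hs, h⟩
  obtain ⟨S, hcard, hST, s, hs, hS⟩ := Nat.find_spec hex
  refine ⟨S, hST, ⟨s, hs, hS⟩, ?_⟩
  intro r hr hrS
  obtain ⟨l, hl0, hl1, hl⟩ := Finset.mem_convexHull'.1 hS
  obtain ⟨m, hm0, hm1, hm⟩ := Finset.mem_convexHull'.1 hrS
  have hneg : ∃ y ∈ S, l y - m y < 0 := by
    by_contra! hcon
    have hz : ∀ y ∈ S, l y - m y = 0 := by
      rw [← Finset.sum_eq_zero_iff_of_nonneg hcon, Finset.sum_sub_distrib, hl1, hm1, sub_self]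
    have : (-s) • u = r • u := by
      rw [← hl, ← hm]
      exact Finset.sum_congr rfl fun y hy => by rw [sub_eq_zero.1 (hz y hy)]
    have h2 := smul_left_injective ℝ hu this
    linarith
  obtain ⟨y1, hy1, hy1n⟩ := hneg
  obtain ⟨y0, hy0, hmin⟩ := Finset.exists_min_image (S.filter fun y => l y - m y < 0)
    (fun y => l y / (m y - l y)) ⟨y1, by simp [hy1]; linarith⟩
  simp only [Finset.mem_filter] at hy0 hmin
  set τ := l y0 / (m y0 - l y0) with hτ
  have hτ0 : 0 ≤ τ := div_nonneg (hl0 _ hy0.1) (by linarith [hy0.2])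
  have hpos : ∀ y ∈ S, 0 ≤ l y + τ * (l y - m y) := by
    intro y hy
    by_cases hn : l y - m y < 0
    · have h1 := hmin y ⟨hy, hn⟩
      rw [le_div_iff₀ (by linarith)] at h1
      linarith
    · have := mul_nonneg hτ0 (not_lt.1 hn)
      linarith [hl0 y hy]
  have hzero : l y0 + τ * (l y0 - m y0) = 0 := by
    have : m y0 - l y0 ≠ 0 := by linarith [hy0.2]
    rw [hτ]; field_simp; ring
  apply Nat.find_min hex (m := (S.erase y0).card)
  · rw [← hcard]; exact Finset.card_erase_lt_of_mem hy0.1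
  · refine ⟨S.erase y0, rfl, ?_, s + τ * (s + r), by positivity, ?_⟩
    · exact fun x hx => hST (Finset.erase_subset _ _ hx)
    · rw [Finset.mem_convexHull']
      refine ⟨fun y => l y + τ * (l y - m y), fun y hy => hpos y (Finset.mem_of_mem_erase hy),
        ?_, ?_⟩
      · rw [Finset.sum_erase S (f := fun y => l y + τ * (l y - m y)) hzero, Finset.sum_add_distrib, ← Finset.mul_sum,
          Finset.sum_sub_distrib, hl1, hm1]
        ring
      · rw [Finset.sum_erase _ (by simp [hzero])]
        simp only [add_smul, mul_smul, sub_smul, Finset.sum_add_distrib, ← Finset.smul_sum,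
          Finset.sum_sub_distrib, hl, hm]
        module

theorem aux_rigid (D : Set (EuclideanSpace ℝ (Fin 2))) (hc : IsCompact D) (hconv : Convex ℝ D)
    (hsym : ∀ x ∈ D, -x ∈ D) (habs : ∀ x, ∃ c : ℝ, 0 < c ∧ c • x ∈ D)
    (S : Finset (EuclideanSpace ℝ (Fin 3))) (e : EuclideanSpace ℝ (Fin 3) → EuclideanSpace ℝ (Fin 2))
    (l : EuclideanSpace ℝ (Fin 3) → ℝ) (hl : ∀ i ∈ S, 0 ≤ l i) (hl1 : ∑ i ∈ S, l i = 1)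
    (he : ∀ i ∈ S, e i ∈ D.extremePoints ℝ) (h0 : ∑ i ∈ S, l i • e i = 0)
    (w : EuclideanSpace ℝ (Fin 2)) (hw : ∀ i ∈ S, e i + w ∈ D) : w = 0 := by
  by_contra hw0
  have hww : 0 < w 0 ^ 2 + w 1 ^ 2 := by
    by_contra! hcon
    apply hw0
    ext i
    fin_cases i
    · simp; nlinarith [sq_nonneg (w 0), sq_nonneg (w 1)]
    · simp; nlinarith [sq_nonneg (w 0), sq_nonneg (w 1)]
  obtain ⟨ψ, hψ⟩ : ∃ ψ : EuclideanSpace ℝ (Fin 2) →L[ℝ] ℝ, ∀ x, ψ x = x 0 * w 1 - x 1 * w 0 :=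
    ⟨w 1 • EuclideanSpace.proj 0 - w 0 • EuclideanSpace.proj 1, fun x => by simp; ring⟩
  obtain ⟨κ, hκ⟩ : ∃ κ : EuclideanSpace ℝ (Fin 2) →L[ℝ] ℝ, ∀ x, κ x =
      (x 0 * w 0 + x 1 * w 1) / (w 0 ^ 2 + w 1 ^ 2) :=
    ⟨(w 0 / (w 0 ^ 2 + w 1 ^ 2)) • EuclideanSpace.proj 0
      + (w 1 / (w 0 ^ 2 + w 1 ^ 2)) • EuclideanSpace.proj 1, fun x => by simp; ring⟩
  have hψw : ψ w = 0 := by rw [hψ]; ring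
  have hκw : κ w = 1 := by rw [hκ]; field_simp
  have hker : ∀ x, ψ x = 0 → x = κ x • w := by
    intro x hx
    rw [hψ] at hx
    rw [hκ]
    ext i
    fin_cases i
    · simp; field_simp; linear_combination (w 1) * hx
    · simp; field_simp; linear_combination (-w 0) * hx
  have hDne : D.Nonempty := by
    obtain ⟨c, -, h⟩ := habs 0
    exact ⟨_, h⟩
  obtain ⟨a, haD, hamax⟩ := hc.exists_isMaxOn hDne ψ.continuous.continuousOn
  have hM : 0 < ψ a := by
    obtain ⟨c, hc0, hcx⟩ := habs !₂[w 1, - w 0]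
    have h1 : ψ (c • !₂[w 1, - w 0]) ≤ ψ a := hamax hcx
    have h2 : ψ !₂[w 1, - w 0] = w 0 ^ 2 + w 1 ^ 2 := by rw [hψ]; simp; ring
    rw [map_smul, h2, smul_eq_mul] at h1
    have := mul_pos hc0 hww
    linarith
  set M := ψ a with hMdef
  have hle : ∀ x ∈ D, ψ x ≤ M := fun x hx => hamax hx
  have hF : IsCompact (D ∩ {x | ψ x = M}) :=
    hc.inter_right (isClosed_eq ψ.continuous continuous_const)
  obtain ⟨a1, ha1, h1⟩ := hF.exists_isMinOn ⟨a, haD, rfl⟩ κ.continuous.continuousOn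
  obtain ⟨a2, ha2, h2⟩ := hF.exists_isMaxOn ⟨a, haD, rfl⟩ κ.continuous.continuousOn
  have hdiff : a2 - a1 = (κ a2 - κ a1) • w := by
    rw [← map_sub]; apply hker
    rw [map_sub, ha1.2, ha2.2, sub_self]
  obtain ⟨m, hm⟩ : ∃ m, m = (1 / 2 : ℝ) • a1 + (1 / 2 : ℝ) • a2 := ⟨_, rfl⟩
  have hmD : m ∈ D := hm ▸ hconv ha1.1 ha2.1 (by norm_num) (by norm_num) (by norm_num)
  have hψm : ψ m = M := by
    rw [hm, map_add, map_smul, map_smul, ha1.2, ha2.2, smul_eq_mul]; ring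
  have hκm : κ m = (κ a1 + κ a2) / 2 := by
    rw [hm, map_add, map_smul, map_smul, smul_eq_mul, smul_eq_mul]; ring
  have hface : ∀ x, ψ x = M → κ a1 ≤ κ x → κ x ≤ κ a2 → x ∈ D := by
    intro x hx h1x h2x
    have hx1 : x = a1 + (κ x - κ a1) • w := by
      rw [← map_sub, ← hker]
      · abel
      · rw [map_sub, hx, ha1.2, sub_self]
    rcases eq_or_lt_of_le (h1x.trans h2x) with h | h
    · have : κ x - κ a1 = 0 := by linarith
      rw [this, zero_smul, add_zero] at hx1
      rw [hx1]; exact ha1.1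
    · have hd : 0 < κ a2 - κ a1 := by linarith
      have hx2 : x = a1 + ((κ x - κ a1) / (κ a2 - κ a1)) • (a2 - a1) := by
        rw [hdiff, smul_smul, div_mul_cancel₀ _ hd.ne']; exact hx1
      rw [hx2]
      apply hconv.add_smul_sub_mem ha1.1 ha2.1
      constructor
      · exact div_nonneg (by linarith) hd.le
      · rw [div_le_one hd]; linarith
  have hrefl : ∀ r : ℝ, m + r • w ∈ D → m - r • w ∈ D := by
    intro r hr
    have hin : ψ (m + r • w) = M := by simp [hψm, hψw]
    have g1 : κ a1 ≤ κ (m + r • w) := h1 ⟨hr, hin⟩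
    have g2 : κ (m + r • w) ≤ κ a2 := h2 ⟨hr, hin⟩
    rw [map_add, map_smul, hκw, hκm, smul_eq_mul] at g1 g2
    have hin' : ψ (m - r • w) = M := by simp [hψm, hψw]
    have hκ' : κ (m - r • w) = (κ a1 + κ a2) / 2 - r := by
      rw [map_sub, map_smul, hκw, hκm, smul_eq_mul]; ring
    apply hface _ hin' <;> rw [hκ'] <;> linarith
  have hcoord : ∀ i ∈ S, κ (e i) - ψ (e i) / M * κ m < 0 := by
    intro i hi
    by_contra! hx
    obtain ⟨heD, hext⟩ := mem_extremePoints.1 (he i hi)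
    have hewD := hw i hi
    have hy1 : ψ (e i) / M ≤ 1 := by rw [div_le_one hM]; exact hle _ heD
    have hy2 : -1 ≤ ψ (e i) / M := by
      have := hle _ (hsym _ heD)
      rw [map_neg] at this
      rw [le_div_iff₀ hM]; linarith
    have hrep : e i = (ψ (e i) / M) • m + (κ (e i) - ψ (e i) / M * κ m) • w := by
      have := hker (e i - (ψ (e i) / M) • m) (by
        rw [map_sub, map_smul, hψm, smul_eq_mul, div_mul_cancel₀ _ hM.ne', sub_self])
      rw [map_sub, map_smul, smul_eq_mul] at this
      rw [← this]; abel
    generalize ψ (e i) / M = y at *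
    generalize κ (e i) - y * κ m = x at *
    generalize e i = p at *
    have key : ∀ q, q + (x + 1) • w ∈ D → q - (x + 1) • w ∈ D → p = q + x • w → False := by
      intro q hq1 hq2 hp
      have hx1 : 0 < 2 * (x + 1) := by linarith
      have := (hext _ hq1 _ hq2 ⟨(2 * x + 1) / (2 * (x + 1)), 1 / (2 * (x + 1)), by positivity,
        by positivity, by field_simp; ring, by
          rw [hp]
          have hx2 : x + 1 ≠ 0 := by linarith
          match_scalars <;> field_simp <;> ring⟩).1
      apply hw0
      rw [hp] at this
      have h3 : w = (q + (x + 1) • w) - (q + x • w) := by module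
      rw [h3, this, sub_self]
    have hpw : p + w = y • m + (x + 1) • w := by rw [hrep]; module
    rw [hpw] at hewD
    rcases eq_or_lt_of_le hy1 with h | h
    · subst h
      rw [one_smul] at hewD hrep
      exact key m hewD (hrefl _ hewD) hrep
    rcases eq_or_lt_of_le hy2 with h' | h'
    · subst h'
      have e1 : (-1 : ℝ) • m + (x + 1) • w = -(m - (x + 1) • w) := by module
      have h4 := hsym _ hewD
      rw [e1, neg_neg, sub_eq_add_neg, ← neg_smul] at h4
      have h5 := hsym _ (hrefl _ h4)
      refine key ((-1 : ℝ) • m) hewD ?_ hrep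
      convert h5 using 1
      module
    have hmne : m ≠ 0 := by
      rintro rfl
      rw [map_zero] at hψm
      linarith
    rcases eq_or_lt_of_le hx with h0 | h0
    · rw [← h0, zero_smul, add_zero] at hrep
      have := hext _ hmD _ (hsym _ hmD) ⟨(1 + y) / 2, (1 - y) / 2, by linarith, by linarith,
        by ring, by rw [hrep]; module⟩
      have h6 : m = -m := this.1.trans this.2.symm
      have h7 : ψ m = ψ (-m) := congrArg ψ h6
      rw [map_neg, hψm] at h7
      linarith
    · have hym : y • m ∈ D := by
        have : y • m = ((1 + y) / 2) • m + ((1 - y) / 2) • (-m) := by module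
        rw [this]
        exact hconv hmD (hsym _ hmD) (by linarith) (by linarith) (by ring)
      have hx1 : 0 < x + 1 := by linarith
      have := (hext _ hewD _ hym ⟨x / (x + 1), 1 / (x + 1), by positivity, by positivity,
        by field_simp, by
          rw [hrep]
          match_scalars <;> field_simp⟩).1
      rw [← hpw] at this
      exact hw0 (by simpa using this)
  have hsum : ∑ i ∈ S, l i * (κ (e i) - ψ (e i) / M * κ m) = 0 := by
    have e1 : ∑ i ∈ S, l i * κ (e i) = 0 := by
      have := congrArg κ h0
      simpa using this
    have e2 : ∑ i ∈ S, l i * ψ (e i) = 0 := by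
      have := congrArg ψ h0
      simpa using this
    calc _ = ∑ i ∈ S, l i * κ (e i) - (∑ i ∈ S, l i * ψ (e i)) * (κ m / M) := by
          rw [Finset.sum_mul, ← Finset.sum_sub_distrib]
          exact Finset.sum_congr rfl fun i _ => by ring
      _ = 0 := by rw [e1, e2]; ring
  have hall := (Finset.sum_eq_zero_iff_of_nonpos (fun i hi =>
    mul_nonpos_of_nonneg_of_nonpos (hl i hi) (hcoord i hi).le)).1 hsum
  have : ∑ i ∈ S, l i = 0 := Finset.sum_eq_zero fun i hi =>
    (mul_eq_zero.1 (hall i hi)).resolve_right (hcoord i hi).ne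
  rw [hl1] at this
  exact one_ne_zero this

theorem aux_proj_s12 (u : EuclideanSpace ℝ (Fin 3)) (hu : u ≠ 0) :
    ∃ π : EuclideanSpace ℝ (Fin 3) →L[ℝ] EuclideanSpace ℝ (Fin 2), Function.Surjective π ∧
      π u = 0 ∧ ∀ x, π x = 0 → ∃ r : ℝ, x = r • u := by
  have : Fact (Module.finrank ℝ (EuclideanSpace ℝ (Fin 3)) = 2 + 1) := ⟨by simp⟩
  let b := OrthonormalBasis.fromOrthogonalSpanSingleton (𝕜 := ℝ) 2 hu
  have hz : ∀ x, (ℝ ∙ u)ᗮ.orthogonalProjectionOnto x = 0 ↔ x ∈ Submodule.span ℝ {u} := by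
    intro x
    rw [Submodule.orthogonalProjectionOnto_eq_zero_iff, Submodule.orthogonal_orthogonal]
  refine ⟨(b.repr.toContinuousLinearEquiv : _ →L[ℝ] _).comp (ℝ ∙ u)ᗮ.orthogonalProjectionOnto,
    ?_, ?_, ?_⟩
  · intro y
    obtain ⟨z, rfl⟩ := b.repr.surjective y
    exact ⟨z, by simp⟩
  · have := (hz u).2 (Submodule.mem_span_singleton_self u)
    simp [this]
  · intro x hx
    have : (ℝ ∙ u)ᗮ.orthogonalProjectionOnto x = 0 := by simpa using hx
    rw [hz, Submodule.mem_span_singleton] at this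
    obtain ⟨r, hr⟩ := this
    exact ⟨r, hr.symm⟩

/-- A centrally symmetric convex body `B ⊆ ℝ³` all of whose closed convex
subsets are parkable in `B` has the Blaschke property. -/
theorem stmt_12 (B : Set (EuclideanSpace ℝ (Fin 3)))
    (hBcomp : IsCompact B) (hBconv : Convex ℝ B)
    (hBint : (interior B).Nonempty) (hB0 : (0 : EuclideanSpace ℝ (Fin 3)) ∈ B)
    (hBsym : B = -B)
    (hpark : ∀ C : Set (EuclideanSpace ℝ (Fin 3)),
      C ⊆ B → C.Nonempty → IsClosed C → Convex ℝ C →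
      ∃ v : EuclideanSpace ℝ (Fin 3),
        (0 : EuclideanSpace ℝ (Fin 3)) ∈ (fun x => x + v) '' C ∧
        (fun x => x + v) '' C ⊆ B) :
    ∀ u : EuclideanSpace ℝ (Fin 3), u ≠ 0 →
      ∃ H : Submodule ℝ (EuclideanSpace ℝ (Fin 3)), Module.finrank ℝ H = 2 ∧
        ∀ p ∈ (H : Set (EuclideanSpace ℝ (Fin 3))) ∩ frontier B,
          ∀ t : ℝ, p + t • u ∉ interior B := by
  intro u hu
  have hneg : ∀ x ∈ B, -x ∈ B := by
    intro x hx
    rw [hBsym] at hx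
    exact hx
  -- the origin is interior
  have h0int : (0 : EuclideanSpace ℝ (Fin 3)) ∈ interior B := by
    obtain ⟨x, hx⟩ := hBint
    have hx' : -x ∈ B := hneg x (interior_subset hx)
    have := hBconv.combo_interior_self_mem_interior hx hx' (a := 1 / 2) (b := 1 / 2)
      (by norm_num) (by norm_num) (by norm_num)
    simpa using this
  have habsorb : ∀ (x y : EuclideanSpace ℝ (Fin 3)), x ∈ interior B →
      ∃ c : ℝ, 0 < c ∧ x + c • y ∈ B := by
    intro x y hx
    have hcont : Filter.Tendsto (fun c : ℝ => x + c • y) (nhdsWithin 0 (Set.Ioi 0)) (nhds x) := by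
      have : Continuous (fun c : ℝ => x + c • y) := by fun_prop
      have h2 := this.tendsto 0
      simp only [zero_smul, add_zero] at h2
      exact h2.mono_left nhdsWithin_le_nhds
    have h1 := hcont.eventually (mem_interior_iff_mem_nhds.1 hx)
    have h2 : ∀ᶠ c : ℝ in nhdsWithin 0 (Set.Ioi 0), 0 < c := self_mem_nhdsWithin
    obtain ⟨c, hc⟩ := (h1.and h2).exists
    exact ⟨c, hc.2, hc.1⟩
  obtain ⟨π, hsurj, hπu, hker⟩ := aux_proj_s12 u hu
  obtain ⟨D, hD⟩ : ∃ D, D = π '' B := ⟨_, rfl⟩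
  have hDc : IsCompact D := hD ▸ hBcomp.image π.continuous
  have hDconv : Convex ℝ D := hD ▸ hBconv.linear_image π.toLinearMap
  have hDsym : ∀ x ∈ D, -x ∈ D := by
    rw [hD]
    rintro _ ⟨x, hx, rfl⟩
    exact ⟨-x, hneg x hx, map_neg π x⟩
  have hDabs : ∀ x, ∃ c : ℝ, 0 < c ∧ c • x ∈ D := by
    intro x
    obtain ⟨y, rfl⟩ := hsurj x
    obtain ⟨c, hc, h⟩ := habsorb 0 y h0int
    rw [zero_add] at h
    exact ⟨c, hc, hD ▸ ⟨_, h, map_smul π c y⟩⟩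
  -- the top points over extreme points
  obtain ⟨T, hT⟩ : ∃ T : Set (EuclideanSpace ℝ (Fin 3)), T = {p | p ∈ B ∧ π p ∈ D.extremePoints ℝ ∧
    ∀ t : ℝ, p + t • u ∈ B → t ≤ 0} := ⟨_, rfl⟩
  have hTB : T ⊆ B := by rw [hT]; exact fun p hp => hp.1
  have hconvTB : convexHull ℝ T ⊆ B := convexHull_min hTB hBconv
  have htop : D.extremePoints ℝ ⊆ π '' T := by
    intro e he
    have heD := he.1
    rw [hD] at heD
    obtain ⟨p, hp, hpe⟩ := heD
    have hcomp : IsCompact (B ∩ {x | π x = e}) :=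
      hBcomp.inter_right (isClosed_eq π.continuous continuous_const)
    obtain ⟨q, hq, hmax⟩ := hcomp.exists_isMaxOn ⟨p, hp, hpe⟩
      (f := fun x => inner ℝ u x) (by fun_prop)
    refine ⟨q, ?_, hq.2⟩
    rw [hT]
    refine ⟨hq.1, by rw [hq.2]; exact he, ?_⟩
    intro t ht
    have h1 : inner ℝ u (q + t • u) ≤ inner ℝ u q := hmax ⟨ht, by
      change π (q + t • u) = e
      rw [map_add, map_smul, hπu, smul_zero, add_zero, hq.2]⟩
    rw [inner_add_right, inner_smul_right] at h1
    have h2 : 0 < inner ℝ u u := real_inner_self_pos.2 hu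
    by_contra! h3
    nlinarith [mul_pos h3 h2]
  -- every point of `D` lies below the closed hull of `T`
  have hcover : ∀ x ∈ B, ∃ q ∈ closure (convexHull ℝ T), ∃ r : ℝ, q = x + r • u := by
    intro x hx
    have hcl : IsCompact (closure (convexHull ℝ T)) :=
      hBcomp.of_isClosed_subset isClosed_closure (closure_minimal hconvTB hBcomp.isClosed)
    have h1 : D ⊆ π '' closure (convexHull ℝ T) := by
      rw [← closure_convexHull_extremePoints hDc hDconv]
      apply closure_minimal _ (hcl.image π.continuous).isClosed
      apply convexHull_min
      · exact htop.trans (Set.image_mono ((subset_convexHull ℝ T).trans subset_closure))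
      · exact (convex_convexHull ℝ T).closure.linear_image π.toLinearMap
    obtain ⟨q, hq, hqx⟩ := h1 (hD ▸ ⟨x, hx, rfl⟩ : π x ∈ D)
    obtain ⟨r, hr⟩ := hker (q - x) (by rw [map_sub, hqx, sub_self])
    exact ⟨q, hq, r, by rw [← hr]; abel⟩
  -- parkability: the hull of `T` avoids the open negative ray
  have hray : ∀ s : ℝ, 0 < s → (-s) • u ∉ convexHull ℝ T := by
    intro s hs hmem
    obtain ⟨S, hST, ⟨s', hs', hS'⟩, hno⟩ := aux_min u hu T s hs hmem
    have hSB : convexHull ℝ (S : Set (EuclideanSpace ℝ (Fin 3))) ⊆ B :=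
      convexHull_min (hST.trans hTB) hBconv
    obtain ⟨v, ⟨c, hcS, hcv⟩, hvB⟩ := hpark _ hSB ⟨_, hS'⟩
      (S.finite_toSet.isCompact_convexHull ℝ).isClosed (convex_convexHull ℝ _)
    have hpv : ∀ p ∈ S, p + v ∈ B := fun p hp =>
      hvB ⟨p, subset_convexHull ℝ _ hp, rfl⟩
    obtain ⟨l, hl0, hl1, hl⟩ := Finset.mem_convexHull'.1 hS'
    have hπv : π v = 0 := by
      refine aux_rigid D hDc hDconv hDsym hDabs S π l hl0 hl1 ?_ ?_ _ ?_
      · intro i hi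
        have := hST hi
        rw [hT] at this
        exact this.2.1
      · have := congrArg π hl
        rw [map_sum, map_smul, hπu, smul_zero] at this
        simpa using this
      · intro i hi
        rw [← map_add, hD]
        exact ⟨_, hpv i hi, rfl⟩
    obtain ⟨r, rfl⟩ := hker v hπv
    have hSne : S.Nonempty := by
      rw [Finset.nonempty_iff_ne_empty]
      rintro rfl
      simp at hl1
    obtain ⟨p, hp⟩ := hSne
    have hr : r ≤ 0 := by
      have := hST hp
      rw [hT] at this
      exact this.2.2 r (hpv p hp)
    apply hno (-r) (by linarith)
    have : c = (-r) • u := by rw [neg_smul]; exact eq_neg_of_add_eq_zero_left hcv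
    rwa [← this]
  -- separation
  obtain ⟨A, hA⟩ : ∃ A : Set (EuclideanSpace ℝ (Fin 3)), A = {x | ∃ q ∈ convexHull ℝ T, ∃ r : ℝ,
    0 ≤ r ∧ x = q + r • u} := ⟨_, rfl⟩
  have hAconv : Convex ℝ A := by
    rw [hA]
    rintro _ ⟨q, hq, r, hr, rfl⟩ _ ⟨q', hq', r', hr', rfl⟩ a b ha hb hab
    exact ⟨a • q + b • q', convex_convexHull ℝ T hq hq' ha hb hab, a * r + b * r', by positivity,
      by module⟩
  have hTne : (convexHull ℝ T).Nonempty := by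
    obtain ⟨q, hq, -⟩ := hcover 0 hB0
    exact closure_nonempty_iff.1 ⟨q, hq⟩
  have hA0 : (0 : EuclideanSpace ℝ (Fin 3)) ∉ interior A := by
    intro h
    have hcont : Filter.Tendsto (fun c : ℝ => (-c) • u) (nhdsWithin 0 (Set.Ioi 0)) (nhds 0) := by
      have : Continuous (fun c : ℝ => (-c) • u) := by fun_prop
      have h2 := this.tendsto 0
      simp only [neg_zero, zero_smul] at h2
      exact h2.mono_left nhdsWithin_le_nhds
    have h1 := hcont.eventually (mem_interior_iff_mem_nhds.1 h)
    have h2 : ∀ᶠ c : ℝ in nhdsWithin 0 (Set.Ioi 0), 0 < c := self_mem_nhdsWithin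
    obtain ⟨c, hc, hc0⟩ := (h1.and h2).exists
    rw [hA] at hc
    obtain ⟨q, hq, r, hr, hqr⟩ := hc
    apply hray (c + r) (by linarith)
    have : q = (-(c + r)) • u := by
      rw [← sub_eq_iff_eq_add] at hqr
      rw [← hqr]; module
    rwa [← this]
  obtain ⟨q0, hq0⟩ := hTne
  obtain ⟨g, hg0, hg⟩ := aux_sep A hAconv ⟨q0, hA ▸ ⟨q0, hq0, 0, le_rfl, by simp⟩⟩ hA0
  have hgu : 0 ≤ g u := by
    by_contra! hneg'
    have h1 := hg (q0 + ((|g q0| + 1) / (-g u)) • u) (hA ▸ ⟨q0, hq0, _, by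
      apply div_nonneg <;> [positivity; linarith], rfl⟩)
    rw [map_add, map_smul, smul_eq_mul] at h1
    have h2 : (|g q0| + 1) / (-g u) * g u = -(|g q0| + 1) := by
      rw [div_neg, neg_mul, div_mul_cancel₀ _ hneg'.ne]
    rw [h2] at h1
    linarith [le_abs_self (g q0)]
  have hgcl : ∀ q ∈ closure (convexHull ℝ T), 0 ≤ g q := by
    have : closure (convexHull ℝ T) ⊆ {x | 0 ≤ g x} :=
      closure_minimal (fun q hq => hg q (hA ▸ ⟨q, hq, 0, le_rfl, by simp⟩))
        (isClosed_le continuous_const g.continuous)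
    exact this
  have hgu' : 0 < g u := by
    rcases eq_or_lt_of_le hgu with h | h
    · exfalso
      have hB : ∀ x ∈ B, 0 ≤ g x := by
        intro x hx
        obtain ⟨q, hq, r, rfl⟩ := hcover x hx
        simpa [← h] using hgcl _ hq
      apply hg0
      ext y
      obtain ⟨c, hc, hcy⟩ := habsorb 0 y h0int
      rw [zero_add] at hcy
      have h1 := hB _ hcy
      have h2 := hB _ (hneg _ hcy)
      rw [map_neg] at h2
      have h3 : g (c • y) = 0 := by linarith
      rw [map_smul, smul_eq_mul] at h3
      simpa using (mul_eq_zero.1 h3).resolve_left hc.ne'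
    · exact h
  have hlift : ∀ (x : EuclideanSpace ℝ (Fin 3)) (s : ℝ), x + s • u ∈ B → g x = 0 →
      ∃ r : ℝ, 0 ≤ r ∧ x + r • u ∈ B := by
    intro x s hx hgx
    obtain ⟨q, hq, r, hqr⟩ := hcover _ hx
    have hq' : q = x + (s + r) • u := by rw [hqr]; module
    refine ⟨s + r, ?_, ?_⟩
    · have := hgcl _ hq
      rw [hq', map_add, map_smul, hgx, zero_add, smul_eq_mul] at this
      exact nonneg_of_mul_nonneg_left this hgu'
    · rw [← hq']
      exact closure_minimal hconvTB hBcomp.isClosed hq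
  refine ⟨LinearMap.ker g.toLinearMap, ?_, ?_⟩
  · have h1 : g.toLinearMap ≠ 0 := by
      intro h
      have : g.toLinearMap u = 0 := by rw [h]; rfl
      exact hgu'.ne' this
    have h2 := Module.Dual.finrank_ker_add_one_of_ne_zero h1
    simp at h2
    exact h2
  · rintro p ⟨hpH, hpf⟩ t ht
    have hgp : g p = 0 := hpH
    obtain ⟨c, hc, hcB⟩ := habsorb _ (p + t • u) ht
    obtain ⟨r1, hr1, h1⟩ := hlift ((1 + c) • p) ((1 + c) * t)
      (by convert hcB using 1; module) (by rw [map_smul, hgp, smul_zero])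
    obtain ⟨r2, hr2, h2⟩ := hlift (-((1 + c) • p)) (-((1 + c) * t))
      (by convert hneg _ hcB using 1; module) (by rw [map_neg, map_smul, hgp, smul_zero, neg_zero])
    have h3 := hneg _ h2
    have hmem : (1 + c) • p ∈ B := by
      rcases eq_or_lt_of_le (add_nonneg hr1 hr2) with h | h
      · have : r1 = 0 := by linarith
        simpa [this] using h1
      · have := hBconv h1 h3 (a := r2 / (r1 + r2)) (b := r1 / (r1 + r2)) (by positivity)
          (by positivity) (by field_simp; ring)
        convert this using 1
        match_scalars <;> field_simp <;> ring
    have hpint := hBconv.combo_interior_self_mem_interior h0int hmem (a := c / (1 + c))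
      (b := 1 / (1 + c)) (by positivity) (by positivity) (by field_simp; ring)
    rw [smul_zero, zero_add, smul_smul, one_div_mul_cancel (by positivity), one_smul] at hpint
    exact hpf.2 hpint
end

section
/- Let S² denote the unit sphere in ℝ³ and let ψ assign to every v ∈ S² a subset ψ(v) ⊆ S² such that: (a) every ψ(v) is nonempty and closed; (b) every ψ(v) is spherically convex, meaning that for w, w' ∈ ψ(v) and t ∈ (0,1) the vector t•w + (1-t)•w' is nonzero and its normalization (t•w + (1-t)•w')/‖t•w + (1-t)•w'‖ lies in ψ(v); (c) ψ is odd, i.e. ψ(-v) = -ψ(v) for all v ∈ S²; (d) ψ is upper semicontinuous, i.e. the graph {(v, w) ∈ S² × S² : w ∈ ψ(v)} is closed. Then ψ is onto: for every w ∈ S² there exists v ∈ S² with w ∈ ψ(v). -/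
/-- Borsuk–Ulam for the 2-sphere. -/
theorem no_odd_map (g : EuclideanSpace ℝ (Fin 3) → ℂ)
    (hc : ContinuousOn g {v | ‖v‖ = 1})
    (hodd : ∀ v : EuclideanSpace ℝ (Fin 3), ‖v‖ = 1 → g (-v) = - g v)
    (hne : ∀ v : EuclideanSpace ℝ (Fin 3), ‖v‖ = 1 → g v ≠ 0) : False := by
  let q : ℂ → EuclideanSpace ℝ (Fin 3) := fun z => !₂[z.re, z.im, max 0 (1 - ‖z‖)]
  have hq0 : ∀ z, q z ≠ 0 := by
    intro z hz
    have h0 := congrArg (fun x : EuclideanSpace ℝ (Fin 3) => x 0) hz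
    have h1 := congrArg (fun x : EuclideanSpace ℝ (Fin 3) => x 1) hz
    have h2 := congrArg (fun x : EuclideanSpace ℝ (Fin 3) => x 2) hz
    simp [q] at h0 h1 h2
    have : z = 0 := Complex.ext h0 h1
    subst this
    simp at h2
    linarith
  have hqc : Continuous q := by
    refine (PiLp.continuous_toLp 2 _).comp ?_
    refine continuous_pi fun i => ?_
    fin_cases i
    · exact Complex.continuous_re
    · exact Complex.continuous_im
    · exact continuous_const.max (continuous_const.sub continuous_norm)
  let p : ℂ → EuclideanSpace ℝ (Fin 3) := fun z => ‖q z‖⁻¹ • q z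
  have hp : ∀ z, ‖p z‖ = 1 := fun z => by
    simp only [p, norm_smul, norm_inv, norm_norm]
    exact inv_mul_cancel₀ (norm_ne_zero_iff.2 (hq0 z))
  have hpc : Continuous p :=
    (hqc.norm.inv₀ fun z => norm_ne_zero_iff.2 (hq0 z)).smul hqc
  have hpo : ∀ z, 1 ≤ ‖z‖ → p (-z) = - p z := by
    intro z hz
    have : q (-z) = - q z := by
      have h : max 0 (1 - ‖z‖) = 0 := max_eq_left (by linarith)
      ext i
      fin_cases i <;> simp [q, h]
    simp [p, this]
  let F : C(ℂ, ℂ) := ⟨fun z => g (p z), hc.comp_continuous hpc hp⟩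
  obtain ⟨L, ⟨-, hL⟩, -⟩ := Complex.isCoveringMapOn_exp.existsUnique_continuousMap_lifts
    F (a₀ := 0) (e₀ := Complex.log (F 0)) (Complex.exp_log (hne _ (hp 0)))
    (fun z => by simpa [F] using hne _ (hp z))
  have hL' : ∀ z, Complex.exp (L z) = g (p z) := fun z => congrFun hL z
  -- compare along the unit circle
  let D : ℝ → ℂ := fun θ => L (-Complex.exp (θ * Complex.I)) - L (Complex.exp (θ * Complex.I))
  have hDc : Continuous D := by
    have : Continuous fun θ : ℝ => Complex.exp (θ * Complex.I) := by fun_prop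
    exact (L.continuous.comp this.neg).sub (L.continuous.comp this)
  have hD : ∀ θ, Complex.exp (D θ) = -1 := by
    intro θ
    have h1 : ‖Complex.exp (θ * Complex.I)‖ = 1 := Complex.norm_exp_ofReal_mul_I θ
    simp only [D, Complex.exp_sub, hL', hpo _ h1.ge, hodd _ (hp _)]
    rw [neg_div, div_self (hne _ (hp _))]
  -- `(D θ - π i)/(2 π i)` is an integer
  have hint : ∀ θ, ∃ n : ℤ, D θ = (Real.pi : ℂ) * Complex.I + n * (2 * Real.pi * Complex.I) := by
    intro θ
    exact Complex.exp_eq_exp_iff_exists_int.1 ((hD θ).trans Complex.exp_pi_mul_I.symm)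
  have hconst : D Real.pi = D 0 := by
    choose n hn using hint
    have hnc : Continuous fun θ => ((n θ : ℤ) : ℝ) := by
      have : (fun θ => ((n θ : ℤ) : ℝ)) = fun θ => ((D θ).im - Real.pi) / (2 * Real.pi) := by
        funext θ
        rw [hn θ]
        have := Real.pi_ne_zero
        simp [field]
      rw [this]
      fun_prop
    have hnc' : Continuous n := Int.isClosedEmbedding_coe_real.isInducing.continuous_iff.2 hnc
    have : n Real.pi = n 0 := PreconnectedSpace.constant inferInstance hnc'
    rw [hn, hn, this]
  have hneg : D Real.pi = - D 0 := by
    simp [D]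
  have h0 : D 0 = 0 := by
    have := hconst.symm.trans hneg
    exact self_eq_neg.1 this
  have := hD 0
  rw [h0, Complex.exp_zero] at this
  norm_num at this

/-- Convex hulls of compact subsets of `ℝ³` are compact. -/
theorem compact_hull (K : Set (EuclideanSpace ℝ (Fin 3))) (hK : IsCompact K) :
    IsCompact (convexHull ℝ K) := by
  rcases K.eq_empty_or_nonempty with rfl | ⟨k, hk⟩
  · simp
  let Φ : (Fin 4 → ℝ) × (Fin 4 → EuclideanSpace ℝ (Fin 3)) → EuclideanSpace ℝ (Fin 3) :=
    fun p => ∑ i, p.1 i • p.2 i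
  have hΦ : Continuous Φ := by fun_prop
  have hS : IsCompact ((stdSimplex ℝ (Fin 4)) ×ˢ (Set.univ.pi fun _ : Fin 4 => K)) :=
    (isCompact_stdSimplex ℝ (Fin 4)).prod (isCompact_univ_pi fun _ => hK)
  have heq : convexHull ℝ K =
      Φ '' ((stdSimplex ℝ (Fin 4)) ×ˢ (Set.univ.pi fun _ : Fin 4 => K)) := by
    apply Set.Subset.antisymm
    · intro x hx
      obtain ⟨ι, _, z, w, hz, hind, hw, hw1, hx⟩ := eq_pos_convex_span_of_mem_convexHull hx
      have hcard : Fintype.card ι ≤ Fintype.card (Fin 4) := by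
        have h1 := hind.card_le_finrank_succ
        have h2 := Submodule.finrank_le (vectorSpan ℝ (Set.range z))
        have h3 : Module.finrank ℝ (EuclideanSpace ℝ (Fin 3)) = 3 := by simp
        simp only [Fintype.card_fin]
        omega
      obtain ⟨e⟩ := Function.Embedding.nonempty_of_card_le hcard
      refine ⟨(Function.extend e w 0, Function.extend e z fun _ => k), ⟨⟨?_, ?_⟩, ?_⟩, ?_⟩
      · intro i
        by_cases hi : ∃ j, e j = i
        · obtain ⟨j, rfl⟩ := hi
          simpa [e.injective.extend_apply] using (hw j).le
        · simp [Function.extend_apply' _ _ _ hi]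
      · rw [← hw1]
        refine (Fintype.sum_of_injective e e.injective _ _ ?_ ?_).symm
        · intro i hi
          simp [Function.extend_apply' w _ i hi]
        · intro i
          simp [e.injective.extend_apply]
      · intro i _
        by_cases hi : ∃ j, e j = i
        · obtain ⟨j, rfl⟩ := hi
          simpa [e.injective.extend_apply] using hz ⟨j, rfl⟩
        · simpa [Function.extend_apply' _ _ _ hi] using hk
      · rw [← hx]
        refine (Fintype.sum_of_injective e e.injective _ _ ?_ ?_).symm
        · intro i hi
          simp [Function.extend_apply' w _ i hi]
        · intro i
          simp [e.injective.extend_apply]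
    · rintro _ ⟨⟨w, z⟩, ⟨⟨h0, h1⟩, hz⟩, rfl⟩
      exact (convex_convexHull ℝ K).sum_mem (fun i _ => h0 i) h1
        fun i _ => subset_convexHull ℝ K (hz i trivial)
  rw [heq]
  exact hS.image hΦ

/-- Separation of a spherically convex closed set from a line missing it. -/
theorem separate (K : Set (EuclideanSpace ℝ (Fin 3))) (w₀ : EuclideanSpace ℝ (Fin 3))
    (hw₀ : ‖w₀‖ = 1)
    (hsub : K ⊆ {w | ‖w‖ = 1}) (hcl : IsClosed K)
    (hconv : ∀ w ∈ K, ∀ w' ∈ K, ∀ t : ℝ, 0 < t → t < 1 →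
        t • w + (1 - t) • w' ≠ 0 ∧
        ‖t • w + (1 - t) • w'‖⁻¹ • (t • w + (1 - t) • w') ∈ K)
    (h1 : w₀ ∉ K) (h2 : -w₀ ∉ K) :
    ∃ c : (ℝ ∙ w₀)ᗮ, ∀ w ∈ K, inner ℝ (c : EuclideanSpace ℝ (Fin 3)) w < 0 := by
  let C : Set (EuclideanSpace ℝ (Fin 3)) := {x | x ≠ 0 ∧ ‖x‖⁻¹ • x ∈ K}
  have hscale : ∀ (s : ℝ) (x : EuclideanSpace ℝ (Fin 3)), 0 < s → x ∈ C → s • x ∈ C := by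
    intro s x hs hx
    refine ⟨smul_ne_zero hs.ne' hx.1, ?_⟩
    have : ‖s • x‖⁻¹ • s • x = ‖x‖⁻¹ • x := by
      rw [norm_smul, Real.norm_of_nonneg hs.le, smul_smul]
      congr 1
      have := norm_ne_zero_iff.2 hx.1
      field_simp
    rw [this]
    exact hx.2
  have hC : Convex ℝ C := by
    rw [convex_iff_forall_pos]
    intro x hx y hy a b ha hb hab
    have hx0 : 0 < ‖x‖ := norm_pos_iff.2 hx.1
    have hy0 : 0 < ‖y‖ := norm_pos_iff.2 hy.1
    have hs : 0 < a * ‖x‖ + b * ‖y‖ := by positivity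
    have ht : a * ‖x‖ / (a * ‖x‖ + b * ‖y‖) < 1 := by
      rw [div_lt_one hs]
      have : 0 < b * ‖y‖ := by positivity
      linarith
    have key := hconv _ hx.2 _ hy.2 (a * ‖x‖ / (a * ‖x‖ + b * ‖y‖)) (by positivity) ht
    have := hscale _ _ hs (show _ ∈ C from key)
    convert this using 1
    rw [smul_add, smul_smul, smul_smul, smul_smul, smul_smul]
    congr 2
    · field_simp
    · field_simp
      ring
  have hKC : K ⊆ C := by
    intro x hx
    have hx1 : ‖x‖ = 1 := hsub hx
    refine ⟨fun h => by simp [h] at hx1, by simpa [hx1] using hx⟩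
  have hKcpt : IsCompact K :=
    (isCompact_sphere (0 : EuclideanSpace ℝ (Fin 3)) 1).of_isClosed_subset hcl
      (fun x hx => by simpa using hsub hx)
  have hdisj : Disjoint (convexHull ℝ K) ((ℝ ∙ w₀ : Submodule ℝ _) : Set (EuclideanSpace ℝ (Fin 3))) := by
    rw [Set.disjoint_left]
    intro x hx hxw
    have hxC := convexHull_min hKC hC hx
    obtain ⟨r, rfl⟩ := Submodule.mem_span_singleton.1 hxw
    obtain ⟨hr0, hrK⟩ := hxC
    have hr : r ≠ 0 := fun h => hr0 (by simp [h])
    rw [norm_smul, hw₀, mul_one, smul_smul, Real.norm_eq_abs] at hrK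
    rcases lt_or_gt_of_ne hr with h | h
    · rw [abs_of_neg h, inv_neg, neg_mul, inv_mul_cancel₀ hr] at hrK
      exact h2 (by simpa using hrK)
    · rw [abs_of_pos h, inv_mul_cancel₀ hr] at hrK
      exact h1 (by simpa using hrK)
  obtain ⟨f, u, v, hf1, huv, hf2⟩ := geometric_hahn_banach_compact_closed
    (convex_convexHull ℝ K) (compact_hull K hKcpt) (Submodule.convex _)
    (Submodule.closed_of_finiteDimensional _) hdisj
  have hv : v < 0 := by simpa using hf2 0 (Submodule.zero_mem _)
  have hfw : f w₀ = 0 := by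
    by_contra hne
    have := hf2 ((v / f w₀) • w₀) (Submodule.smul_mem _ _ (Submodule.mem_span_singleton_self _))
    rw [map_smul, smul_eq_mul, div_mul_cancel₀ _ hne] at this
    exact lt_irrefl _ this
  refine ⟨⟨(InnerProductSpace.toDual ℝ _).symm f, ?_⟩, ?_⟩
  · rw [Submodule.mem_orthogonal_singleton_iff_inner_left]
    rw [InnerProductSpace.toDual_symm_apply, hfw]
  · intro w hw
    have := hf1 w (subset_convexHull ℝ K hw)
    simp only [InnerProductSpace.toDual_symm_apply]
    linarith



/-- Multivalued Borsuk–Ulam: an odd, upper semicontinuous map from the unit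
sphere of ℝ³ to its nonempty closed spherically convex subsets is onto. -/
theorem stmt_13 (ψ : EuclideanSpace ℝ (Fin 3) → Set (EuclideanSpace ℝ (Fin 3)))
    (hsub : ∀ v : EuclideanSpace ℝ (Fin 3), ‖v‖ = 1 → ψ v ⊆ {w | ‖w‖ = 1})
    (hne : ∀ v : EuclideanSpace ℝ (Fin 3), ‖v‖ = 1 → (ψ v).Nonempty)
    (hcl : ∀ v : EuclideanSpace ℝ (Fin 3), ‖v‖ = 1 → IsClosed (ψ v))
    (hconv : ∀ v : EuclideanSpace ℝ (Fin 3), ‖v‖ = 1 →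
      ∀ w ∈ ψ v, ∀ w' ∈ ψ v, ∀ t : ℝ, 0 < t → t < 1 →
        t • w + (1 - t) • w' ≠ 0 ∧
        ‖t • w + (1 - t) • w'‖⁻¹ • (t • w + (1 - t) • w') ∈ ψ v)
    (hodd : ∀ v : EuclideanSpace ℝ (Fin 3), ‖v‖ = 1 → ψ (-v) = -ψ v)
    (husc : IsClosed {p : EuclideanSpace ℝ (Fin 3) × EuclideanSpace ℝ (Fin 3) |
      ‖p.1‖ = 1 ∧ p.2 ∈ ψ p.1}) :
    ∀ w : EuclideanSpace ℝ (Fin 3), ‖w‖ = 1 →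
      ∃ v : EuclideanSpace ℝ (Fin 3), ‖v‖ = 1 ∧ w ∈ ψ v := by
  intro w₀ hw₀
  by_contra hno
  push Not at hno
  have hno' : ∀ v : EuclideanSpace ℝ (Fin 3), ‖v‖ = 1 → -w₀ ∉ ψ v := by
    intro v hv h
    refine hno (-v) (by simpa using hv) ?_
    rw [hodd v hv]
    simpa using h
  let X := Metric.sphere (0 : EuclideanSpace ℝ (Fin 3)) 1
  have hX : ∀ x : X, ‖(x : EuclideanSpace ℝ (Fin 3))‖ = 1 := fun x => by simpa using x.2
  let t : X → Set (ℝ ∙ w₀)ᗮ := fun x =>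
    {c | ∀ w ∈ ψ x, inner ℝ (c : EuclideanSpace ℝ (Fin 3)) w < 0}
  have ht : ∀ x, Convex ℝ (t x) := by
    intro x
    rw [convex_iff_forall_pos]
    intro c hc d hd a b ha hb hab w hw
    have h1 := mul_neg_of_pos_of_neg ha (hc w hw)
    have h2 := mul_neg_of_pos_of_neg hb (hd w hw)
    simp only [Submodule.coe_add, Submodule.coe_smul, inner_add_left, real_inner_smul_left]
    linarith
  have H : ∀ x : X, ∃ c : (ℝ ∙ w₀)ᗮ, ∀ᶠ y in nhds x, c ∈ t y := by
    intro x
    obtain ⟨c, hc⟩ := separate (ψ x) w₀ hw₀ (hsub x (hX x)) (hcl x (hX x)) (hconv x (hX x))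
      (hno x (hX x)) (hno' x (hX x))
    refine ⟨c, ?_⟩
    let B : Set (EuclideanSpace ℝ (Fin 3) × EuclideanSpace ℝ (Fin 3)) :=
      {p | ‖p.1‖ = 1 ∧ p.2 ∈ ψ p.1} ∩ {p | 0 ≤ inner ℝ (c : EuclideanSpace ℝ (Fin 3)) p.2}
    have hBcl : IsClosed B :=
      husc.inter (isClosed_le continuous_const (continuous_const.inner continuous_snd))
    have hBcpt : IsCompact B := by
      refine ((isCompact_sphere (0 : EuclideanSpace ℝ (Fin 3)) 1).prod
        (isCompact_sphere (0 : EuclideanSpace ℝ (Fin 3)) 1)).of_isClosed_subset hBcl ?_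
      rintro ⟨a, b⟩ ⟨⟨h1, h2⟩, -⟩
      exact ⟨by simpa using h1, by simpa using hsub a h1 h2⟩
    have hopen : IsOpen ((Prod.fst '' B)ᶜ) := (hBcpt.image continuous_fst).isClosed.isOpen_compl
    have hmem : (x : EuclideanSpace ℝ (Fin 3)) ∈ (Prod.fst '' B)ᶜ := by
      rintro ⟨⟨a, b⟩, ⟨⟨-, h2⟩, h3⟩, h4⟩
      simp only at h4 h2
      rw [h4] at h2
      exact absurd (hc b h2) (not_lt.2 h3)
    filter_upwards [continuous_subtype_val.continuousAt.preimage_mem_nhds (hopen.mem_nhds hmem)]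
      with y hy w hw
    by_contra hcon
    exact hy ⟨(y, w), ⟨⟨hX y, hw⟩, not_lt.1 hcon⟩, rfl⟩
  obtain ⟨g, hg⟩ := exists_continuous_forall_mem_convex_of_local_const ht H
  have : Fact (Module.finrank ℝ (EuclideanSpace ℝ (Fin 3)) = 2 + 1) := ⟨by simp⟩
  have hw0 : w₀ ≠ 0 := fun h => by simp [h] at hw₀
  have hfr : Module.finrank ℝ (ℝ ∙ w₀)ᗮ = Module.finrank ℝ ℂ := by
    rw [Submodule.finrank_orthogonal_span_singleton (n := 2) hw0, Complex.finrank_real_complex]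
  let e : (ℝ ∙ w₀)ᗮ ≃L[ℝ] ℂ := ContinuousLinearEquiv.ofFinrankEq hfr
  let G : X → ℂ := fun x => e (g x - g (-x))
  have hGc : Continuous G :=
    e.continuous.comp (g.continuous.sub (g.continuous.comp continuous_neg))
  have hGodd : ∀ x, G (-x) = - G x := by
    intro x
    simp only [G, neg_neg]
    rw [← map_neg, neg_sub]
  have hGne : ∀ x, G x ≠ 0 := by
    intro x hx
    have h0 : g x - g (-x) = 0 := e.map_eq_zero_iff.1 hx
    obtain ⟨w, hw⟩ := hne x (hX x)
    have h1 := hg x w hw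
    have h2 := hg (-x) (-w) (by
      change -w ∈ ψ (-(x : EuclideanSpace ℝ (Fin 3)))
      rw [hodd x (hX x)]
      simpa using hw)
    rw [inner_neg_right, ← sub_eq_zero.1 h0] at h2
    linarith
  classical
  let G' : EuclideanSpace ℝ (Fin 3) → ℂ := fun v =>
    if h : ‖v‖ = 1 then G ⟨v, by simpa [X] using h⟩ else 0
  have hG' : ∀ x : X, G' x = G x := fun x => by simp [G', hX x]
  refine no_odd_map G' ?_ ?_ ?_
  · have hset : {v : EuclideanSpace ℝ (Fin 3) | ‖v‖ = 1} = X := by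
      ext v; simp [X]
    rw [hset, continuousOn_iff_continuous_domRestrict]
    exact hGc.congr fun x => (hG' x).symm
  · intro v hv
    have := hGodd ⟨v, by simpa [X] using hv⟩
    rw [← hG', ← hG'] at this
    exact this
  · intro v hv
    have := hGne ⟨v, by simpa [X] using hv⟩
    rw [← hG'] at this
    exact this
end

section
/- Let B ⊆ ℝ³ be a centrally symmetric convex body such that every closed convex subset of B is parkable in B. Let H ⊆ ℝ³ be a two-dimensional linear subspace and let L be a one-dimensional linear subspace, spanned by a unit vector u, such that every nonempty section (H + x) ∩ B has a center of symmetry lying on L. Then the midpoint of every nonempty chord of B in direction u lies on H; that is, for every y ∈ ℝ³, if the set S = {t ∈ ℝ : y + t•u ∈ B} is nonempty, then y + ((sup S + inf S)/2)•u ∈ H. -/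
/-- If for a centrally symmetric parkable convex body `B ⊆ ℝ³` the centers of
symmetry of all nonempty sections parallel to the plane `H` lie on the line
spanned by the unit vector `u`, then the midpoint of every nonempty chord of
`B` in direction `u` lies on `H`. -/
theorem stmt_14 (B : Set (EuclideanSpace ℝ (Fin 3)))
    (hBcomp : IsCompact B) (hBconv : Convex ℝ B)
    (hBint : (interior B).Nonempty) (hB0 : (0 : EuclideanSpace ℝ (Fin 3)) ∈ B)
    (hBsym : B = -B)
    (hpark : ∀ C : Set (EuclideanSpace ℝ (Fin 3)),
      C ⊆ B → C.Nonempty → IsClosed C → Convex ℝ C →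
      ∃ v : EuclideanSpace ℝ (Fin 3),
        (0 : EuclideanSpace ℝ (Fin 3)) ∈ (fun x => x + v) '' C ∧
        (fun x => x + v) '' C ⊆ B)
    (H : Submodule ℝ (EuclideanSpace ℝ (Fin 3))) (hH : Module.finrank ℝ H = 2)
    (u : EuclideanSpace ℝ (Fin 3)) (hu : ‖u‖ = 1)
    (hL : ∀ x : EuclideanSpace ℝ (Fin 3),
      (((fun h => h + x) '' (H : Set (EuclideanSpace ℝ (Fin 3)))) ∩ B).Nonempty →
      ∃ p ∈ Submodule.span ℝ {u},
        ((fun h => h + x) '' (H : Set (EuclideanSpace ℝ (Fin 3)))) ∩ B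
          = (fun y => (2 : ℝ) • p - y) ''
              (((fun h => h + x) '' (H : Set (EuclideanSpace ℝ (Fin 3)))) ∩ B)) :
    ∀ y : EuclideanSpace ℝ (Fin 3), {t : ℝ | y + t • u ∈ B}.Nonempty →
      y + ((sSup {t : ℝ | y + t • u ∈ B} + sInf {t : ℝ | y + t • u ∈ B}) / 2) • u ∈ H := by
  have huH : u ∉ H := by
    intro huH
    have hne : H ≠ ⊤ := by
      intro h
      rw [h, finrank_top, finrank_euclideanSpace_fin] at hH
      omega
    apply hne
    apply Submodule.eq_top_of_nonempty_interior'
    refine hBint.mono (interior_mono ?_)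
    intro x hx
    have hxs : x ∈ ((fun h => h + x) '' (H : Set (EuclideanSpace ℝ (Fin 3)))) ∩ B :=
      ⟨⟨0, H.zero_mem, by simp⟩, hx⟩
    obtain ⟨p, hp, hpe⟩ := hL x ⟨x, hxs⟩
    obtain ⟨s, rfl⟩ := Submodule.mem_span_singleton.1 hp
    have h1 : (2 : ℝ) • (s • u) - x ∈
        ((fun h => h + x) '' (H : Set (EuclideanSpace ℝ (Fin 3)))) ∩ B := by
      rw [hpe]
      exact ⟨x, hxs, rfl⟩
    obtain ⟨⟨k, hk, hkx⟩, -⟩ := h1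
    have hkx' : k + x = (2 : ℝ) • (s • u) - x := hkx
    have h2 : x = s • u - (1 / 2 : ℝ) • k := by
      have h3 : k = (2 : ℝ) • (s • u) - x - x := by rw [← hkx']; abel
      rw [h3]
      module
    rw [h2]
    exact H.sub_mem (H.smul_mem _ huH) (H.smul_mem _ hk)
  have hkey : ∀ k ∈ H, ∀ h : ℝ, k + h • u ∈ B → k + (-h) • u ∈ B := by
    intro k hk h hkB
    have hxs : k + h • u ∈
        ((fun z => z + h • u) '' (H : Set (EuclideanSpace ℝ (Fin 3)))) ∩ B :=
      ⟨⟨k, hk, rfl⟩, hkB⟩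
    obtain ⟨p, hp, hpe⟩ := hL (h • u) ⟨_, hxs⟩
    obtain ⟨s, rfl⟩ := Submodule.mem_span_singleton.1 hp
    have h1 : (2 : ℝ) • (s • u) - (k + h • u) ∈
        ((fun z => z + h • u) '' (H : Set (EuclideanSpace ℝ (Fin 3)))) ∩ B := by
      rw [hpe]
      exact ⟨_, hxs, rfl⟩
    obtain ⟨⟨k', hk', hkx⟩, hB⟩ := h1
    have hkx' : k' + h • u = (2 : ℝ) • (s • u) - (k + h • u) := hkx
    have hs : s = h := by
      by_contra hne
      apply huH
      have h3 : (2 * (s - h)) • u = k' + k := by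
        have h4 : k' = (2 : ℝ) • (s • u) - (k + h • u) - h • u := by rw [← hkx']; abel
        rw [h4]
        module
      have h5 : (2 * (s - h)) • u ∈ H := h3 ▸ H.add_mem hk' hk
      have h6 : 2 * (s - h) ≠ 0 := mul_ne_zero two_ne_zero (sub_ne_zero.2 hne)
      exact (H.smul_mem_iff h6).1 h5
    subst hs
    rw [hBsym, Set.mem_neg]
    convert hB using 1
    module
  have htop : H ⊔ Submodule.span ℝ {u} = ⊤ := by
    apply Submodule.eq_top_of_finrank_eq
    have hlt : H < H ⊔ Submodule.span ℝ {u} := by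
      refine lt_of_le_of_ne le_sup_left ?_
      intro h
      apply huH
      rw [h]
      exact Submodule.mem_sup_right (Submodule.mem_span_singleton_self u)
    have h1 := Submodule.finrank_lt_finrank_of_lt hlt
    have h2 := Submodule.finrank_le (H ⊔ Submodule.span ℝ {u})
    rw [finrank_euclideanSpace_fin] at h2 ⊢
    omega
  intro y hne
  have hy : y ∈ H ⊔ Submodule.span ℝ {u} := htop ▸ Submodule.mem_top
  obtain ⟨k, hk, w, hw, rfl⟩ := Submodule.mem_sup.1 hy
  obtain ⟨s, rfl⟩ := Submodule.mem_span_singleton.1 hw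
  set S : Set ℝ := {t : ℝ | k + s • u + t • u ∈ B} with hS
  have hsymS : ∀ t ∈ S, -2 * s - t ∈ S := by
    intro t ht
    have h1 : k + (s + t) • u ∈ B := by
      have h0 : k + s • u + t • u ∈ B := ht
      convert h0 using 1
      module
    have h2 := hkey k hk _ h1
    change k + s • u + (-2 * s - t) • u ∈ B
    convert h2 using 1
    module
  have hbdd : BddAbove S := by
    obtain ⟨R, hR⟩ := hBcomp.isBounded.exists_norm_le
    refine ⟨R + ‖k + s • u‖, ?_⟩
    intro t ht
    have h1 := hR _ ht
    have h2 : ‖t • u‖ ≤ ‖k + s • u + t • u‖ + ‖k + s • u‖ := by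
      have h3 := norm_sub_le (k + s • u + t • u) (k + s • u)
      rwa [add_sub_cancel_left] at h3
    rw [norm_smul, hu, mul_one, Real.norm_eq_abs] at h2
    linarith [le_abs_self t]
  have hinf : sInf S = -2 * s - sSup S := by
    apply IsGLB.csInf_eq _ hne
    constructor
    · intro t ht
      linarith [le_csSup hbdd (hsymS t ht)]
    · intro b hb
      have : sSup S ≤ -2 * s - b := csSup_le hne fun t ht => by
        linarith [hb (hsymS t ht)]
      linarith
  have hfin : k + s • u + ((sSup S + sInf S) / 2) • u = k := by
    rw [hinf]
    module
  rw [hfin]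
  exact hk
end
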